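/- arXiv:2508.02615 — 3 statements merged into one kernel-verified Lean document; each statement's English description precedes it below -/
import Mathlib

section
/- Let (E,d_E) be a compact metric space, let p ≥ 1 and let n ∈ ℕ. For m ∈ ℕ, let h(m) = inf{ε > 0 : N(E,ε) ≤ m}, where N(E,ε) is the smallest cardinality of a set S ⊂ E such that every y ∈ E has distance at most ε from some point of S. Then (1/4) · max_{0 ≤ k ≤ ⌊log₂ n⌋} (2^k/n)^{1/(2p)} · h(2^k) ≤ sup_{μ ∈ 𝒫_p(E)} (𝔼[W_p(μ_n,μ)^p])^{1/p} ≤ 40p · ∑_{k=0}^{⌊log₂ n⌋} (2^k/n)^{1/(2p)} · h(2^k), where μ_n denotes the empirical measure of μ with sample size n. -/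
open MeasureTheory ENNReal Filter

noncomputable section

/-- The `p`-Wasserstein distance between two measures on a metric space, as an
extended nonnegative real: the infimum over all couplings `γ` (measures on `E × E`
with the prescribed marginals) of `(∫ d(x,y)^p dγ)^(1/p)`. -/
def Wp {E : Type*} [MetricSpace E] [MeasurableSpace E] (p : ℝ) (μ ν : Measure E) : ℝ≥0∞ :=
  ⨅ γ ∈ {γ : Measure (E × E) | γ.map Prod.fst = μ ∧ γ.map Prod.snd = ν},
    (∫⁻ z, edist z.1 z.2 ^ p ∂γ) ^ (1 / p)

/-- The (uniform) discrete measure `(1/n) ∑ δ_{X i}`. -/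
def empiricalMeasure {E : Type*} [MeasurableSpace E] (n : ℕ) (X : Fin n → E) : Measure E :=
  (n : ℝ≥0∞)⁻¹ • ∑ i, Measure.dirac (X i)

/-- The law of `n` independent samples of `μ`. -/
def sampleMeasure {E : Type*} [MeasurableSpace E] (μ : Measure E) (n : ℕ) :
    Measure (Fin n → E) :=
  Measure.pi fun _ => μ

/-- `𝔼[W_p(μ_n, μ)]`, where `μ_n` is the empirical measure of `μ` with sample size `n`. -/
def expWp {E : Type*} [MetricSpace E] [MeasurableSpace E] (p : ℝ) (μ : Measure E) (n : ℕ) :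
    ℝ≥0∞ :=
  ∫⁻ X, Wp p (empiricalMeasure n X) μ ∂(sampleMeasure μ n)

/-- `(𝔼[W_p(μ_n, μ)^p])^{1/p}`, where `μ_n` is the empirical measure of `μ` with
sample size `n`. -/
def expWpPow {E : Type*} [MetricSpace E] [MeasurableSpace E] (p : ℝ) (μ : Measure E) (n : ℕ) :
    ℝ≥0∞ :=
  (∫⁻ X, (Wp p (empiricalMeasure n X) μ) ^ p ∂(sampleMeasure μ n)) ^ (1 / p)

/-- The optimal uniform quantization error
`b_{n,p}(μ) = inf_{x₁,…,x_n} W_p(μ, (1/n) ∑ δ_{x_i})`. -/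
def unifQuantErr {E : Type*} [MetricSpace E] [MeasurableSpace E] (p : ℝ) (n : ℕ)
    (μ : Measure E) : ℝ≥0∞ :=
  ⨅ x : Fin n → E, Wp p μ (empiricalMeasure n x)

/-- The optimal quantization error `e_{n,p}(μ)`: the infimum of `W_p(μ, ν)` over all
probability measures `ν` supported on at most `n` points. -/
def quantErr {E : Type*} [MetricSpace E] [MeasurableSpace E] (p : ℝ) (n : ℕ)
    (μ : Measure E) : ℝ≥0∞ :=
  ⨅ ν ∈ {ν : Measure E | IsProbabilityMeasure ν ∧
      ∃ S : Finset E, S.card ≤ n ∧ ν (↑S : Set E)ᶜ = 0}, Wp p μ ν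

/-- `μ` has a finite `p`-th moment: `∫ d(x, x₀)^p dμ(x) < ∞` for some `x₀`. -/
def HasFiniteMoment {E : Type*} [MetricSpace E] [MeasurableSpace E] (p : ℝ)
    (μ : Measure E) : Prop :=
  ∃ x₀ : E, ∫⁻ x, edist x x₀ ^ p ∂μ ≠ ∞

end

/-- `h(m) = inf {ε > 0 : N(E, ε) ≤ m}`, where `N(E, ε)` is the `ε`-covering number of
`E`, i.e. the smallest cardinality of a set `S ⊆ E` such that every `y ∈ E` has
distance at most `ε` from some point of `S`. (Stated directly: the infimum of all
`ε > 0` admitting a covering set of cardinality at most `m`.) -/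
noncomputable def covRadius (E : Type*) [MetricSpace E] (m : ℕ) : ℝ :=
  sInf {ε : ℝ | 0 < ε ∧ ∃ S : Finset E, S.card ≤ m ∧ ∀ y : E, ∃ x ∈ S, dist y x ≤ ε}

section Moments
open ProbabilityTheory

/-- Second and fourth moments of a sum of bounded centred independent variables. -/
theorem moments_aux {Ω ι : Type*} [MeasurableSpace Ω] (P : Measure Ω) [IsProbabilityMeasure P]
    (Y : ι → Ω → ℝ) (hY : iIndepFun Y P) (hm : ∀ i, Measurable (Y i))
    (hb : ∀ i ω, |Y i ω| ≤ 1) (v w : ℝ) (h1 : ∀ i, ∫ ω, Y i ω ∂P = 0)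
    (h2 : ∀ i, ∫ ω, Y i ω ^ 2 ∂P = v) (h4 : ∀ i, ∫ ω, Y i ω ^ 4 ∂P = w) (s : Finset ι) :
    (∫ ω, (∑ i ∈ s, Y i ω) ∂P = 0) ∧ (∫ ω, (∑ i ∈ s, Y i ω) ^ 2 ∂P = s.card * v) ∧
    (∫ ω, (∑ i ∈ s, Y i ω) ^ 4 ∂P = s.card * w + 3 * s.card * (s.card - 1) * v ^ 2) := by
  classical
  induction s using Finset.induction_on with
  | empty => simp
  | insert a s ha ih =>
    obtain ⟨e1, e2, e4⟩ := ih
    have hSm : Measurable (fun ω => ∑ i ∈ s, Y i ω) := Finset.measurable_sum _ fun i _ => hm i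
    have hSb : ∀ ω, |∑ i ∈ s, Y i ω| ≤ s.card := fun ω =>
      (Finset.abs_sum_le_sum_abs _ _).trans (by
        simpa using Finset.sum_le_sum (fun i (_ : i ∈ s) => hb i ω))
    have hind : IndepFun (fun ω => ∑ i ∈ s, Y i ω) (Y a) P := by
      have := hY.indepFun_finsetSum_of_notMem hm ha
      convert this using 1
      ext ω; simp
    set S : Ω → ℝ := fun ω => ∑ i ∈ s, Y i ω with hS
    have hint : ∀ j k : ℕ, Integrable (fun ω => S ω ^ j * Y a ω ^ k) P := by
      intro j k
      refine Integrable.of_bound (C := (s.card : ℝ) ^ j) ?_ (Eventually.of_forall fun ω => ?_)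
      · exact ((hSm.pow_const j).mul ((hm a).pow_const k)).aestronglyMeasurable
      · rw [Real.norm_eq_abs, abs_mul, abs_pow, abs_pow]
        have h1 := pow_le_pow_left₀ (abs_nonneg _) (hSb ω) j
        have h2 := pow_le_one₀ (n := k) (abs_nonneg _) (hb a ω)
        calc _ ≤ (s.card : ℝ) ^ j * 1 := by gcongr
          _ = _ := by ring
    have hprod : ∀ j k : ℕ, ∫ ω, S ω ^ j * Y a ω ^ k ∂P
        = (∫ ω, S ω ^ j ∂P) * ∫ ω, Y a ω ^ k ∂P := by
      intro j k
      have := hind.comp (φ := fun x => x ^ j) (ψ := fun x => x ^ k) (by fun_prop) (by fun_prop)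
      exact this.integral_fun_mul_eq_mul_integral
        (hSm.pow_const j).aestronglyMeasurable ((hm a).pow_const k).aestronglyMeasurable
    have hcard : ((insert a s).card : ℝ) = s.card + 1 := by
      rw [Finset.card_insert_of_notMem ha]; push_cast; ring
    have hsum : ∀ ω, ∑ i ∈ insert a s, Y i ω = S ω + Y a ω := fun ω => by
      rw [Finset.sum_insert ha, add_comm]
    simp only [hsum, hcard]
    have i10 := hint 1 0
    have i01 := hint 0 1
    have i20 := hint 2 0
    have i11 := hint 1 1
    have i02 := hint 0 2
    have i40 := hint 4 0
    have i31 := hint 3 1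
    have i22 := hint 2 2
    have i13 := hint 1 3
    have i04 := hint 0 4
    have p11 := hprod 1 1
    have p31 := hprod 3 1
    have p22 := hprod 2 2
    have p13 := hprod 1 3
    simp only [pow_zero, mul_one, one_mul, pow_one] at *
    refine ⟨?_, ?_, ?_⟩
    · rw [integral_add i10 i01, e1, h1]; simp
    · have : ∀ ω, (S ω + Y a ω) ^ 2 = S ω ^ 2 + 2 * (S ω * Y a ω) + Y a ω ^ 2 := fun ω => by ring
      simp only [this]
      have k1 : Integrable (fun ω => S ω ^ 2 + 2 * (S ω * Y a ω)) P := i20.add (i11.const_mul 2)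
      rw [integral_add k1 i02, integral_add i20 (i11.const_mul 2),
        integral_const_mul, p11, e1, e2, h2]
      ring
    · have : ∀ ω, (S ω + Y a ω) ^ 4 = S ω ^ 4 + 4 * (S ω ^ 3 * Y a ω)
          + 6 * (S ω ^ 2 * Y a ω ^ 2) + 4 * (S ω * Y a ω ^ 3) + Y a ω ^ 4 := fun ω => by ring
      simp only [this]
      have j1 := i31.const_mul 4
      have j2 := i22.const_mul 6
      have j3 := i13.const_mul 4
      have k1 : Integrable (fun ω => S ω ^ 4 + 4 * (S ω ^ 3 * Y a ω)) P := i40.add j1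
      have k2 : Integrable (fun ω => S ω ^ 4 + 4 * (S ω ^ 3 * Y a ω)
          + 6 * (S ω ^ 2 * Y a ω ^ 2)) P := k1.add j2
      have k3 : Integrable (fun ω => S ω ^ 4 + 4 * (S ω ^ 3 * Y a ω)
          + 6 * (S ω ^ 2 * Y a ω ^ 2) + 4 * (S ω * Y a ω ^ 3)) P := k2.add j3
      rw [integral_add k3 i04, integral_add k2 j3,
        integral_add k1 j2, integral_add i40 j1, integral_const_mul, integral_const_mul,
        integral_const_mul, p31, p22, p13, h1, e1, e2, e4, h2, h4]
      ring

/-- centred count -/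
noncomputable def cnt {E : Type*} (A : Set E) (q : ℝ) {n : ℕ} (X : Fin n → E) : ℝ :=
  ∑ i, (A.indicator (fun _ => (1 : ℝ)) (X i) - q)

theorem measurable_cnt {E : Type*} [MeasurableSpace E] {A : Set E} (hA : MeasurableSet A) (q : ℝ)
    (n : ℕ) : Measurable (fun X : Fin n → E => cnt A q X) := by
  unfold cnt
  refine Finset.measurable_sum _ fun i _ => ?_
  exact ((measurable_const.indicator hA).comp (measurable_pi_apply i)).sub_const q

theorem abs_cnt_le {E : Type*} (A : Set E) {q : ℝ} (h0 : 0 ≤ q) (h1 : q ≤ 1) {n : ℕ}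
    (X : Fin n → E) : |cnt A q X| ≤ n := by
  unfold cnt
  refine (Finset.abs_sum_le_sum_abs _ _).trans ?_
  have : ∀ i ∈ Finset.univ, |A.indicator (fun _ => (1 : ℝ)) (X i) - q| ≤ 1 := by
    intro i _
    by_cases h : X i ∈ A <;> simp only [h, Set.indicator_of_mem, Set.indicator_of_notMem,
      not_false_eq_true] <;> rw [abs_le] <;> constructor <;> linarith
  simpa using Finset.sum_le_sum this

theorem moments_cnt {E : Type*} [MeasurableSpace E] (μ : Measure E) [IsProbabilityMeasure μ]
    {A : Set E} (hA : MeasurableSet A) (n : ℕ) (q v : ℝ) (hq : q = μ.real A)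
    (hv : v = q * (1 - q)) :
    (∫ X, cnt A q X ∂(sampleMeasure μ n) = 0) ∧
    (∫ X, cnt A q X ^ 2 ∂(sampleMeasure μ n) = n * v) ∧
    (∫ X, cnt A q X ^ 4 ∂(sampleMeasure μ n) = n * (v * (1 - 3 * v)) + 3 * n * (n - 1) * v ^ 2) := by
  have hq0 : 0 ≤ q := hq ▸ measureReal_nonneg
  have hq1 : q ≤ 1 := hq ▸ measureReal_le_one
  unfold sampleMeasure
  set f : E → ℝ := fun x => A.indicator (fun _ => (1 : ℝ)) x - q with hf
  have hfm : Measurable f := (measurable_const.indicator hA).sub_const q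
  have hind : iIndepFun (fun (i : Fin n) (X : Fin n → E) => f (X i)) (Measure.pi fun _ => μ) :=
    iIndepFun_pi (fun _ => hfm.aemeasurable)
  have hev : ∀ (g : E → ℝ) (_ : Measurable g) (i : Fin n),
      ∫ X, g (X i) ∂(Measure.pi fun _ : Fin n => μ) = ∫ x, g x ∂μ := by
    intro g hg i
    have hmp := measurePreserving_eval (fun _ : Fin n => μ) i
    have h := integral_map (μ := Measure.pi fun _ : Fin n => μ) (φ := Function.eval i) (f := g)
      hmp.measurable.aemeasurable hg.aestronglyMeasurable
    rw [hmp.map_eq] at h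
    exact h.symm
  have hI : ∫ x, A.indicator (fun _ => (1 : ℝ)) x ∂μ = q := by
    rw [integral_indicator_const _ hA, hq]; simp
  have hIi : Integrable (A.indicator (fun _ => (1 : ℝ))) μ :=
    (integrable_const _).indicator hA
  have hlin : ∀ a b : ℝ, ∫ x, (a * A.indicator (fun _ => (1 : ℝ)) x + b) ∂μ = a * q + b := by
    intro a b
    rw [integral_add (hIi.const_mul a) (integrable_const b), integral_const_mul, hI]; simp
  have g1 : ∫ x, f x ∂μ = 0 := by
    have := hlin 1 (-q)
    rw [show 1 * q + -q = 0 by ring] at this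
    rw [← this]; congr 1; ext x; simp [hf]; ring
  have g2 : ∫ x, f x ^ 2 ∂μ = v := by
    have := hlin (1 - 2 * q) (q ^ 2)
    rw [show v = (1 - 2 * q) * q + q ^ 2 by rw [hv]; ring, ← this]
    congr 1; ext x
    by_cases h : x ∈ A <;> simp [hf, h] <;> ring
  have g4 : ∫ x, f x ^ 4 ∂μ = v * (1 - 3 * v) := by
    have := hlin ((1 - q) ^ 4 - q ^ 4) (q ^ 4)
    rw [show v * (1 - 3 * v) = ((1 - q) ^ 4 - q ^ 4) * q + q ^ 4 by rw [hv]; ring, ← this]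
    congr 1; ext x
    by_cases h : x ∈ A <;> simp [hf, h]
    ring
  have := moments_aux (Measure.pi fun _ : Fin n => μ) (fun i X => f (X i)) hind
    (fun i => hfm.comp (measurable_pi_apply i)) (fun i X => by
      by_cases h : X i ∈ A <;> simp only [hf, h, Set.indicator_of_mem, Set.indicator_of_notMem,
        not_false_eq_true] <;> rw [abs_le] <;> constructor <;> linarith) v (v * (1 - 3 * v))
    (fun i => (hev f hfm i).trans g1) (fun i => (hev _ (hfm.pow_const 2) i).trans g2)
    (fun i => (hev _ (hfm.pow_const 4) i).trans g4) Finset.univ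
  simpa [cnt, hf] using this

theorem empirical_apply {E : Type*} [MeasurableSpace E] {A : Set E} (hA : MeasurableSet A)
    {n : ℕ} (hn : 1 ≤ n) (X : Fin n → E) (q : ℝ) :
    empiricalMeasure n X A = ENNReal.ofReal (cnt A q X / n + q) := by
  have hn' : (n : ℝ) ≠ 0 := by positivity
  have e : cnt A q X / n + q = (n : ℝ)⁻¹ * ∑ i, A.indicator (fun _ => (1 : ℝ)) (X i) := by
    unfold cnt
    rw [Finset.sum_sub_distrib]
    simp only [Finset.sum_const, Finset.card_univ, Fintype.card_fin, nsmul_eq_mul]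
    field_simp; ring
  rw [e, ENNReal.ofReal_mul (by positivity), ENNReal.ofReal_inv_of_pos (by positivity),
    ENNReal.ofReal_natCast, ENNReal.ofReal_sum_of_nonneg]
  · unfold empiricalMeasure
    simp only [Measure.smul_apply, Measure.coe_finsetSum, Finset.sum_apply, smul_eq_mul]
    congr 1
    refine Finset.sum_congr rfl fun i _ => ?_
    rw [Measure.dirac_apply' _ hA]
    by_cases h : X i ∈ A <;> simp [h]
  · intro i _
    exact Set.indicator_nonneg (fun _ _ => zero_le_one) _

end Moments
section Expectations

instance sampleMeasure_prob {E : Type*} [MeasurableSpace E] (μ : Measure E)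
    [IsProbabilityMeasure μ] (n : ℕ) : IsProbabilityMeasure (sampleMeasure μ n) := by
  unfold sampleMeasure; infer_instance

theorem integrable_cnt_pow {E : Type*} [MeasurableSpace E] (μ : Measure E) [IsProbabilityMeasure μ]
    {A : Set E} (hA : MeasurableSet A) (n : ℕ) {q : ℝ} (h0 : 0 ≤ q) (h1 : q ≤ 1) (j : ℕ) :
    Integrable (fun X : Fin n → E => cnt A q X ^ j) (sampleMeasure μ n) := by
  refine Integrable.of_bound (C := (n : ℝ) ^ j) ?_ (Eventually.of_forall fun X => ?_)
  · exact ((measurable_cnt hA q n).pow_const j).aestronglyMeasurable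
  · rw [Real.norm_eq_abs, abs_pow]
    exact pow_le_pow_left₀ (abs_nonneg _) (abs_cnt_le A h0 h1 X) j

theorem emp_sub {E : Type*} [MeasurableSpace E] (μ : Measure E) [IsProbabilityMeasure μ]
    {A : Set E} (hA : MeasurableSet A) {n : ℕ} (hn : 1 ≤ n) (X : Fin n → E) :
    empiricalMeasure n X A - μ A = ENNReal.ofReal (cnt A (μ.real A) X / n) := by
  rw [empirical_apply hA hn X (μ.real A), ← ofReal_measureReal (μ := μ) (s := A),
    ← ENNReal.ofReal_sub _ measureReal_nonneg]
  congr 1; ring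

theorem lower_exp {E : Type*} [MeasurableSpace E] (μ : Measure E) [IsProbabilityMeasure μ]
    {A : Set E} (hA : MeasurableSet A) {n : ℕ} (hn : 1 ≤ n) (σ : ℝ) (hσ : 0 < σ)
    (hv : σ ^ 2 = n * (μ.real A * (1 - μ.real A)))
    (h6 : 1 - 6 * (μ.real A * (1 - μ.real A)) ≤ σ ^ 2) :
    ENNReal.ofReal (σ / 4 / n) ≤
      ∫⁻ X, (empiricalMeasure n X A - μ A) ∂(sampleMeasure μ n) := by
  have hn' : (0 : ℝ) < n := by exact_mod_cast hn
  simp only [emp_sub μ hA hn]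
  set q := μ.real A with hq
  have hq0 : 0 ≤ q := hq ▸ measureReal_nonneg
  have hq1 : q ≤ 1 := hq ▸ measureReal_le_one
  obtain ⟨e1, e2, e4⟩ := moments_cnt μ hA n q (q * (1 - q)) hq rfl
  set v := q * (1 - q) with hvd
  have i1 := integrable_cnt_pow μ hA n hq0 hq1 1
  have i2 := integrable_cnt_pow μ hA n hq0 hq1 2
  have i4 := integrable_cnt_pow μ hA n hq0 hq1 4
  simp only [pow_one] at i1
  have e : ∀ X : Fin n → E, ENNReal.ofReal (cnt A q X / n)
      = ENNReal.ofReal (max (cnt A q X) 0 / n) := by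
    intro X
    rcases le_total 0 (cnt A q X) with h | h
    · rw [max_eq_left h]
    · rw [max_eq_right h, ENNReal.ofReal_of_nonpos (div_nonpos_of_nonpos_of_nonneg h hn'.le)]; simp
  simp only [e]
  have imax : Integrable (fun X : Fin n → E => max (cnt A q X) 0 / n) (sampleMeasure μ n) :=
    (i1.pos_part).div_const _
  rw [← ofReal_integral_eq_lintegral_ofReal imax
    (Eventually.of_forall fun X => by positivity)]
  apply ENNReal.ofReal_le_ofReal
  rw [integral_div]
  gcongr
  have hle : ∀ X : Fin n → E, (1 / 2) * cnt A q X + (3 / 8 / σ) * cnt A q X ^ 2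
      - (1 / 32 / σ ^ 3) * cnt A q X ^ 4 ≤ max (cnt A q X) 0 := by
    intro X
    have key : ∀ t : ℝ, 0 ≤ t → (3 / 4 / σ) * t ^ 2 - (1 / 16 / σ ^ 3) * t ^ 4 ≤ t := by
      intro t ht
      have : t - ((3 / 4 / σ) * t ^ 2 - (1 / 16 / σ ^ 3) * t ^ 4)
        = t * ((t / σ - 2) ^ 2 * (t / σ + 4)) / 16 := by
        field_simp; ring
      have : 0 ≤ t * ((t / σ - 2) ^ 2 * (t / σ + 4)) / 16 := by positivity
      linarith
    rcases le_total 0 (cnt A q X) with h | h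
    · rw [max_eq_left h]
      have := key _ h
      have e1 : (3 / 8 / σ) * cnt A q X ^ 2 = (3 / 4 / σ) * cnt A q X ^ 2 / 2 := by ring
      have e2 : (1 / 32 / σ ^ 3) * cnt A q X ^ 4 = (1 / 16 / σ ^ 3) * cnt A q X ^ 4 / 2 := by ring
      rw [e1, e2]; linarith
    · rw [max_eq_right h]
      have := key (-cnt A q X) (by linarith)
      have e1 : (3 / 8 / σ) * cnt A q X ^ 2 = (3 / 4 / σ) * (-cnt A q X) ^ 2 / 2 := by ring
      have e2 : (1 / 32 / σ ^ 3) * cnt A q X ^ 4 = (1 / 16 / σ ^ 3) * (-cnt A q X) ^ 4 / 2 := by ring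
      rw [e1, e2]; linarith
  have k1 : Integrable (fun X : Fin n → E => (1 / 2) * cnt A q X + (3 / 8 / σ) * cnt A q X ^ 2)
    (sampleMeasure μ n) := (i1.const_mul _).add (i2.const_mul _)
  have k2 : Integrable (fun X : Fin n → E => (1 / 2) * cnt A q X + (3 / 8 / σ) * cnt A q X ^ 2
      - (1 / 32 / σ ^ 3) * cnt A q X ^ 4) (sampleMeasure μ n) := k1.sub (i4.const_mul _)
  refine le_trans ?_ (integral_mono k2 i1.pos_part hle)
  rw [integral_sub k1 (i4.const_mul _), integral_add (i1.const_mul _) (i2.const_mul _),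
    integral_const_mul, integral_const_mul, integral_const_mul, e1, e2, e4, ← hv]
  have h4 : n * (v * (1 - 3 * v)) + 3 * n * (n - 1) * v ^ 2 ≤ 4 * σ ^ 4 := by
    have : n * (v * (1 - 3 * v)) + 3 * n * (n - 1) * v ^ 2
      = 3 * (n * v) ^ 2 + (n * v) * (1 - 6 * v) := by ring
    rw [this, ← hv]
    have := mul_le_mul_of_nonneg_left h6 (sq_nonneg σ)
    nlinarith
  calc σ / 4 = 1 / 2 * 0 + 3 / 8 / σ * σ ^ 2 - 1 / 32 / σ ^ 3 * (4 * σ ^ 4) := by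
        field_simp; ring
    _ ≤ _ := by gcongr

theorem upper_exp {E ι : Type*} [MeasurableSpace E] (μ : Measure E) [IsProbabilityMeasure μ]
    (S : Finset ι) (A : ι → Set E) (hA : ∀ c, MeasurableSet (A c))
    (hd : Pairwise (Function.onFun Disjoint A)) {n : ℕ} (hn : 1 ≤ n) (N : ℕ) (hN : 1 ≤ N)
    (hS : S.card ≤ N) :
    ∫⁻ X, ∑ c ∈ S, (empiricalMeasure n X (A c) - μ (A c)) ∂(sampleMeasure μ n)
      ≤ ENNReal.ofReal (Real.sqrt (N / n)) := by
  have hn' : (0 : ℝ) < n := by exact_mod_cast hn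
  have hN' : (0 : ℝ) < N := by exact_mod_cast hN
  simp only [emp_sub μ (hA _) hn]
  rw [lintegral_finsetSum _ (fun c _ =>
    ((measurable_cnt (hA c) _ n).div_const _).ennreal_ofReal)]
  set l := Real.sqrt (N / n) with hl
  have hl0 : 0 < l := by positivity
  have hl2 : l ^ 2 = N / n := Real.sq_sqrt (by positivity)
  have hone : ∀ c, ∫⁻ X, ENNReal.ofReal (cnt (A c) (μ.real (A c)) X / n) ∂(sampleMeasure μ n)
      ≤ ENNReal.ofReal (l / 2 * μ.real (A c) + l / 2 / N) := by
    intro c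
    set q := μ.real (A c) with hq
    have hq0 : 0 ≤ q := hq ▸ measureReal_nonneg
    have hq1 : q ≤ 1 := hq ▸ measureReal_le_one
    obtain ⟨e1, e2, e4⟩ := moments_cnt μ (hA c) n q (q * (1 - q)) hq rfl
    have i2 := integrable_cnt_pow μ (hA c) n hq0 hq1 2
    have k : Integrable (fun X : Fin n → E => l / 2 / n * cnt (A c) q X ^ 2 + l / 2 / N)
      (sampleMeasure μ n) := (i2.const_mul _).add (integrable_const _)
    calc _ ≤ ∫⁻ X, ENNReal.ofReal (l / 2 / n * cnt (A c) q X ^ 2 + l / 2 / N)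
            ∂(sampleMeasure μ n) := by
          refine lintegral_mono fun X => ENNReal.ofReal_le_ofReal ?_
          set t := cnt (A c) q X
          have hNl : (N : ℝ) = l ^ 2 * n := by rw [hl2]; field_simp
          rw [hNl]
          have : l / 2 / n * t ^ 2 + l / 2 / (l ^ 2 * n) - t / n = (l * t - 1) ^ 2 / (2 * l * n) := by
            field_simp; ring
          have : 0 ≤ (l * t - 1) ^ 2 / (2 * l * n) := by positivity
          linarith
      _ = ENNReal.ofReal (l / 2 * (q * (1 - q)) + l / 2 / N) := by
          rw [← ofReal_integral_eq_lintegral_ofReal k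
            (Eventually.of_forall fun X => by positivity),
            integral_add (i2.const_mul _) (integrable_const _), integral_const_mul, e2]
          simp only [integral_const, probReal_univ, one_smul]
          congr 1; field_simp
      _ ≤ _ := by
          apply ENNReal.ofReal_le_ofReal
          gcongr
          nlinarith
  refine (Finset.sum_le_sum fun c _ => hone c).trans ?_
  rw [← ENNReal.ofReal_sum_of_nonneg (fun c _ => by positivity)]
  apply ENNReal.ofReal_le_ofReal
  rw [Finset.sum_add_distrib, ← Finset.mul_sum]
  have h1 : ∑ c ∈ S, μ.real (A c) ≤ 1 := by
    rw [← measureReal_biUnion_finset (fun i _ j _ h => hd h) (fun c _ => hA c)]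
    exact measureReal_le_one
  have h2 : ∑ c ∈ S, l / 2 / N ≤ l / 2 := by
    rw [Finset.sum_const, nsmul_eq_mul]
    have : (S.card : ℝ) ≤ N := by exact_mod_cast hS
    calc _ ≤ (N : ℝ) * (l / 2 / N) := by gcongr
      _ = _ := by field_simp
  have h3 := mul_le_mul_of_nonneg_left h1 (show 0 ≤ l / 2 by positivity)
  linarith

end Expectations
section Coupling

theorem one_level {E : Type*} [MeasurableSpace E] [MeasurableSingletonClass E]
    (α β : Measure E) [IsFiniteMeasure α] [IsFiniteMeasure β] (t : E → E) (ht : Measurable t)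
    (S : Finset E) (hS : ∀ x, t x ∈ S) :
    ∃ γ : Measure (E × E), γ.map Prod.fst ≤ α ∧ γ.map Prod.snd ≤ β ∧
      γ {z | t z.1 ≠ t z.2} = 0 ∧
      ∀ c ∈ S, min (α (t ⁻¹' {c})) (β (t ⁻¹' {c})) ≤ γ.map Prod.fst (t ⁻¹' {c}) := by
  classical
  have hA : ∀ c, MeasurableSet (t ⁻¹' {c}) := fun c => ht (measurableSet_singleton c)
  set m : E → ℝ≥0∞ := fun c => (max (α (t ⁻¹' {c})) (β (t ⁻¹' {c})))⁻¹ with hm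
  have hdecomp : ∀ (ρ : Measure E), ∑ c ∈ S, ρ.restrict (t ⁻¹' {c}) = ρ := by
    intro ρ
    ext B hB
    simp only [Measure.coe_finsetSum, Finset.sum_apply]
    simp only [Measure.restrict_apply hB]
    rw [← measure_biUnion_finset]
    · congr 1
      ext x
      simp only [Set.mem_iUnion, Set.mem_inter_iff, Set.mem_preimage, Set.mem_singleton_iff]
      constructor
      · rintro ⟨c, _, h, _⟩; exact h
      · intro h; exact ⟨t x, hS x, h, rfl⟩
    · intro c _ d _ hcd
      refine Set.disjoint_left.2 ?_
      rintro x ⟨_, h1⟩ ⟨_, h2⟩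
      simp only [Set.mem_preimage, Set.mem_singleton_iff] at h1 h2
      exact hcd (h1.symm.trans h2)
    · intro c _; exact hB.inter (hA c)
  have hle : ∀ a b : ℝ≥0∞, (max a b)⁻¹ * b ≤ 1 := by
    intro a b
    calc (max a b)⁻¹ * b ≤ (max a b)⁻¹ * max a b := by gcongr; exact le_max_right _ _
      _ ≤ 1 := ENNReal.inv_mul_le_one _
  have hf : (∑ c ∈ S, m c • (α.restrict (t ⁻¹' {c})).prod (β.restrict (t ⁻¹' {c}))).map Prod.fst
      = ∑ c ∈ S, (m c * β (t ⁻¹' {c})) • α.restrict (t ⁻¹' {c}) := by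
    rw [← Measure.mapₗ_apply_of_measurable measurable_fst, map_sum]
    refine Finset.sum_congr rfl fun c _ => ?_
    rw [Measure.mapₗ_apply_of_measurable measurable_fst, Measure.map_smul, Measure.map_fst_prod,
      smul_smul]
    simp
  have hs : (∑ c ∈ S, m c • (α.restrict (t ⁻¹' {c})).prod (β.restrict (t ⁻¹' {c}))).map Prod.snd
      = ∑ c ∈ S, (m c * α (t ⁻¹' {c})) • β.restrict (t ⁻¹' {c}) := by
    rw [← Measure.mapₗ_apply_of_measurable measurable_snd, map_sum]
    refine Finset.sum_congr rfl fun c _ => ?_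
    rw [Measure.mapₗ_apply_of_measurable measurable_snd, Measure.map_smul, Measure.map_snd_prod,
      smul_smul]
    simp
  refine ⟨∑ c ∈ S, m c • (α.restrict (t ⁻¹' {c})).prod (β.restrict (t ⁻¹' {c})), ?_, ?_, ?_, ?_⟩
  · rw [hf]
    conv_rhs => rw [← hdecomp α]
    refine Finset.sum_le_sum fun c _ => ?_
    calc _ ≤ (1 : ℝ≥0∞) • α.restrict (t ⁻¹' {c}) := by
          gcongr; exact hle _ _
      _ = _ := one_smul _ _
  · rw [hs]
    conv_rhs => rw [← hdecomp β]
    refine Finset.sum_le_sum fun c _ => ?_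
    calc _ ≤ (1 : ℝ≥0∞) • β.restrict (t ⁻¹' {c}) := by
          gcongr; rw [hm]; simp only; rw [max_comm]; exact hle _ _
      _ = _ := one_smul _ _
  · simp only [Measure.coe_finsetSum, Finset.sum_apply, Measure.smul_apply, smul_eq_mul]
    refine Finset.sum_eq_zero fun c _ => ?_
    rw [Measure.prod_restrict]
    rw [Measure.restrict_apply' ((hA c).prod (hA c))]
    have : {z : E × E | t z.1 ≠ t z.2} ∩ (t ⁻¹' {c}) ×ˢ (t ⁻¹' {c}) = ∅ := by
      ext ⟨x, y⟩
      simp only [Set.mem_inter_iff, Set.mem_ofPred_eq, Set.mem_prod, Set.mem_preimage,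
        Set.mem_singleton_iff, Set.mem_empty_iff_false, iff_false]
      rintro ⟨h, h1, h2⟩
      exact h (h1.trans h2.symm)
    rw [this]; simp
  · intro c hc
    rw [hf]
    simp only [Measure.coe_finsetSum, Finset.sum_apply, Measure.smul_apply, smul_eq_mul]
    refine le_trans ?_ (Finset.single_le_sum (f := fun d => m d * β (t ⁻¹' {d}) *
      (α.restrict (t ⁻¹' {d})) (t ⁻¹' {c})) (fun _ _ => by positivity) hc)
    simp only [Measure.restrict_apply_self, hm]
    set a := α (t ⁻¹' {c})
    set b := β (t ⁻¹' {c})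
    have ha : a ≠ ∞ := measure_ne_top _ _
    have hb : b ≠ ∞ := measure_ne_top _ _
    by_cases h0 : max a b = 0
    · have : a = 0 := by
        have := le_max_left a b; rw [h0] at this; simpa using this
      simp [this]
    · have ht : max a b ≠ ∞ := by simp [ha, hb]
      have : min a b * max a b = b * a := by rw [min_mul_max, mul_comm]
      rw [mul_assoc, ← this, mul_comm (min a b), ← mul_assoc, ENNReal.inv_mul_cancel h0 ht, one_mul]

theorem greedy {E : Type*} [MeasurableSpace E] [MeasurableSingletonClass E] (L : ℕ) :
    ∀ (α β : Measure E) [IsFiniteMeasure α] [IsFiniteMeasure β]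
    (_ : α Set.univ = β Set.univ) (t : ℕ → E → E) (_ : ∀ j, Measurable (t j))
    (S : ℕ → Finset E) (_ : ∀ j x, t j x ∈ S j)
    (_ : ∀ j x y, t j x = t j y → t (j + 1) x = t (j + 1) y),
    ∃ γ : Measure (E × E), γ.map Prod.fst = α ∧ γ.map Prod.snd = β ∧
      ∀ j < L, γ {z | t j z.1 ≠ t j z.2} ≤
        ∑ c ∈ S j, (α (t j ⁻¹' {c}) - β (t j ⁻¹' {c})) := by
  induction L with
  | zero =>
    intro α β _ _ hm t ht S hS hc
    by_cases h0 : α Set.univ = 0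
    · refine ⟨0, ?_, ?_, by simp⟩
      · rw [Measure.measure_univ_eq_zero.1 h0]; simp
      · rw [hm] at h0; rw [Measure.measure_univ_eq_zero.1 h0]; simp
    · refine ⟨(α Set.univ)⁻¹ • α.prod β, ?_, ?_, by simp⟩
      · rw [Measure.map_smul, Measure.map_fst_prod, smul_smul, ← hm,
          ENNReal.inv_mul_cancel h0 (measure_ne_top _ _), one_smul]
      · rw [Measure.map_smul, Measure.map_snd_prod, smul_smul,
          ENNReal.inv_mul_cancel h0 (measure_ne_top _ _), one_smul]
  | succ L ih =>
    intro α β _ _ hm t ht S hS hc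
    obtain ⟨γ0, hα, hβ, hz, hmin⟩ := one_level α β (t 0) (ht 0) (S 0) (hS 0)
    have hA : ∀ j c, MeasurableSet (t j ⁻¹' {c}) := fun j c => ht j (measurableSet_singleton c)
    have : IsFiniteMeasure (γ0.map Prod.fst) := isFiniteMeasure_of_le α hα
    have : IsFiniteMeasure (γ0.map Prod.snd) := isFiniteMeasure_of_le β hβ
    have hu1 : (γ0.map Prod.fst) Set.univ = γ0 Set.univ := by
      rw [Measure.map_apply measurable_fst MeasurableSet.univ]; simp
    have hu2 : (γ0.map Prod.snd) Set.univ = γ0 Set.univ := by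
      rw [Measure.map_apply measurable_snd MeasurableSet.univ]; simp
    have hz' : ∀ j, γ0 {z | t j z.1 ≠ t j z.2} = 0 := by
      intro j
      induction j with
      | zero => exact hz
      | succ j ihj =>
        refine measure_mono_null ?_ ihj
        intro z hz h
        exact hz (hc j _ _ h)
    have hcell : ∀ j c, (γ0.map Prod.fst) (t j ⁻¹' {c}) = (γ0.map Prod.snd) (t j ⁻¹' {c}) := by
      intro j c
      rw [Measure.map_apply measurable_fst (hA j c), Measure.map_apply measurable_snd (hA j c)]
      refine measure_congr ?_
      have : ∀ᵐ z ∂γ0, t j z.1 = t j z.2 := by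
        rw [ae_iff]; exact hz' j
      filter_upwards [this] with z hz
      apply propext
      change t j z.1 = c ↔ t j z.2 = c
      rw [hz]
    obtain ⟨γ1, k1, k2, k3⟩ := ih (α - γ0.map Prod.fst) (β - γ0.map Prod.snd)
      (by rw [Measure.sub_apply MeasurableSet.univ hα, Measure.sub_apply MeasurableSet.univ hβ,
        hm, hu1, hu2]) (fun j => t (j + 1)) (fun j => ht _) (fun j => S (j + 1))
      (fun j => hS _) (fun j => hc _)
    refine ⟨γ1 + γ0, ?_, ?_, ?_⟩
    · rw [Measure.map_add _ _ measurable_fst, k1, Measure.sub_add_cancel_of_le hα]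
    · rw [Measure.map_add _ _ measurable_snd, k2, Measure.sub_add_cancel_of_le hβ]
    · intro j hj
      rw [Measure.add_apply, hz', add_zero]
      cases j with
      | zero =>
        calc _ ≤ γ1 Set.univ := measure_mono (Set.subset_univ _)
          _ = (α - γ0.map Prod.fst) Set.univ := by
            rw [← k1, Measure.map_apply measurable_fst MeasurableSet.univ]; simp
          _ = (α - γ0.map Prod.fst) (⋃ c ∈ S 0, t 0 ⁻¹' {c}) := by
            congr 1; ext x; simp [hS 0 x]
          _ ≤ ∑ c ∈ S 0, (α - γ0.map Prod.fst) (t 0 ⁻¹' {c}) := measure_biUnion_finset_le _ _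
          _ ≤ _ := by
            refine Finset.sum_le_sum fun c hcS => ?_
            rw [Measure.sub_apply (hA 0 c) hα]
            refine (tsub_le_tsub_left (hmin c hcS) _).trans ?_
            rcases le_total (α (t 0 ⁻¹' {c})) (β (t 0 ⁻¹' {c})) with h | h
            · simp [min_eq_left h]
            · simp [min_eq_right h]
      | succ j =>
        refine (k3 j (by omega)).trans (Finset.sum_le_sum fun c _ => ?_)
        rw [Measure.sub_apply (hA _ c) hα, Measure.sub_apply (hA _ c) hβ, hcell]
        rw [tsub_le_iff_right]
        rw [tsub_le_iff_right]
        rw [add_assoc]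
        refine (le_tsub_add (a := β (t (j + 1) ⁻¹' {c}))).trans ?_
        exact add_le_add le_rfl le_tsub_add

end Coupling
section Upper

theorem mink {Ω ι : Type*} [MeasurableSpace Ω] (P : Measure Ω) {p : ℝ} (hp : 1 ≤ p)
    (s : Finset ι) (c : ι → ℝ≥0∞) (g : ι → Ω → ℝ≥0∞) (hg : ∀ i, Measurable (g i)) :
    (∫⁻ ω, (∑ i ∈ s, c i * g i ω ^ (1 / p)) ^ p ∂P) ^ (1 / p)
      ≤ ∑ i ∈ s, c i * (∫⁻ ω, g i ω ∂P) ^ (1 / p) := by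
  classical
  have hp0 : 0 < p := by linarith
  induction s using Finset.induction_on with
  | empty => simp [hp0]
  | insert a s ha ih =>
    simp only [Finset.sum_insert ha]
    have m1 : ∀ i, Measurable (fun ω => c i * g i ω ^ (1 / p)) := fun i =>
      ((hg i).pow_const _).const_mul _
    refine (ENNReal.lintegral_Lp_add_le (f := fun ω => c a * g a ω ^ (1 / p))
      (g := fun ω => ∑ i ∈ s, c i * g i ω ^ (1 / p)) (m1 a).aemeasurable
      (Finset.measurable_sum _ fun i _ => m1 i).aemeasurable hp).trans ?_
    refine add_le_add (le_of_eq ?_) ih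
    have : ∀ ω, (c a * g a ω ^ (1 / p)) ^ p = c a ^ p * g a ω := by
      intro ω
      rw [ENNReal.mul_rpow_of_nonneg _ _ hp0.le, ← ENNReal.rpow_mul, one_div_mul_cancel hp0.ne',
        ENNReal.rpow_one]
    simp only [this]
    rw [lintegral_const_mul _ (hg a), ENNReal.mul_rpow_of_nonneg _ _ (by positivity),
      ← ENNReal.rpow_mul, mul_one_div_cancel hp0.ne', ENNReal.rpow_one]

theorem mink' {Ω : Type*} [MeasurableSpace Ω] (P : Measure Ω) [IsProbabilityMeasure P]
    {p : ℝ} (hp : 1 ≤ p) (K : ℕ) (c0 : ℝ≥0∞) (c : ℕ → ℝ≥0∞) (g : ℕ → Ω → ℝ≥0∞)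
    (hg : ∀ i, Measurable (g i)) :
    (∫⁻ ω, (c0 + ∑ i ∈ Finset.range K, c i * g i ω ^ (1 / p)) ^ p ∂P) ^ (1 / p)
      ≤ c0 + ∑ i ∈ Finset.range K, c i * (∫⁻ ω, g i ω ∂P) ^ (1 / p) := by
  have := mink P hp (Finset.range (K + 1)) (fun i => Nat.casesOn i c0 c)
    (fun i => Nat.casesOn i (fun _ => 1) g) (by
      intro i; cases i with
      | zero => exact measurable_const
      | succ i => exact hg i)
  simp only [Finset.sum_range_succ'] at this
  simpa [add_comm] using this

theorem empirical_prob {E : Type*} [MeasurableSpace E] {n : ℕ} (hn : 1 ≤ n) (X : Fin n → E) :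
    IsProbabilityMeasure (empiricalMeasure n X) := by
  constructor
  unfold empiricalMeasure
  simp only [Measure.smul_apply, Measure.coe_finsetSum, Finset.sum_apply, measure_univ,
    Finset.sum_const, Finset.card_univ, Fintype.card_fin, smul_eq_mul, nsmul_eq_mul, mul_one]
  exact ENNReal.inv_mul_cancel (by positivity) (by simp)

theorem wp_le {E : Type*} [MetricSpace E] [CompactSpace E] [MeasurableSpace E] [BorelSpace E]
    {p : ℝ} (hp : 1 ≤ p) (α β : Measure E) [IsProbabilityMeasure α] [IsProbabilityMeasure β]
    (K : ℕ) (t : ℕ → E → E) (ht : ∀ j, Measurable (t j)) (S : ℕ → Finset E)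
    (hS : ∀ j x, t j x ∈ S j) (hc : ∀ j x y, t j x = t j y → t (j + 1) x = t (j + 1) y)
    (R : ℕ → ℝ≥0∞) (h0 : ∀ x, edist x (t 0 x) ≤ R 0)
    (hR : ∀ j < K, ∀ x, edist (t j x) (t (j + 1) x) ≤ R (j + 1))
    (hK : ∀ x y, t K x = t K y) :
    Wp p α β ≤ 2 * R 0 + ∑ j ∈ Finset.range K, 2 * R (j + 1) *
      (∑ c ∈ S j, (α (t j ⁻¹' {c}) - β (t j ⁻¹' {c}))) ^ (1 / p) := by
  classical
  have hp0 : 0 < p := by linarith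
  obtain ⟨γ, g1, g2, g3⟩ := greedy K α β (by simp) t ht S hS hc
  have : IsProbabilityMeasure γ := by
    constructor
    have : γ Set.univ = (γ.map Prod.fst) Set.univ := by
      rw [Measure.map_apply measurable_fst MeasurableSet.univ]; simp
    rw [this, g1]; simp
  have hB : ∀ j, MeasurableSet {z : E × E | t j z.1 ≠ t j z.2} := by
    intro j
    exact (measurableSet_eq_fun ((ht j).comp measurable_fst) ((ht j).comp measurable_snd)).compl
  have hpt : ∀ z : E × E, ∀ k ≤ K, edist z.1 z.2 ≤ (2 * R 0 + ∑ j ∈ Finset.range k, 2 * R (j + 1) *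
      ({z : E × E | t j z.1 ≠ t j z.2}.indicator (fun _ => (1 : ℝ≥0∞)) z) ^ (1 / p))
      + edist (t k z.1) (t k z.2) := by
    intro z k hk
    induction k with
    | zero =>
      simp only [Finset.range_zero, Finset.sum_empty, add_zero]
      calc _ ≤ edist z.1 (t 0 z.1) + edist (t 0 z.1) (t 0 z.2) + edist (t 0 z.2) z.2 :=
            edist_triangle4 _ _ _ _
        _ ≤ R 0 + edist (t 0 z.1) (t 0 z.2) + R 0 := by
            gcongr
            · exact h0 _
            · rw [edist_comm]; exact h0 _
        _ = _ := by ring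
    | succ k ih =>
      refine (ih (by omega)).trans ?_
      rw [Finset.sum_range_succ]
      by_cases h : t k z.1 = t k z.2
      · rw [h, edist_self, add_zero]
        refine le_trans ?_ le_self_add
        gcongr
        exact le_self_add
      · have hi : ({z : E × E | t k z.1 ≠ t k z.2}.indicator (fun _ => (1 : ℝ≥0∞)) z) = 1 :=
          Set.indicator_of_mem (by exact h) _
        rw [hi, ENNReal.one_rpow, mul_one, ← add_assoc, add_assoc _ (2 * R (k + 1))]
        gcongr
        calc _ ≤ edist (t k z.1) (t (k+1) z.1) + edist (t (k+1) z.1) (t (k+1) z.2)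
              + edist (t (k+1) z.2) (t k z.2) := edist_triangle4 _ _ _ _
          _ ≤ R (k+1) + edist (t (k+1) z.1) (t (k+1) z.2) + R (k+1) := by
            gcongr
            · exact hR k (by omega) _
            · rw [edist_comm]; exact hR k (by omega) _
          _ = _ := by ring
  unfold Wp
  refine (iInf₂_le γ ⟨g1, g2⟩).trans ?_
  calc (∫⁻ z, edist z.1 z.2 ^ p ∂γ) ^ (1 / p)
      ≤ (∫⁻ z, (2 * R 0 + ∑ j ∈ Finset.range K, 2 * R (j + 1) *
      ({z : E × E | t j z.1 ≠ t j z.2}.indicator (fun _ => (1 : ℝ≥0∞)) z) ^ (1 / p)) ^ p ∂γ)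
        ^ (1 / p) := by
        gcongr with z
        have := hpt z K le_rfl
        rw [hK z.1 z.2, edist_self, add_zero] at this
        exact this
    _ ≤ _ := mink' γ hp K _ (fun j => 2 * R (j + 1)) _
        (fun j => measurable_const.indicator (hB j))
    _ ≤ _ := by
        gcongr with j hj
        rw [lintegral_indicator_const (hB j), one_mul]
        exact g3 j (Finset.mem_range.1 hj)

theorem exp_le {E : Type*} [MetricSpace E] [CompactSpace E] [MeasurableSpace E] [BorelSpace E]
    {p : ℝ} (hp : 1 ≤ p) (μ : Measure E) [IsProbabilityMeasure μ] {n : ℕ} (hn : 1 ≤ n)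
    (K : ℕ) (t : ℕ → E → E) (ht : ∀ j, Measurable (t j)) (S : ℕ → Finset E)
    (hS : ∀ j x, t j x ∈ S j) (hc : ∀ j x y, t j x = t j y → t (j + 1) x = t (j + 1) y)
    (R : ℕ → ℝ≥0∞) (h0 : ∀ x, edist x (t 0 x) ≤ R 0)
    (hR : ∀ j < K, ∀ x, edist (t j x) (t (j + 1) x) ≤ R (j + 1))
    (hK : ∀ x y, t K x = t K y) (hcard : ∀ j, (S j).card ≤ 2 ^ (K - j)) :
    expWpPow p μ n ≤ 2 * R 0 + ∑ j ∈ Finset.range K, 2 * R (j + 1) *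
      (ENNReal.ofReal (Real.sqrt ((2 : ℝ) ^ (K - j) / n))) ^ (1 / p) := by
  have hp0 : 0 < p := by linarith
  have hA : ∀ j c, MeasurableSet (t j ⁻¹' {c}) := fun j c => ht j (measurableSet_singleton c)
  unfold expWpPow
  calc _ ≤ (∫⁻ X, (2 * R 0 + ∑ j ∈ Finset.range K, 2 * R (j + 1) *
      (∑ c ∈ S j, (empiricalMeasure n X (t j ⁻¹' {c}) - μ (t j ⁻¹' {c}))) ^ (1 / p)) ^ p
        ∂(sampleMeasure μ n)) ^ (1 / p) := by
        gcongr with X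
        have := empirical_prob hn X
        exact wp_le hp _ _ K t ht S hS hc R h0 hR hK
    _ ≤ _ := mink' (sampleMeasure μ n) hp K _ (fun j => 2 * R (j + 1))
        (fun j X => ∑ c ∈ S j, (empiricalMeasure n X (t j ⁻¹' {c}) - μ (t j ⁻¹' {c}))) (by
          intro j
          simp only [emp_sub μ (hA _ _) hn]
          exact Finset.measurable_sum _ fun c _ =>
            ((measurable_cnt (hA j c) _ n).div_const _).ennreal_ofReal)
    _ ≤ _ := by
        gcongr with j hj
        have := upper_exp μ (S j) (fun c => t j ⁻¹' {c}) (hA j) (by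
          intro c d hcd
          refine Set.disjoint_left.2 ?_
          intro x h1 h2
          simp only [Set.mem_preimage, Set.mem_singleton_iff] at h1 h2
          exact hcd (h1.symm.trans h2)) hn (2 ^ (K - j)) Nat.one_le_two_pow (hcard j)
        simpa using this

theorem exists_proj {E : Type*} [MetricSpace E] [CompactSpace E] [MeasurableSpace E] [BorelSpace E]
    [Nonempty E] {ε : ℝ} (hε : 0 < ε) (k : ℕ) :
    ∃ (f : E → E) (S : Finset E), Measurable f ∧ S.card ≤ 2 ^ k ∧ (∀ x, f x ∈ S) ∧
      ∀ x, edist x (f x) ≤ ENNReal.ofReal (covRadius E (2 ^ k) + ε) := by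
  classical
  have hne : {ε : ℝ | 0 < ε ∧ ∃ S : Finset E, S.card ≤ 2 ^ k ∧
      ∀ y : E, ∃ x ∈ S, dist y x ≤ ε}.Nonempty := by
    obtain ⟨x0⟩ := ‹Nonempty E›
    refine ⟨Metric.diam (Set.univ : Set E) + 1, by positivity, {x0}, by simpa using Nat.one_le_two_pow,
      fun y => ⟨x0, by simp, ?_⟩⟩
    have := Metric.dist_le_diam_of_mem (isCompact_univ.isBounded) (Set.mem_univ y) (Set.mem_univ x0)
    linarith
  obtain ⟨r, ⟨_, S, hS, hcov⟩, hr⟩ := exists_lt_of_csInf_lt hne (lt_add_of_pos_right _ hε)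
  have hSne : S.Nonempty := by
    obtain ⟨x, hx, _⟩ := hcov (Classical.arbitrary E)
    exact ⟨x, hx⟩
  obtain ⟨x1, hx1⟩ := hSne
  set e : ℕ → E := fun i => S.toList.getD i x1 with he
  have heS : ∀ i, e i ∈ S := by
    intro i
    simp only [he]
    by_cases h : i < S.toList.length
    · rw [List.getD_eq_getElem _ _ h, ← Finset.mem_toList]; exact List.getElem_mem h
    · rw [List.getD_eq_default _ _ (by omega)]; exact hx1
  refine ⟨SimpleFunc.nearestPt e S.card, S, (SimpleFunc.nearestPt e S.card).measurable, hS,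
    fun x => ?_, fun x => ?_⟩
  · simp only [SimpleFunc.nearestPt, SimpleFunc.map_apply]; exact heS _
  · obtain ⟨y, hy, hxy⟩ := hcov x
    obtain ⟨i, hi, hiy⟩ := List.mem_iff_getElem.1 (Finset.mem_toList.2 hy)
    have h1 := SimpleFunc.edist_nearestPt_le e x (k := i) (N := S.card)
      (by have := S.length_toList; omega)
    have h2 : e i = y := by simp only [he]; rw [List.getD_eq_getElem _ _ hi, hiy]
    rw [h2] at h1
    rw [edist_comm]
    refine h1.trans ?_
    rw [edist_dist, dist_comm]
    exact ENNReal.ofReal_le_ofReal (hxy.trans hr.le)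

theorem covRadius_nonneg (E : Type*) [MetricSpace E] (m : ℕ) : 0 ≤ covRadius E m :=
  Real.sInf_nonneg fun _ h => h.1.le

theorem exp_le_eps {E : Type*} [MetricSpace E] [CompactSpace E] [MeasurableSpace E] [BorelSpace E]
    {p : ℝ} (hp : 1 ≤ p) (μ : Measure E) [IsProbabilityMeasure μ] {n : ℕ} (hn : 1 ≤ n)
    {ε : ℝ} (hε : 0 < ε) :
    expWpPow p μ n ≤ ENNReal.ofReal (40 * p * ∑ k ∈ Finset.range (Nat.log 2 n + 1),
            ((((2 : ℝ) ^ k / n) ^ (1 / (2 * p))) * (covRadius E (2 ^ k) + ε))) := by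
  have hp0 : 0 < p := by linarith
  have hn' : (0 : ℝ) < n := by exact_mod_cast hn
  have : Nonempty E := nonempty_of_isProbabilityMeasure μ
  set K := Nat.log 2 n with hKdef
  choose f S hfm hSc hfS hfd using fun k => exists_proj (E := E) hε k
  set r : ℕ → ℝ := fun k => covRadius E (2 ^ k) + ε with hr
  have hr0 : ∀ k, 0 < r k := fun k => add_pos_of_nonneg_of_pos (covRadius_nonneg _ _) hε
  let t : ℕ → E → E := fun j => Nat.rec (f K) (fun j g => f (K - (j + 1)) ∘ g) j
  have ts : ∀ j, t (j + 1) = f (K - (j + 1)) ∘ t j := fun j => rfl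
  have htm : ∀ j, Measurable (t j) := by
    intro j
    induction j with
    | zero => exact hfm K
    | succ j ih => rw [ts]; exact (hfm _).comp ih
  have htS : ∀ j x, t j x ∈ S (K - j) := by
    intro j x
    cases j with
    | zero => exact hfS K x
    | succ j => rw [ts]; exact hfS _ _
  have hmain := exp_le hp μ hn K t htm (fun j => S (K - j)) htS
    (fun j x y h => by rw [ts]; simp only [Function.comp]; rw [h])
    (fun j => ENNReal.ofReal (r (K - j))) (fun x => hfd K x)
    (fun j _ x => by rw [ts]; exact hfd _ _)
    (fun x y => by
      have h1 := htS K x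
      have h2 := htS K y
      have h3 := hSc 0
      rw [Nat.sub_self] at h1 h2
      exact Finset.card_le_one.1 (by simpa using h3) _ h1 _ h2)
    (fun j => hSc _)
  refine hmain.trans ?_
  set a : ℕ → ℝ := fun k => ((2 : ℝ) ^ k / n) ^ (1 / (2 * p)) with ha
  have ha0 : ∀ k, 0 < a k := fun k => by positivity
  have hsq : ∀ k : ℕ, (ENNReal.ofReal (Real.sqrt ((2 : ℝ) ^ k / n))) ^ (1 / p)
      = ENNReal.ofReal (a k) := by
    intro k
    rw [ENNReal.ofReal_rpow_of_nonneg (Real.sqrt_nonneg _) (by positivity), Real.sqrt_eq_rpow,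
      ← Real.rpow_mul (by positivity)]
    congr 2
    field_simp
  have hexp : 1 / (2 * p) ≤ 1 := by
    rw [div_le_one (by positivity)]; linarith
  have hstep : ∀ k, a (k + 1) ≤ 2 * a k := by
    intro k
    simp only [ha]
    rw [show (2 : ℝ) ^ (k + 1) / n = 2 * (2 ^ k / n) by ring,
      Real.mul_rpow (by positivity) (by positivity)]
    gcongr
    calc (2 : ℝ) ^ (1 / (2 * p)) ≤ 2 ^ (1 : ℝ) :=
          Real.rpow_le_rpow_of_exponent_le (by norm_num) hexp
      _ = 2 := Real.rpow_one _
  have hlast : 1 ≤ 2 * a K := by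
    refine le_trans ?_ (hstep K)
    simp only [ha]
    apply Real.one_le_rpow _ (by positivity)
    rw [le_div_iff₀ hn', one_mul]
    have := Nat.lt_pow_succ_log_self (b := 2) (by norm_num) n
    exact_mod_cast this.le
  have hterm : ∀ j ∈ Finset.range K, 2 * ENNReal.ofReal (r (K - (j + 1))) *
      (ENNReal.ofReal (Real.sqrt ((2 : ℝ) ^ (K - j) / n))) ^ (1 / p)
      ≤ ENNReal.ofReal (4 * (a (K - 1 - j) * r (K - 1 - j))) := by
    intro j hj
    have hj' := Finset.mem_range.1 hj
    rw [hsq, show K - j = (K - 1 - j) + 1 by omega, show K - (j + 1) = K - 1 - j by omega]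
    rw [show (2 : ℝ≥0∞) = ENNReal.ofReal 2 by simp, ← ENNReal.ofReal_mul (by norm_num),
      ← ENNReal.ofReal_mul (by have := hr0 (K - 1 - j); positivity)]
    apply ENNReal.ofReal_le_ofReal
    have := mul_le_mul_of_nonneg_left (hstep (K - 1 - j)) (hr0 (K - 1 - j)).le
    nlinarith
  calc _ ≤ ENNReal.ofReal (4 * (a K * r K)) +
        ∑ j ∈ Finset.range K, ENNReal.ofReal (4 * (a (K - 1 - j) * r (K - 1 - j))) := by
        refine add_le_add ?_ (Finset.sum_le_sum hterm)
        rw [show (2 : ℝ≥0∞) = ENNReal.ofReal 2 by simp, ← ENNReal.ofReal_mul (by norm_num)]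
        apply ENNReal.ofReal_le_ofReal
        have := mul_le_mul_of_nonneg_left hlast (hr0 K).le
        simp only [Nat.sub_zero]
        nlinarith
    _ = ENNReal.ofReal (4 * ∑ k ∈ Finset.range (K + 1), a k * r k) := by
        rw [Finset.sum_range_reflect (fun k => ENNReal.ofReal (4 * (a k * r k))), add_comm,
          ← Finset.sum_range_succ (fun k => ENNReal.ofReal (4 * (a k * r k))),
          ← ENNReal.ofReal_sum_of_nonneg, Finset.mul_sum]
        intro k _
        have := hr0 k
        have := ha0 k
        positivity
    _ ≤ _ := by
        apply ENNReal.ofReal_le_ofReal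
        apply mul_le_mul_of_nonneg_right
        · linarith
        · exact Finset.sum_nonneg fun k _ => mul_nonneg (ha0 k).le (hr0 k).le

theorem upper_bound {E : Type*} [MetricSpace E] [CompactSpace E] [MeasurableSpace E] [BorelSpace E]
    {p : ℝ} (hp : 1 ≤ p) (μ : Measure E) [IsProbabilityMeasure μ] {n : ℕ} (hn : 1 ≤ n) :
    expWpPow p μ n ≤ ENNReal.ofReal (40 * p) *
          ∑ k ∈ Finset.range (Nat.log 2 n + 1),
            ENNReal.ofReal ((((2 : ℝ) ^ k / n) ^ (1 / (2 * p))) * covRadius E (2 ^ k)) := by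
  have h : ∀ k ∈ Finset.range (Nat.log 2 n + 1),
      0 ≤ (((2 : ℝ) ^ k / n) ^ (1 / (2 * p))) * covRadius E (2 ^ k) := fun k _ =>
    mul_nonneg (by positivity) (covRadius_nonneg _ _)
  rw [← ENNReal.ofReal_sum_of_nonneg h, ← ENNReal.ofReal_mul (by linarith)]
  have hc : Continuous (fun ε : ℝ => ENNReal.ofReal (40 * p *
      ∑ k ∈ Finset.range (Nat.log 2 n + 1),
            ((((2 : ℝ) ^ k / n) ^ (1 / (2 * p))) * (covRadius E (2 ^ k) + ε)))) := by
    refine ENNReal.continuous_ofReal.comp ?_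
    fun_prop
  have ht := (hc.tendsto 0).mono_left (nhdsWithin_le_nhds (s := Set.Ioi 0))
  simp only [add_zero] at ht
  refine ge_of_tendsto ht ?_
  filter_upwards [self_mem_nhdsWithin] with ε hε
  exact exp_le_eps hp μ hn hε

end Upper
section Lower

theorem exists_sep {E : Type*} [MetricSpace E] (m : ℕ) {r : ℝ} (hr0 : 0 < r)
    (hr : r < covRadius E m) :
    ∃ S : Finset E, S.card = m + 1 ∧ ∀ x ∈ S, ∀ y ∈ S, x ≠ y → r ≤ dist x y := by
  classical
  have hno : ∀ S : Finset E, S.card ≤ m → ∃ y : E, ∀ x ∈ S, r < dist y x := by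
    intro S hS
    by_contra! hcon
    have : covRadius E m ≤ r := csInf_le ⟨0, fun _ h => h.1.le⟩ ⟨hr0, S, hS, hcon⟩
    linarith
  have : ∀ j ≤ m + 1, ∃ S : Finset E, S.card = j ∧ ∀ x ∈ S, ∀ y ∈ S, x ≠ y → r ≤ dist x y := by
    intro j hj
    induction j with
    | zero => exact ⟨∅, by simp⟩
    | succ j ih =>
      obtain ⟨S, hc, hs⟩ := ih (by omega)
      obtain ⟨y, hy⟩ := hno S (by omega)
      have hyS : y ∉ S := fun h => by have := hy y h; simp at this; linarith
      refine ⟨insert y S, by rw [Finset.card_insert_of_notMem hyS, hc], ?_⟩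
      intro a ha b hb hab
      rw [Finset.mem_insert] at ha hb
      rcases ha with rfl | ha <;> rcases hb with rfl | hb
      · exact absurd rfl hab
      · exact (hy b hb).le
      · rw [dist_comm]; exact (hy a ha).le
      · exact hs a ha b hb hab
  exact this (m + 1) le_rfl

theorem wp_ge {E : Type*} [MetricSpace E] [MeasurableSpace E] [BorelSpace E]
    {p : ℝ} (hp : 1 ≤ p) (ν μ : Measure E) (S : Finset E) (hμ : μ (↑S : Set E)ᶜ = 0)
    {r : ℝ} (hs : ∀ x ∈ S, ∀ y ∈ S, x ≠ y → r ≤ dist x y) :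
    ENNReal.ofReal r ^ p * ∑ x ∈ S, (ν {x} - μ {x}) ≤ Wp p ν μ ^ p := by
  classical
  have hp0 : 0 < p := by linarith
  have hinv : ∀ b : ℝ≥0∞, (b ^ (1 / p)) ^ p = b := fun b => by
    rw [← ENNReal.rpow_mul, one_div_mul_cancel hp0.ne', ENNReal.rpow_one]
  rw [← hinv (ENNReal.ofReal r ^ p * ∑ x ∈ S, (ν {x} - μ {x}))]
  refine ENNReal.rpow_le_rpow ?_ hp0.le
  unfold Wp
  refine le_iInf₂ fun γ hγ => ?_
  obtain ⟨g1, g2⟩ := hγ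
  refine ENNReal.rpow_le_rpow ?_ (by positivity)
  have hSm : MeasurableSet (↑S : Set E) := S.measurableSet
  let B : E → Set (E × E) := fun x => {x} ×ˢ (↑(S.erase x) : Set E)
  have hBm : ∀ x, MeasurableSet (B x) := fun x =>
    (measurableSet_singleton x).prod (S.erase x).measurableSet
  have hBd : (↑S : Set E).PairwiseDisjoint B := by
    intro x _ y _ hxy
    refine Set.disjoint_left.2 ?_
    rintro z ⟨h1, _⟩ ⟨h2, _⟩
    exact hxy ((Set.mem_singleton_iff.1 h1).symm.trans (Set.mem_singleton_iff.1 h2))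
  have hB : ∀ x ∈ S, ν {x} - μ {x} ≤ γ (B x) := by
    intro x hx
    rw [tsub_le_iff_right, ← g1, ← g2, Measure.map_apply measurable_fst (measurableSet_singleton x),
      Measure.map_apply measurable_snd (measurableSet_singleton x)]
    have h0 : γ (Prod.snd ⁻¹' (↑S : Set E)ᶜ) = 0 := by
      rw [← Measure.map_apply measurable_snd hSm.compl, g2, hμ]
    calc γ (Prod.fst ⁻¹' {x}) ≤ γ ((B x ∪ Prod.snd ⁻¹' {x}) ∪ Prod.snd ⁻¹' (↑S : Set E)ᶜ) := by
          apply measure_mono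
          rintro ⟨a, b⟩ h
          simp only [Set.mem_preimage, Set.mem_singleton_iff] at h
          subst h
          by_cases hb : b ∈ S
          · by_cases hab : b = a
            · left; right; simpa using hab
            · left; left; simp [B, hb, hab]
          · right; simpa using hb
      _ ≤ γ (B x) + γ (Prod.snd ⁻¹' {x}) + γ (Prod.snd ⁻¹' (↑S : Set E)ᶜ) :=
          (measure_union_le _ _).trans (add_le_add (measure_union_le _ _) le_rfl)
      _ = _ := by rw [h0, add_zero]
  calc ENNReal.ofReal r ^ p * ∑ x ∈ S, (ν {x} - μ {x})
      ≤ ENNReal.ofReal r ^ p * ∑ x ∈ S, γ (B x) := by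
        gcongr with x hx; exact hB x hx
    _ = ENNReal.ofReal r ^ p * γ (⋃ x ∈ S, B x) := by
        rw [measure_biUnion_finset hBd (fun x _ => hBm x)]
    _ = ∫⁻ z in (⋃ x ∈ S, B x), ENNReal.ofReal r ^ p ∂γ := by
        rw [lintegral_const, Measure.restrict_apply_univ]
    _ ≤ ∫⁻ z in (⋃ x ∈ S, B x), edist z.1 z.2 ^ p ∂γ := by
        refine setLIntegral_mono' (S.measurableSet_biUnion fun x _ => hBm x) ?_
        rintro ⟨a, b⟩ hz
        simp only [Set.mem_iUnion] at hz
        obtain ⟨x, hx, h1, h2⟩ := hz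
        simp only [Set.mem_singleton_iff] at h1
        subst h1
        simp only [Finset.coe_erase, Set.mem_diff, Finset.mem_coe, Set.mem_singleton_iff] at h2
        refine ENNReal.rpow_le_rpow ?_ hp0.le
        rw [edist_dist]
        exact ENNReal.ofReal_le_ofReal (hs a hx b h2.1 (fun h => h2.2 h.symm))
    _ ≤ _ := setLIntegral_le_lintegral _ _

theorem lower_bound {E : Type*} [MetricSpace E] [CompactSpace E] [MeasurableSpace E] [BorelSpace E]
    {p : ℝ} (hp : 1 ≤ p) {n : ℕ} (hn : 1 ≤ n) (m : ℕ) (hm : 1 ≤ m) (hmn : m ≤ n) {r : ℝ}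
    (hr0 : 0 < r) (hr : r < covRadius E m) :
    ∃ μ : Measure E, IsProbabilityMeasure μ ∧ HasFiniteMoment p μ ∧
      ENNReal.ofReal (1 / 4 * (((m : ℝ) / n) ^ (1 / (2 * p)) * r)) ≤ expWpPow p μ n := by
  classical
  have hp0 : 0 < p := by linarith
  have hn' : (0 : ℝ) < n := by exact_mod_cast hn
  have hm' : (1 : ℝ) ≤ m := by exact_mod_cast hm
  have hmn' : (m : ℝ) ≤ n := by exact_mod_cast hmn
  obtain ⟨S, hc, hs⟩ := exists_sep m hr0 hr
  let μ : Measure E := ((m + 1 : ℕ) : ℝ≥0∞)⁻¹ • ∑ x ∈ S, Measure.dirac x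
  have hμp : IsProbabilityMeasure μ := by
    constructor
    simp only [μ, Measure.smul_apply, Measure.coe_finsetSum, Finset.sum_apply, measure_univ,
      Finset.sum_const, hc, smul_eq_mul, nsmul_eq_mul, mul_one]
    exact ENNReal.inv_mul_cancel (by positivity) (by simp)
  have hμS : μ (↑S : Set E)ᶜ = 0 := by
    simp only [μ, Measure.smul_apply, Measure.coe_finsetSum, Finset.sum_apply, smul_eq_mul]
    rw [Finset.sum_eq_zero, mul_zero]
    intro x hx
    rw [Measure.dirac_apply' _ S.measurableSet.compl]
    simp [hx]
  have hμx : ∀ x ∈ S, μ.real {x} = 1 / ((m : ℝ) + 1) := by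
    intro x hx
    have : μ {x} = ((m + 1 : ℕ) : ℝ≥0∞)⁻¹ := by
      simp only [μ, Measure.smul_apply, Measure.coe_finsetSum, Finset.sum_apply, smul_eq_mul]
      rw [Finset.sum_eq_single x]
      · simp
      · intro y _ hy
        rw [Measure.dirac_apply' _ (measurableSet_singleton x)]
        simp [hy]
      · exact fun h => absurd hx h
    rw [measureReal_def, this, ENNReal.toReal_inv, ENNReal.toReal_natCast]
    push_cast; rw [one_div]
  refine ⟨μ, hμp, ?_, ?_⟩
  · have : Nonempty E := nonempty_of_isProbabilityMeasure μ
    refine ⟨Classical.arbitrary E, ?_⟩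
    have hle : ∫⁻ x, edist x (Classical.arbitrary E) ^ p ∂μ
        ≤ ∫⁻ x, ENNReal.ofReal (Metric.diam (Set.univ : Set E)) ^ p ∂μ := by
      refine lintegral_mono fun x => ENNReal.rpow_le_rpow ?_ hp0.le
      rw [edist_dist]
      exact ENNReal.ofReal_le_ofReal (Metric.dist_le_diam_of_mem (isCompact_univ.isBounded)
        (Set.mem_univ _) (Set.mem_univ _))
    refine ne_top_of_le_ne_top ?_ hle
    simp [hp0.le]
  · set σ : ℝ := Real.sqrt (n * m) / (m + 1) with hσ
    have hσ0 : 0 < σ := by positivity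
    have hσ2 : σ ^ 2 = n * (1 / ((m : ℝ) + 1) * (1 - 1 / ((m : ℝ) + 1))) := by
      rw [hσ, div_pow, Real.sq_sqrt (by positivity)]; field_simp; ring
    have h6 : 1 - 6 * (1 / ((m : ℝ) + 1) * (1 - 1 / ((m : ℝ) + 1))) ≤ σ ^ 2 := by
      rw [hσ2]
      have e : 1 / ((m : ℝ) + 1) * (1 - 1 / ((m : ℝ) + 1)) = m / (m + 1) ^ 2 := by
        field_simp; ring
      rw [e]
      have : 1 ≤ ((n : ℝ) + 6) * (m / (m + 1) ^ 2) := by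
        rw [← mul_div_assoc, le_div_iff₀ (by positivity)]
        nlinarith
      linarith
    have hT : ENNReal.ofReal (1 / 4 * Real.sqrt (m / n)) ≤
        ∫⁻ X, ∑ x ∈ S, (empiricalMeasure n X {x} - μ {x}) ∂(sampleMeasure μ n) := by
      rw [lintegral_finsetSum _ (fun x _ => by
        simp only [emp_sub μ (measurableSet_singleton x) hn]
        exact ((measurable_cnt (measurableSet_singleton x) _ n).div_const _).ennreal_ofReal)]
      calc _ = ∑ x ∈ S, ENNReal.ofReal (σ / 4 / n) := by
            rw [Finset.sum_const, hc, nsmul_eq_mul, ← ENNReal.ofReal_natCast,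
              ← ENNReal.ofReal_mul (by positivity)]
            congr 1
            have : Real.sqrt (m / n) = Real.sqrt (n * m) / n := by
              rw [show (m : ℝ) / n = n * m / n ^ 2 by field_simp, Real.sqrt_div (by positivity),
                Real.sqrt_sq hn'.le]
            rw [this, hσ]; push_cast; field_simp
        _ ≤ _ := by
            refine Finset.sum_le_sum fun x hx => ?_
            exact lower_exp μ (measurableSet_singleton x) hn σ hσ0
              (by rw [hμx x hx]; exact hσ2) (by rw [hμx x hx]; exact h6)
    unfold expWpPow
    have hI : ENNReal.ofReal r ^ p * ENNReal.ofReal (1 / 4 * Real.sqrt (m / n)) ≤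
        ∫⁻ X, (Wp p (empiricalMeasure n X) μ) ^ p ∂(sampleMeasure μ n) := by
      calc _ ≤ ENNReal.ofReal r ^ p *
            ∫⁻ X, ∑ x ∈ S, (empiricalMeasure n X {x} - μ {x}) ∂(sampleMeasure μ n) := by gcongr
        _ = ∫⁻ X, ENNReal.ofReal r ^ p * ∑ x ∈ S, (empiricalMeasure n X {x} - μ {x})
            ∂(sampleMeasure μ n) := by
            rw [lintegral_const_mul' _ _ (by simp [hp0.le])]
        _ ≤ _ := lintegral_mono fun X => wp_ge hp _ μ S hμS hs
    refine le_trans ?_ (ENNReal.rpow_le_rpow hI (by positivity))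
    rw [ENNReal.mul_rpow_of_nonneg _ _ (by positivity), ← ENNReal.rpow_mul,
      mul_one_div_cancel hp0.ne', ENNReal.rpow_one,
      ENNReal.ofReal_rpow_of_nonneg (by positivity) (by positivity), ← ENNReal.ofReal_mul hr0.le]
    apply ENNReal.ofReal_le_ofReal
    rw [Real.mul_rpow (by positivity) (by positivity), Real.sqrt_eq_rpow,
      ← Real.rpow_mul (by positivity), show 1 / 2 * (1 / p) = 1 / (2 * p) by field_simp]
    have h4 : (1 / 4 : ℝ) ≤ (1 / 4) ^ (1 / p) := by
      calc (1 / 4 : ℝ) = (1 / 4) ^ (1 : ℝ) := (Real.rpow_one _).symm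
        _ ≤ _ := Real.rpow_le_rpow_of_exponent_ge (by norm_num) (by norm_num)
          (by rw [div_le_one hp0]; exact hp)
    calc _ = r * (1 / 4 * ((m : ℝ) / n) ^ (1 / (2 * p))) := by ring
      _ ≤ _ := by gcongr

end Lower

/-- **Corollary (supmu).** Let `(E, d_E)` be a compact metric space, `p ≥ 1` and
`n ∈ ℕ`. Then
`(1/4) max_{0 ≤ k ≤ ⌊log₂ n⌋} (2^k/n)^{1/(2p)} h(2^k)
   ≤ sup_{μ ∈ 𝒫_p(E)} (𝔼[W_p(μ_n,μ)^p])^{1/p}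
   ≤ 40 p ∑_{k=0}^{⌊log₂ n⌋} (2^k/n)^{1/(2p)} h(2^k)`. -/
theorem stmt_7 {E : Type*} [MetricSpace E] [CompactSpace E]
    [MeasurableSpace E] [BorelSpace E]
    (p : ℝ) (hp : 1 ≤ p) (n : ℕ) (hn : 1 ≤ n) :
    ENNReal.ofReal (1 / 4) *
        (⨆ k ∈ Finset.range (Nat.log 2 n + 1),
          ENNReal.ofReal ((((2 : ℝ) ^ k / n) ^ (1 / (2 * p))) * covRadius E (2 ^ k)))
      ≤ (⨆ μ : {μ : Measure E // IsProbabilityMeasure μ ∧ HasFiniteMoment p μ},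
          expWpPow p μ.1 n) ∧
    (⨆ μ : {μ : Measure E // IsProbabilityMeasure μ ∧ HasFiniteMoment p μ},
        expWpPow p μ.1 n)
      ≤ ENNReal.ofReal (40 * p) *
          ∑ k ∈ Finset.range (Nat.log 2 n + 1),
            ENNReal.ofReal ((((2 : ℝ) ^ k / n) ^ (1 / (2 * p))) * covRadius E (2 ^ k)) := by
  constructor
  · rw [ENNReal.mul_iSup]
    refine iSup_le fun k => ?_
    rw [ENNReal.mul_iSup]
    refine iSup_le fun hk => ?_
    have hn' : (0 : ℝ) < n := by exact_mod_cast hn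
    have hkn : 2 ^ k ≤ n := by
      have h1 : k ≤ Nat.log 2 n := by
        have := Finset.mem_range.1 hk; omega
      exact (Nat.pow_le_pow_right (by norm_num) h1).trans (Nat.pow_log_le_self 2 (by omega))
    rw [← ENNReal.ofReal_mul (by norm_num)]
    rcases (covRadius_nonneg E (2 ^ k)).eq_or_lt with h0 | h0
    · rw [← h0]; simp
    · have hc : Continuous (fun r : ℝ =>
          ENNReal.ofReal (1 / 4 * (((2 : ℝ) ^ k / n) ^ (1 / (2 * p)) * r))) := by
        refine ENNReal.continuous_ofReal.comp ?_
        fun_prop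
      have ht := (hc.tendsto (covRadius E (2 ^ k))).mono_left
        (nhdsWithin_le_nhds (s := Set.Iio (covRadius E (2 ^ k))))
      refine le_of_tendsto ht ?_
      filter_upwards [Ioo_mem_nhdsLT h0] with r hr
      obtain ⟨μ, h1, h2, h3⟩ := lower_bound (E := E) hp hn (2 ^ k) Nat.one_le_two_pow hkn hr.1 hr.2
      push_cast at h3
      exact h3.trans (le_iSup (fun μ : {μ : Measure E // IsProbabilityMeasure μ ∧
        HasFiniteMoment p μ} => expWpPow p μ.1 n) ⟨μ, h1, h2⟩)
  · refine iSup_le fun μ => ?_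
    have := μ.2.1
    exact upper_bound hp μ.1 hn
end

section
/- Let (E,d_E) be a separable metric space, let p ≥ 1 and let μ ∈ 𝒫_p(E). Let 0 ≤ β < 1/(2p), let 0 < ε < (p²/2)·(1/(2p) − β) and let q = 1/(1/(p+ε) − β). Then limsup_{n→∞} n^β · (𝔼[W_p(μ_n,μ)^p])^{1/p} ≤ (100p²/((1/(2p) − β)·ε)) · limsup_{n→∞} n^β · e_{n,q}(μ), where μ_n is the empirical measure of μ with sample size n. -/
open MeasureTheory ENNReal Filter

section Aux
open ProbabilityTheory

theorem aux_Wp_glue {E : Type*} [MetricSpace E] [TopologicalSpace.SeparableSpace E]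
    [MeasurableSpace E] [BorelSpace E] (p : ℝ) (hp : 1 ≤ p)
    (α l : Measure E) [IsProbabilityMeasure α] (κ : Kernel E E) [IsMarkovKernel κ] :
    Wp p α (l.bind κ) ≤ Wp p α l
      + (∫⁻ x, ∫⁻ y, edist x y ^ p ∂κ x ∂l) ^ (1 / p) := by
  have hp0 : 0 < p := by linarith
  rw [Wp, Wp, ENNReal.iInf_add]
  refine le_iInf fun γ => ?_
  rw [ENNReal.iInf_add]
  refine le_iInf fun hγ => ?_
  obtain ⟨h1, h2⟩ := hγ
  have hγp : IsProbabilityMeasure γ := by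
    constructor
    have : (γ.map Prod.fst) Set.univ = 1 := by rw [h1]; simp
    rwa [Measure.map_apply measurable_fst MeasurableSet.univ] at this
  set κ' : Kernel (E × E) E := κ.comap Prod.snd measurable_snd with hκ'
  have hm : Measurable (fun z : (E × E) × E => (z.1.1, z.2)) := by fun_prop
  refine (iInf₂_le ((γ ⊗ₘ κ').map (fun z => (z.1.1, z.2))) ⟨?_, ?_⟩).trans ?_
  rotate_left
  · rw [Measure.map_map measurable_fst hm]
    have : (Prod.fst ∘ fun z : (E × E) × E => (z.1.1, z.2)) = Prod.fst ∘ Prod.fst := rfl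
    rw [this, ← Measure.map_map measurable_fst measurable_fst]
    have h3 := Measure.fst_compProd γ κ'
    rw [Measure.fst] at h3
    rw [h3, h1]
  · rw [Measure.map_map measurable_snd hm]
    have : (Prod.snd ∘ fun z : (E × E) × E => (z.1.1, z.2)) = Prod.snd := rfl
    rw [this]
    have h3 := Measure.snd_compProd γ κ'
    rw [Measure.snd] at h3
    rw [h3]
    ext s hs
    rw [Measure.bind_apply hs (Kernel.aemeasurable _), Measure.bind_apply hs (Kernel.aemeasurable _),
      ← h2, lintegral_map (Kernel.measurable_coe κ hs) measurable_snd]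
    rfl
  · rw [lintegral_map (by fun_prop) hm]
    calc (∫⁻ z, edist z.1.1 z.2 ^ p ∂(γ ⊗ₘ κ')) ^ (1 / p)
        ≤ (∫⁻ z, ((fun z : (E × E) × E => edist z.1.1 z.1.2) +
            (fun z : (E × E) × E => edist z.1.2 z.2)) z ^ p ∂(γ ⊗ₘ κ')) ^ (1 / p) := by
          gcongr with z
          exact edist_triangle _ _ _
      _ ≤ _ := ENNReal.lintegral_Lp_add_le (by fun_prop) (by fun_prop) hp
      _ = _ := by
          congr 2
          · rw [Measure.lintegral_compProd (by fun_prop)]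
            simp
          · rw [Measure.lintegral_compProd (by fun_prop)]
            rw [← h2, lintegral_map _ measurable_snd]
            · rfl
            · have : Measurable (Function.uncurry fun x y : E => edist x y ^ p) := by fun_prop
              exact this.lintegral_kernel_prod_right

theorem aux_cells {E : Type*} [MeasurableSpace E] (μ : Measure E) (ℓ : E → ℕ) (hℓ : Measurable ℓ)
    (F : E → ℝ≥0∞) : ∫⁻ x, F x ∂μ = ∑' s, ∫⁻ x in ℓ ⁻¹' {s}, F x ∂μ := by
  rw [← lintegral_iUnion (fun s => hℓ (measurableSet_singleton s))]
  · have : (⋃ s, ℓ ⁻¹' {s}) = Set.univ := by ext x; simp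
    rw [this, Measure.restrict_univ]
  · intro i j hij
    refine Disjoint.preimage _ ?_
    simpa using hij

/-- core coupling step -/
theorem aux_core {E : Type*} [MetricSpace E] [TopologicalSpace.SeparableSpace E]
    [MeasurableSpace E] [BorelSpace E] (p : ℝ) (hp : 1 ≤ p)
    (α l b : Measure E) [IsProbabilityMeasure α] [IsFiniteMeasure l] [IsFiniteMeasure b]
    (u : E → ℝ≥0∞) (hu : Measurable u) (hu1 : ∀ x, u x ≤ 1)
    (ℓ : E → ℕ) (hℓ : Measurable ℓ) (c : ℕ → E)
    (h : ∀ s, ∫⁻ x in ℓ ⁻¹' {s}, u x ∂l = b (ℓ ⁻¹' {s})) :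
    Wp p α (l.withDensity (fun x => 1 - u x) + b) ≤ Wp p α l
      + (2 ^ (p - 1) * (∫⁻ x, u x * edist x (c (ℓ x)) ^ p ∂l
          + ∫⁻ x, edist x (c (ℓ x)) ^ p ∂b)) ^ (1 / p) := by
  classical
  have hp0 : 0 < p := by linarith
  have hc : Measurable c := measurable_from_nat
  set ν : ℕ → Measure E := fun s => if b (ℓ ⁻¹' {s}) = 0 then Measure.dirac (c s) else
    (b (ℓ ⁻¹' {s}))⁻¹ • b.restrict (ℓ ⁻¹' {s}) with hν
  have hνp : ∀ s, IsProbabilityMeasure (ν s) := by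
    intro s
    simp only [hν]
    split_ifs with h0
    · infer_instance
    · constructor
      simp only [Measure.smul_apply, Measure.restrict_apply_univ, smul_eq_mul]
      exact ENNReal.inv_mul_cancel h0 (measure_ne_top _ _)
  have hνm : Measurable (fun x => ν (ℓ x)) := (measurable_from_nat (f := ν)).comp hℓ
  have key : ∀ H : ℕ → E → ℝ≥0∞, 
      ∫⁻ x, u x * ∫⁻ y, H (ℓ x) y ∂(ν (ℓ x)) ∂l = ∫⁻ y, H (ℓ y) y ∂b := by
    intro H
    rw [aux_cells l ℓ hℓ, aux_cells b ℓ hℓ]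
    congr 1
    ext s
    have e1 : ∫⁻ x in ℓ ⁻¹' {s}, u x * ∫⁻ y, H (ℓ x) y ∂(ν (ℓ x)) ∂l
        = ∫⁻ x in ℓ ⁻¹' {s}, u x * ∫⁻ y, H s y ∂(ν s) ∂l := by
      refine setLIntegral_congr_fun (hℓ (measurableSet_singleton s)) ?_
      intro x hx
      have : ℓ x = s := hx
      simp only [this]
    have e2 : ∫⁻ x in ℓ ⁻¹' {s}, H (ℓ x) x ∂b = ∫⁻ x in ℓ ⁻¹' {s}, H s x ∂b := by
      refine setLIntegral_congr_fun (hℓ (measurableSet_singleton s)) ?_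
      intro x hx
      have : ℓ x = s := hx
      simp only [this]
    rw [e1, e2, lintegral_mul_const _ hu, h s]
    simp only [hν]
    split_ifs with h0
    · rw [h0, zero_mul, Measure.restrict_eq_zero.2 h0]; simp
    · rw [lintegral_smul_measure, smul_eq_mul, ← mul_assoc,
        ENNReal.mul_inv_cancel h0 (measure_ne_top _ _), one_mul]
  have hκm : Measurable (fun x => (1 - u x) • Measure.dirac x + u x • ν (ℓ x)) := by
    refine Measure.measurable_of_measurable_coe _ fun s hs => ?_
    simp only [Measure.add_apply, Measure.smul_apply, smul_eq_mul]
    have h1 : Measurable fun x => ν (ℓ x) s := (Measure.measurable_coe hs).comp hνm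
    have h2 : Measurable fun x : E => Measure.dirac x s :=
      (Measure.measurable_coe hs).comp Measure.measurable_dirac
    fun_prop
  set κ : Kernel E E := ⟨_, hκm⟩ with hκ
  have hκa : ∀ x, κ x = (1 - u x) • Measure.dirac x + u x • ν (ℓ x) := fun x => rfl
  have hκM : IsMarkovKernel κ := by
    constructor
    intro x
    constructor
    rw [hκa]
    simp [tsub_add_cancel_of_le (hu1 x)]
  have hint : ∀ (F : E → ℝ≥0∞) (hF : Measurable F) (x : E), ∫⁻ y, F y ∂κ x
      = (1 - u x) * F x + u x * ∫⁻ y, F y ∂(ν (ℓ x)) := by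
    intro F hF x
    rw [hκa, lintegral_add_measure, lintegral_smul_measure, lintegral_smul_measure,
      lintegral_dirac' _ hF]
    rfl
  have hbind : l.bind κ = l.withDensity (fun x => 1 - u x) + b := by
    ext s hs
    rw [Measure.bind_apply hs (Kernel.aemeasurable _)]
    have hF : Measurable (s.indicator (fun _ => (1 : ℝ≥0∞))) := measurable_const.indicator hs
    have : ∀ x, κ x s = (1 - u x) * s.indicator (fun _ => (1 : ℝ≥0∞)) x
        + u x * ∫⁻ y, s.indicator (fun _ => (1 : ℝ≥0∞)) y ∂(ν (ℓ x)) := by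
      intro x
      rw [← hint _ hF, lintegral_indicator_const hs, one_mul]
    simp only [this]
    rw [lintegral_add_left (by fun_prop), key (fun _ => s.indicator (fun _ => (1 : ℝ≥0∞))),
      lintegral_indicator_const hs, one_mul, Measure.add_apply, withDensity_apply _ hs,
      ← lintegral_indicator hs]
    congr 2
    ext x
    by_cases hx : x ∈ s <;> simp [hx]
  rw [← hbind]
  refine (aux_Wp_glue p hp α l κ).trans ?_
  gcongr
  calc ∫⁻ x, ∫⁻ y, edist x y ^ p ∂κ x ∂l
      = ∫⁻ x, u x * ∫⁻ y, edist x y ^ p ∂(ν (ℓ x)) ∂l := by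
        refine lintegral_congr fun x => ?_
        rw [hint _ (by fun_prop)]
        simp [hp0]
    _ ≤ ∫⁻ x, 2 ^ (p - 1) * (u x * edist x (c (ℓ x)) ^ p +
          u x * ∫⁻ y, edist y (c (ℓ x)) ^ p ∂(ν (ℓ x))) ∂l := by
        refine lintegral_mono fun x => ?_
        have : ∫⁻ y, edist x y ^ p ∂(ν (ℓ x)) ≤ ∫⁻ y, 2 ^ (p - 1) *
            (edist x (c (ℓ x)) ^ p + edist y (c (ℓ x)) ^ p) ∂(ν (ℓ x)) := by
          refine lintegral_mono fun y => ?_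
          refine le_trans ?_ (ENNReal.rpow_add_le_mul_rpow_add_rpow _ _ hp)
          refine ENNReal.rpow_le_rpow ?_ hp0.le
          rw [edist_comm y]
          exact edist_triangle _ _ _
        rw [lintegral_const_mul _ (by fun_prop), lintegral_add_left (by fun_prop),
          lintegral_const] at this
        have hh := hνp (ℓ x)
        rw [measure_univ, mul_one] at this
        refine (mul_le_mul' le_rfl this).trans (le_of_eq ?_)
        ring
    _ = _ := by
        rw [lintegral_const_mul', lintegral_add_left (by fun_prop)]
        · rw [key (fun s y => edist y (c s) ^ p)]
        · finiteness

end Aux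

section Aux
open ProbabilityTheory

noncomputable def auxG {E : Type*} [MeasurableSpace E] (μ ρ : Measure E) (ℓ : E → ℕ) (x : E) :
    ℝ≥0∞ := ρ (ℓ ⁻¹' {ℓ x}) / μ (ℓ ⁻¹' {ℓ x})

theorem aux_G_meas {E : Type*} [MeasurableSpace E] (μ ρ : Measure E) (ℓ : E → ℕ)
    (hℓ : Measurable ℓ) : Measurable (auxG μ ρ ℓ) :=
  (measurable_from_nat (f := fun s => ρ (ℓ ⁻¹' {s}) / μ (ℓ ⁻¹' {s}))).comp hℓ

theorem aux_G_set {E : Type*} [MeasurableSpace E] (μ ρ : Measure E) [IsProbabilityMeasure μ]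
    [IsProbabilityMeasure ρ] (ℓ : E → ℕ) (hℓ : Measurable ℓ)
    (h : ∀ s, μ (ℓ ⁻¹' {s}) = 0 → ρ (ℓ ⁻¹' {s}) = 0) (T : Set ℕ) :
    ∫⁻ x in ℓ ⁻¹' T, auxG μ ρ ℓ x ∂μ = ρ (ℓ ⁻¹' T) := by
  have hT : MeasurableSet T := T.to_countable.measurableSet
  have e1 : ∫⁻ x in ℓ ⁻¹' T, auxG μ ρ ℓ x ∂μ =
      ∫⁻ s in T, ρ (ℓ ⁻¹' {s}) / μ (ℓ ⁻¹' {s}) ∂(μ.map ℓ) := by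
    rw [setLIntegral_map hT measurable_from_nat hℓ]
    rfl
  have e2 : ρ (ℓ ⁻¹' T) = ∫⁻ s in T, 1 ∂(ρ.map ℓ) := by
    rw [setLIntegral_one, Measure.map_apply hℓ hT]
  rw [e1, e2, lintegral_countable _ T.to_countable, lintegral_countable _ T.to_countable]
  congr 1
  ext s
  rw [Measure.map_apply hℓ (measurableSet_singleton _),
    Measure.map_apply hℓ (measurableSet_singleton _), one_mul]
  by_cases h0 : μ (ℓ ⁻¹' {(s : ℕ)}) = 0
  · rw [h0, mul_zero, h _ h0]
  · rw [ENNReal.div_mul_cancel h0 (measure_ne_top _ _)]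

theorem aux_G_fin {E : Type*} [MeasurableSpace E] (μ ρ : Measure E)
    [IsProbabilityMeasure ρ] (ℓ : E → ℕ) 
    (h : ∀ s, μ (ℓ ⁻¹' {s}) = 0 → ρ (ℓ ⁻¹' {s}) = 0) (x : E) : auxG μ ρ ℓ x ≠ ∞ := by
  unfold auxG
  by_cases h0 : μ (ℓ ⁻¹' {ℓ x}) = 0
  · rw [h _ h0]; simp
  · exact ENNReal.div_ne_top (measure_ne_top _ _) h0

theorem aux_Wp_self {E : Type*} [MetricSpace E] [TopologicalSpace.SeparableSpace E]
    [MeasurableSpace E] [BorelSpace E] (p : ℝ) (hp : 1 ≤ p) (ρ : Measure E) : Wp p ρ ρ = 0 := by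
  have hp0 : 0 < p := by linarith
  refine le_antisymm ?_ bot_le
  have hm : Measurable (fun x : E => (x, x)) := by fun_prop
  refine (iInf₂_le (ρ.map (fun x => (x, x))) ⟨?_, ?_⟩).trans ?_
  rotate_left
  · rw [Measure.map_map measurable_fst hm]
    exact Measure.map_id
  · rw [Measure.map_map measurable_snd hm]
    exact Measure.map_id
  · rw [lintegral_map (by fun_prop) hm]
    simp [hp0]

theorem aux_start {E : Type*} [MetricSpace E] [TopologicalSpace.SeparableSpace E]
    [MeasurableSpace E] [BorelSpace E] (p : ℝ) (hp : 1 ≤ p)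
    (μ ρ : Measure E) [IsProbabilityMeasure μ] [IsProbabilityMeasure ρ]
    (ℓ : E → ℕ) (hℓ : Measurable ℓ) (c : ℕ → E)
    (h : ∀ s, μ (ℓ ⁻¹' {s}) = 0 → ρ (ℓ ⁻¹' {s}) = 0) :
    Wp p ρ (μ.withDensity (auxG μ ρ ℓ)) ≤
      (2 ^ (p - 1) * (∫⁻ x, edist x (c (ℓ x)) ^ p ∂ρ
          + ∫⁻ x, auxG μ ρ ℓ x * edist x (c (ℓ x)) ^ p ∂μ)) ^ (1 / p) := by
  have hG := aux_G_set μ ρ ℓ hℓ h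
  have hGm := aux_G_meas μ ρ ℓ hℓ
  have hfin : IsFiniteMeasure (μ.withDensity (auxG μ ρ ℓ)) := by
    refine isFiniteMeasure_withDensity ?_
    have := hG Set.univ
    simp only [Set.preimage_univ, Measure.restrict_univ] at this
    rw [this]; simp
  have hc : Measurable c := measurable_from_nat
  have := aux_core p hp ρ ρ (μ.withDensity (auxG μ ρ ℓ)) (fun _ => 1) measurable_const
    (fun _ => le_rfl) ℓ hℓ c (fun s => by
      rw [withDensity_apply _ (hℓ (measurableSet_singleton s)), hG]
      simp)
  rw [aux_Wp_self p hp, zero_add, lintegral_withDensity_eq_lintegral_mul _ hGm (by fun_prop)] at this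
  simpa using this

theorem aux_step {E : Type*} [MetricSpace E] [TopologicalSpace.SeparableSpace E]
    [MeasurableSpace E] [BorelSpace E] (p : ℝ) (hp : 1 ≤ p)
    (μ α : Measure E) [IsProbabilityMeasure μ] [IsProbabilityMeasure α]
    (f g : E → ℝ≥0∞) (hf : Measurable f) (hg : Measurable g) (hff : ∀ x, f x ≠ ∞)
    (hfi : ∫⁻ x, f x ∂μ ≠ ∞) (hgi : ∫⁻ x, g x ∂μ ≠ ∞)
    (ℓ : E → ℕ) (hℓ : Measurable ℓ) (c : ℕ → E)
    (h : ∀ s, ∫⁻ x in ℓ ⁻¹' {s}, f x ∂μ = ∫⁻ x in ℓ ⁻¹' {s}, g x ∂μ) :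
    Wp p α (μ.withDensity g) ≤ Wp p α (μ.withDensity f) +
      (2 ^ (p - 1) * ∫⁻ x, ((f x - g x) + (g x - f x)) * edist x (c (ℓ x)) ^ p ∂μ) ^ (1 / p) := by
  have hfin : IsFiniteMeasure (μ.withDensity f) := isFiniteMeasure_withDensity hfi
  have hgf : IsFiniteMeasure (μ.withDensity (fun x => g x - f x)) := by
    refine isFiniteMeasure_withDensity (ne_top_of_le_ne_top hgi ?_)
    exact lintegral_mono fun x => tsub_le_self
  have hc : Measurable c := measurable_from_nat
  have hu : Measurable (fun x => (f x - g x) / f x) := by fun_prop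
  have hfu : ∀ x, f x * ((f x - g x) / f x) = f x - g x := by
    intro x
    by_cases h0 : f x = 0
    · simp [h0]
    · exact ENNReal.mul_div_cancel h0 (hff x)
  have hminle : ∀ x, min (f x) (g x) + (f x - g x) = f x := by
    intro x
    rcases le_total (f x) (g x) with hh | hh
    · simp [hh, tsub_eq_zero_of_le hh]
    · rw [min_eq_right hh, add_tsub_cancel_of_le hh]
  have hminle' : ∀ x, min (f x) (g x) + (g x - f x) = g x := by
    intro x
    rcases le_total (f x) (g x) with hh | hh
    · rw [min_eq_left hh, add_tsub_cancel_of_le hh]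
    · simp [hh, tsub_eq_zero_of_le hh]
  have hfu' : ∀ x, f x * (1 - (f x - g x) / f x) = min (f x) (g x) := by
    intro x
    rw [ENNReal.mul_sub (fun _ _ => hff x), hfu, mul_one]
    refine (ENNReal.eq_sub_of_add_eq ?_ (hminle x)).symm
    exact ne_top_of_le_ne_top (hff x) tsub_le_self
  have hcell : ∀ s, ∫⁻ x in ℓ ⁻¹' {s}, (f x - g x) ∂μ = ∫⁻ x in ℓ ⁻¹' {s}, (g x - f x) ∂μ := by
    intro s
    have h1 : ∫⁻ x in ℓ ⁻¹' {s}, min (f x) (g x) ∂μ + ∫⁻ x in ℓ ⁻¹' {s}, (f x - g x) ∂μ =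
        ∫⁻ x in ℓ ⁻¹' {s}, min (f x) (g x) ∂μ + ∫⁻ x in ℓ ⁻¹' {s}, (g x - f x) ∂μ := by
      rw [← lintegral_add_left (by fun_prop), ← lintegral_add_left (by fun_prop)]
      simp only [hminle, hminle', h s]
    refine (ENNReal.add_right_inj ?_).1 h1
    refine ne_top_of_le_ne_top hfi ?_
    refine (setLIntegral_le_lintegral _ _).trans (lintegral_mono fun x => min_le_left _ _)
  have := aux_core p hp α (μ.withDensity f) (μ.withDensity (fun x => g x - f x))
    (fun x => (f x - g x) / f x) hu
    (fun x => ENNReal.div_le_of_le_mul (by simp)) ℓ hℓ c (fun s => by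
      have hs := hℓ (measurableSet_singleton s)
      rw [withDensity_apply _ hs, setLIntegral_withDensity_eq_setLIntegral_mul _ hf hu hs, ← hcell s]
      simp only [Pi.mul_apply, hfu])
  rw [← withDensity_mul _ hf (by fun_prop), ← withDensity_add_left (by fun_prop),
    lintegral_withDensity_eq_lintegral_mul _ hf (by fun_prop),
    lintegral_withDensity_eq_lintegral_mul _ (by fun_prop) (by fun_prop),
    ← lintegral_add_left (by fun_prop)] at this
  convert this using 4
  · ext x
    simp only [Pi.add_apply, Pi.mul_apply, hfu', hminle']
  · refine lintegral_congr fun x => ?_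
    simp only [Pi.mul_apply]
    rw [← mul_assoc, hfu, add_mul]

theorem aux_chain {E : Type*} [MetricSpace E] [TopologicalSpace.SeparableSpace E]
    [MeasurableSpace E] [BorelSpace E] (p : ℝ) (hp : 1 ≤ p)
    (μ ρ : Measure E) [IsProbabilityMeasure μ] [IsProbabilityMeasure ρ]
    (ℓ : ℕ → E → ℕ) (hℓ : ∀ i, Measurable (ℓ i)) (c : ℕ → ℕ → E) (τ : ℕ → ℕ → ℕ)
    (hτ : ∀ i x, ℓ (i + 1) x = τ i (ℓ i x))
    (h : ∀ i s, μ (ℓ i ⁻¹' {s}) = 0 → ρ (ℓ i ⁻¹' {s}) = 0) (J : ℕ) :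
    Wp p ρ (μ.withDensity (auxG μ ρ (ℓ J))) ≤
      (2 ^ (p - 1) * (∫⁻ x, edist x (c 0 (ℓ 0 x)) ^ p ∂ρ
          + ∫⁻ x, auxG μ ρ (ℓ 0) x * edist x (c 0 (ℓ 0 x)) ^ p ∂μ)) ^ (1 / p)
      + ∑ i ∈ Finset.range J, (2 ^ (p - 1) * ∫⁻ x, ((auxG μ ρ (ℓ i) x - auxG μ ρ (ℓ (i + 1)) x)
          + (auxG μ ρ (ℓ (i + 1)) x - auxG μ ρ (ℓ i) x))
            * edist x (c (i + 1) (ℓ (i + 1) x)) ^ p ∂μ) ^ (1 / p) := by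
  induction J with
  | zero => simpa using aux_start p hp μ ρ (ℓ 0) (hℓ 0) (c 0) (h 0)
  | succ J ih =>
    rw [Finset.sum_range_succ, ← add_assoc]
    have hi : ∀ i, ∫⁻ x, auxG μ ρ (ℓ i) x ∂μ ≠ ∞ := by
      intro i
      have := aux_G_set μ ρ (ℓ i) (hℓ i) (h i) Set.univ
      simp only [Set.preimage_univ, Measure.restrict_univ] at this
      rw [this]; simp
    refine (aux_step p hp μ ρ _ _ (aux_G_meas μ ρ (ℓ J) (hℓ J)) (aux_G_meas μ ρ _ (hℓ (J + 1)))
      (aux_G_fin μ ρ _ (h J)) (hi _) (hi _) (ℓ (J + 1)) (hℓ (J + 1))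
      (c (J + 1)) ?_).trans ?_
    · intro s
      rw [aux_G_set μ ρ _ (hℓ (J + 1)) (h (J + 1))]
      have : ℓ (J + 1) ⁻¹' {s} = ℓ J ⁻¹' (τ J ⁻¹' {s}) := by
        ext x; simp [hτ]
      rw [this, aux_G_set μ ρ _ (hℓ J) (h J)]
    · gcongr

end Aux

section Aux
open ProbabilityTheory

instance aux_sample_prob {E : Type*} [MeasurableSpace E] (μ : Measure E) [IsProbabilityMeasure μ]
    (n : ℕ) : IsProbabilityMeasure (sampleMeasure μ n) := by
  unfold sampleMeasure; infer_instance

theorem aux_emp_prob {E : Type*} [MeasurableSpace E] (n : ℕ) (hn : 0 < n) (X : Fin n → E) :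
    IsProbabilityMeasure (empiricalMeasure n X) := by
  constructor
  simp only [empiricalMeasure, Measure.smul_apply, Measure.coe_finsetSum, Finset.sum_apply,
    measure_univ, Finset.sum_const, Finset.card_univ, Fintype.card_fin, smul_eq_mul, nsmul_eq_mul,
    mul_one]
  exact ENNReal.inv_mul_cancel (by simpa using hn.ne') (by simp)

theorem aux_emp_apply {E : Type*} [MeasurableSpace E] (n : ℕ) (X : Fin n → E) (B : Set E)
    (hB : MeasurableSet B) :
    empiricalMeasure n X B = (n : ℝ≥0∞)⁻¹ * ∑ k, B.indicator 1 (X k) := by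
  simp only [empiricalMeasure, Measure.smul_apply, Measure.coe_finsetSum, Finset.sum_apply,
    smul_eq_mul]
  congr 2
  ext k
  rw [Measure.dirac_apply' _ hB]

theorem aux_emp_meas {E : Type*} [MeasurableSpace E] (n : ℕ) (B : Set E)
    (hB : MeasurableSet B) : Measurable (fun X : Fin n → E => empiricalMeasure n X B) := by
  simp only [aux_emp_apply n _ B hB]
  have : Measurable (B.indicator (1 : E → ℝ≥0∞)) := measurable_one.indicator hB
  fun_prop

theorem aux_emp_lint {E : Type*} [MeasurableSpace E] (n : ℕ) (X : Fin n → E) (f : E → ℝ≥0∞)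
    (hf : Measurable f) :
    ∫⁻ x, f x ∂(empiricalMeasure n X) = (n : ℝ≥0∞)⁻¹ * ∑ k, f (X k) := by
  rw [empiricalMeasure, lintegral_smul_measure, lintegral_finsetSum_measure, smul_eq_mul]
  simp only [lintegral_dirac' _ hf]

theorem aux_emp_exp {E : Type*} [MeasurableSpace E] (μ : Measure E) [IsProbabilityMeasure μ]
    (n : ℕ) (hn : 0 < n) (f : E → ℝ≥0∞) (hf : Measurable f) :
    ∫⁻ X, ∫⁻ x, f x ∂(empiricalMeasure n X) ∂(sampleMeasure μ n) = ∫⁻ x, f x ∂μ := by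
  simp only [aux_emp_lint n _ f hf]
  rw [lintegral_const_mul _ (by fun_prop), lintegral_finsetSum _ (fun k _ => by fun_prop)]
  have : ∀ k : Fin n, ∫⁻ X, f (X k) ∂(sampleMeasure μ n) = ∫⁻ x, f x ∂μ := by
    intro k
    exact (measurePreserving_eval (fun _ : Fin n => μ) k).lintegral_comp hf
  simp only [this, Finset.sum_const, Finset.card_univ, Fintype.card_fin, nsmul_eq_mul]
  rw [← mul_assoc, ENNReal.inv_mul_cancel (by simpa using hn.ne') (by simp), one_mul]

theorem aux_good {E : Type*} [MeasurableSpace E] (μ : Measure E) [IsProbabilityMeasure μ]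
    (n : ℕ) (ℓ : ℕ → E → ℕ) (hℓ : ∀ i, Measurable (ℓ i)) :
    ∀ᵐ X ∂(sampleMeasure μ n), ∀ i s, μ (ℓ i ⁻¹' {s}) = 0 →
      empiricalMeasure n X (ℓ i ⁻¹' {s}) = 0 := by
  rw [ae_all_iff]; intro i
  rw [ae_all_iff]; intro s
  by_cases h0 : μ (ℓ i ⁻¹' {s}) = 0
  · have h1 : ∀ᵐ X ∂(sampleMeasure μ n), ∀ k : Fin n, X k ∉ ℓ i ⁻¹' {s} := by
      rw [ae_all_iff]; intro k
      have : ∀ᵐ x ∂μ, x ∉ ℓ i ⁻¹' {s} := measure_eq_zero_iff_ae_notMem.1 h0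
      exact (measurePreserving_eval (fun _ : Fin n => μ) k).quasiMeasurePreserving.ae this
    filter_upwards [h1] with X hX _
    rw [aux_emp_apply n X _ (hℓ i (measurableSet_singleton s))]
    simp only [mul_eq_zero]
    right
    refine Finset.sum_eq_zero fun k _ => ?_
    simp only [Set.indicator_of_notMem (hX k)]
  · exact Filter.Eventually.of_forall fun X h => absurd h h0

theorem aux_G_joint {E : Type*} [MeasurableSpace E] (μ : Measure E)
    (n : ℕ) (ℓ : E → ℕ) (hℓ : Measurable ℓ) :
    Measurable (fun z : (Fin n → E) × E => auxG μ (empiricalMeasure n z.1) ℓ z.2) := by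
  have h1 : Measurable (fun z : (Fin n → E) × ℕ =>
      empiricalMeasure n z.1 (ℓ ⁻¹' {z.2}) / μ (ℓ ⁻¹' {z.2})) := by
    refine measurable_from_prod_countable_left fun s => ?_
    have h0 := aux_emp_meas n (ℓ ⁻¹' {s}) (hℓ (measurableSet_singleton s))
    exact h0.div_const (μ (ℓ ⁻¹' {s}))
  have h2 : Measurable (fun z : (Fin n → E) × E => (z.1, ℓ z.2)) := by fun_prop
  have h3 := h1.comp h2
  simp only [Function.comp_def] at h3
  simpa only [auxG] using h3

theorem aux_ofReal_abs (a b : ℝ) (ha : 0 ≤ a) (hb : 0 ≤ b) :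
    (ENNReal.ofReal a - ENNReal.ofReal b) + (ENNReal.ofReal b - ENNReal.ofReal a)
      = ‖a - b‖ₑ := by
  rw [← ENNReal.ofReal_sub _ hb, ← ENNReal.ofReal_sub _ ha, Real.enorm_eq_ofReal_abs]
  rcases le_total a b with h | h
  · rw [ENNReal.ofReal_of_nonpos (by linarith), zero_add, abs_of_nonpos (by linarith)]
    congr 1; ring
  · rw [ENNReal.ofReal_of_nonpos (p := b - a) (by linarith), add_zero, abs_of_nonneg (by linarith)]

theorem aux_var {E : Type*} [MeasurableSpace E] (μ : Measure E) [IsProbabilityMeasure μ]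
    (n : ℕ) (hn : 0 < n) (B : Set E) (hB : MeasurableSet B) (hb : μ B ≠ 0) :
    ∫⁻ X, ((empiricalMeasure n X B / μ B - 1) + (1 - empiricalMeasure n X B / μ B))
      ∂(sampleMeasure μ n) ≤ (n * μ B) ^ (-(1 / 2) : ℝ) := by
  set b : ℝ := μ.real B with hbdef
  have hb0 : 0 < b := by
    rw [hbdef, measureReal_def]; exact ENNReal.toReal_pos hb (measure_ne_top _ _)
  have hμb : μ B = ENNReal.ofReal b := by simp [hbdef]
  have hn0 : (0 : ℝ) < n := by exact_mod_cast hn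
  set Z : (Fin n → E) → ℝ := ∑ k : Fin n, fun X : Fin n → E => B.indicator (1 : E → ℝ) (X k) with hZ
  have hi : MemLp (B.indicator (1 : E → ℝ)) 2 μ := by
    have := memLp_indicator_const (μ := μ) 2 hB (1 : ℝ) (Or.inr (measure_ne_top _ _))
    exact this
  have hind : Measurable (B.indicator (1 : E → ℝ)) := measurable_one.indicator hB
  have hZm : Measurable Z := by
    have : Z = fun X => ∑ k : Fin n, B.indicator (1 : E → ℝ) (X k) := by
      ext X; simp [hZ]
    rw [this]
    fun_prop
  have hmem : ∀ k : Fin n, MemLp (fun X : Fin n → E => B.indicator (1 : E → ℝ) (X k)) 2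
      (sampleMeasure μ n) := fun k =>
    hi.comp_measurePreserving (measurePreserving_eval (fun _ : Fin n => μ) k)
  have hZL : MemLp Z 2 (sampleMeasure μ n) := by
    rw [hZ]; exact memLp_finsetSum' _ fun k _ => hmem k
  have hvar : Var[Z; sampleMeasure μ n] ≤ n * b := by
    have h1 : Var[Z; sampleMeasure μ n] = ∑ k : Fin n, Var[B.indicator (1 : E → ℝ); μ] :=
      variance_sum_pi (fun _ => hi)
    rw [h1]
    simp only [Finset.sum_const, Finset.card_univ, Fintype.card_fin, nsmul_eq_mul]
    gcongr
    refine (variance_le_expectation_sq hind.aestronglyMeasurable).trans ?_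
    have : (B.indicator (1 : E → ℝ)) ^ 2 = B.indicator 1 := by
      ext x; by_cases hx : x ∈ B <;> simp [hx]
    rw [this, integral_indicator_one hB]
  have hmean : ∫ X, Z X ∂(sampleMeasure μ n) = n * b := by
    have h1 : ∫ X, Z X ∂(sampleMeasure μ n) = ∑ k : Fin n, ∫ X, B.indicator (1 : E → ℝ) (X k)
        ∂(sampleMeasure μ n) := by
      rw [← integral_finsetSum]
      · simp [hZ]
      · intro k _; exact (hmem k).integrable (by norm_num)
    rw [h1]
    have : ∀ k : Fin n, ∫ X, B.indicator (1 : E → ℝ) (X k) ∂(sampleMeasure μ n) = b := by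
      intro k
      have h2 := (measurePreserving_eval (fun _ : Fin n => μ) k).map_eq
      rw [hbdef, ← integral_indicator_one hB]
      conv_rhs => rw [← h2]
      rw [integral_map (measurable_pi_apply k).aemeasurable (by fun_prop)]
      rfl
    simp [this]
  have hev : ∫⁻ X, ‖Z X - n * b‖ₑ ^ (2 : ℝ) ∂(sampleMeasure μ n) ≤ ENNReal.ofReal (n * b) := by
    have h1 := hZL.ofReal_variance_eq
    rw [evariance, hmean] at h1
    simp only [ENNReal.rpow_two]
    rw [← h1]
    exact ENNReal.ofReal_le_ofReal hvar
  have hcs : ∫⁻ X, ‖Z X - n * b‖ₑ ∂(sampleMeasure μ n) ≤ ENNReal.ofReal (n * b) ^ (1 / 2 : ℝ) := by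
    have h1 := ENNReal.lintegral_mul_le_Lp_mul_Lq (sampleMeasure μ n)
      (Real.HolderConjugate.two_two) (f := fun X => ‖Z X - n * b‖ₑ) (g := fun _ => 1)
      (by fun_prop) (by fun_prop)
    simp only [ENNReal.one_rpow, lintegral_one, measure_univ, mul_one, Pi.mul_apply] at h1
    refine h1.trans ?_
    gcongr
  have heq : ∀ X, (empiricalMeasure n X B / μ B - 1) + (1 - empiricalMeasure n X B / μ B)
      = (ENNReal.ofReal (n * b))⁻¹ * ‖Z X - n * b‖ₑ := by
    intro X
    have hZ0 : 0 ≤ Z X := by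
      simp only [hZ, Finset.sum_apply]
      exact Finset.sum_nonneg fun k _ => Set.indicator_nonneg (fun _ _ => zero_le_one) _
    have e1 : empiricalMeasure n X B / μ B = ENNReal.ofReal (Z X / (n * b)) := by
      rw [aux_emp_apply n X B hB, hμb, ENNReal.ofReal_div_of_pos (by positivity),
        ENNReal.ofReal_mul hn0.le, ENNReal.ofReal_natCast]
      have : ENNReal.ofReal (Z X) = ∑ k, B.indicator (1 : E → ℝ≥0∞) (X k) := by
        simp only [hZ, Finset.sum_apply]
        have hk : ∀ k ∈ (Finset.univ : Finset (Fin n)), 0 ≤ B.indicator (1 : E → ℝ) (X k) :=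
          fun k _ => Set.indicator_nonneg (fun _ _ => zero_le_one) _
        rw [ENNReal.ofReal_sum_of_nonneg hk]
        congr 1; ext k
        by_cases hx : X k ∈ B <;> simp [hx]
      rw [this, div_eq_mul_inv, div_eq_mul_inv, ENNReal.mul_inv (Or.inr (by simp))
        (Or.inl (by simp))]
      ring
    rw [e1, ← ENNReal.ofReal_one, aux_ofReal_abs _ _ (by positivity) zero_le_one]
    have e2 : Z X / (n * b) - 1 = (n * b)⁻¹ * (Z X - n * b) := by
      field_simp
    rw [e2, enorm_mul, Real.enorm_eq_ofReal (by positivity), ENNReal.ofReal_inv_of_pos (by positivity)]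
  simp only [heq]
  rw [lintegral_const_mul _ (by fun_prop)]
  have hnb : (n : ℝ≥0∞) * μ B = ENNReal.ofReal (n * b) := by
    rw [hμb, ENNReal.ofReal_mul hn0.le, ENNReal.ofReal_natCast]
  rw [hnb]
  refine (mul_le_mul' le_rfl hcs).trans (le_of_eq ?_)
  rw [← ENNReal.rpow_neg_one, ← ENNReal.rpow_add _ _ (ENNReal.ofReal_pos.2 (by positivity)).ne'
    ENNReal.ofReal_ne_top]
  norm_num

theorem aux_dev {E : Type*} [MeasurableSpace E] (μ : Measure E) [IsProbabilityMeasure μ]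
    (n : ℕ) (hn : 0 < n) (B : Set E) (hB : MeasurableSet B) (r : ℝ) (hr : 2 ≤ r) :
    ∫⁻ X, ((empiricalMeasure n X B / μ B - 1) + (1 - empiricalMeasure n X B / μ B))
      ∂(sampleMeasure μ n) ≤ 2 * (n * μ B) ^ (-(1 / r) : ℝ) := by
  have hr0 : 0 < r := by linarith
  by_cases hb : μ B = 0
  · rw [hb, mul_zero, ENNReal.zero_rpow_of_neg (by simpa using hr0), ENNReal.mul_top (by simp)]
    exact le_top
  rcases le_total ((n : ℝ≥0∞) * μ B) 1 with h | h
  · calc _ ≤ ∫⁻ X, (empiricalMeasure n X B / μ B + 1) ∂(sampleMeasure μ n) := by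
          refine lintegral_mono fun X => ?_
          exact add_le_add tsub_le_self tsub_le_self
      _ = 2 := by
          rw [lintegral_add_right _ measurable_const]
          simp only [div_eq_mul_inv]
          rw [lintegral_mul_const _ (aux_emp_meas n B hB)]
          have := aux_emp_exp μ n hn (B.indicator 1) (measurable_one.indicator hB)
          simp only [lintegral_indicator_one hB] at this
          rw [this, ENNReal.mul_inv_cancel hb (measure_ne_top _ _)]
          simp; norm_num
      _ ≤ _ := by
          have : 1 ≤ ((n : ℝ≥0∞) * μ B) ^ (-(1 / r) : ℝ) := by
            rw [ENNReal.rpow_neg, ENNReal.one_le_inv]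
            exact ENNReal.rpow_le_one h (by positivity)
          calc (2 : ℝ≥0∞) = 2 * 1 := by ring
            _ ≤ _ := by gcongr
  · refine (aux_var μ n hn B hB hb).trans ?_
    calc _ ≤ ((n : ℝ≥0∞) * μ B) ^ (-(1 / r) : ℝ) := by
          refine ENNReal.rpow_le_rpow_of_exponent_le h ?_
          have : 1 / r ≤ 1 / 2 := one_div_le_one_div_of_le (by norm_num) hr
          linarith
      _ = 1 * _ := (one_mul _).symm
      _ ≤ _ := by gcongr; norm_num

end Aux

section Aux
open ProbabilityTheory

theorem aux_mink {Ω ι : Type*} [MeasurableSpace Ω] (P : Measure Ω) (p : ℝ) (hp : 1 ≤ p)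
    (s : Finset ι) (a : ι → Ω → ℝ≥0∞) (ha : ∀ i, Measurable (a i)) :
    (∫⁻ X, (∑ i ∈ s, a i X) ^ p ∂P) ^ (1 / p) ≤ ∑ i ∈ s, (∫⁻ X, a i X ^ p ∂P) ^ (1 / p) := by
  classical
  have hp0 : 0 < p := by linarith
  induction s using Finset.induction_on with
  | empty => simp [hp0]
  | insert i s his ih =>
    simp only [Finset.sum_insert his]
    refine (ENNReal.lintegral_Lp_add_le (f := a i) (g := fun X => ∑ i ∈ s, a i X)
      (ha i).aemeasurable (Finset.measurable_fun_sum _ fun i _ => ha i).aemeasurable hp).trans ?_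
    gcongr

theorem aux_Lp_mono {Ω : Type*} [MeasurableSpace Ω] (P : Measure Ω) [IsProbabilityMeasure P]
    (p q : ℝ) (hp : 0 < p) (hpq : p ≤ q) (f : Ω → ℝ≥0∞) (hf : Measurable f) :
    (∫⁻ X, f X ^ p ∂P) ^ (1 / p) ≤ (∫⁻ X, f X ^ q ∂P) ^ (1 / q) := by
  have := eLpNorm'_le_eLpNorm'_of_exponent_le (μ := P) hp hpq hf.aestronglyMeasurable
  simpa [eLpNorm'] using this

theorem aux_count {E : Type*} [MeasurableSpace E] (μ : Measure E) [IsProbabilityMeasure μ]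
    (n : ℕ) (hn : 0 < n) (ℓ : E → ℕ) (hℓ : Measurable ℓ) (N : ℕ) (hN : ∀ x, ℓ x < N) :
    ∫⁻ x, (n * μ (ℓ ⁻¹' {ℓ x}))⁻¹ ∂μ ≤ N / n := by
  rw [aux_cells μ ℓ hℓ]
  have h1 : ∀ s, ∫⁻ x in ℓ ⁻¹' {s}, (n * μ (ℓ ⁻¹' {ℓ x}))⁻¹ ∂μ
      ≤ if s < N then (n : ℝ≥0∞)⁻¹ else 0 := by
    intro s
    have e1 : ∫⁻ x in ℓ ⁻¹' {s}, (n * μ (ℓ ⁻¹' {ℓ x}))⁻¹ ∂μ =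
        ∫⁻ x in ℓ ⁻¹' {s}, (n * μ (ℓ ⁻¹' {s}))⁻¹ ∂μ := by
      refine setLIntegral_congr_fun (hℓ (measurableSet_singleton s)) ?_
      intro x hx
      have : ℓ x = s := hx
      simp only [this]
    rw [e1, setLIntegral_const]
    split_ifs with hs
    · rw [ENNReal.mul_inv (Or.inl (by simpa using hn.ne')) (Or.inl (by simp)), mul_assoc]
      calc _ ≤ (n : ℝ≥0∞)⁻¹ * 1 := by gcongr; exact ENNReal.inv_mul_le_one _
        _ = _ := mul_one _
    · have : ℓ ⁻¹' {s} = ∅ := by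
        ext x
        simp only [Set.mem_preimage, Set.mem_singleton_iff, Set.mem_empty_iff_false, iff_false]
        intro hx
        exact hs (hx ▸ hN x)
      rw [this]; simp
  refine (ENNReal.tsum_le_tsum h1).trans (le_of_eq ?_)
  rw [tsum_eq_sum (s := Finset.range N)]
  · rw [Finset.sum_congr rfl (g := fun _ => (n : ℝ≥0∞)⁻¹)]
    · simp [div_eq_mul_inv]
    · intro s hs; simp [Finset.mem_range.1 hs]
  · intro s hs
    simpa using hs

theorem aux_hdev {E : Type*} [MeasurableSpace E] (μ : Measure E) [IsProbabilityMeasure μ]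
    (n : ℕ) (hn : 0 < n) (B B' : Set E) (hB : MeasurableSet B) (hB' : MeasurableSet B')
    (hBB : B ⊆ B') (r : ℝ) (hr : 2 ≤ r) :
    ∫⁻ X, ((empiricalMeasure n X B / μ B - empiricalMeasure n X B' / μ B')
      + (empiricalMeasure n X B' / μ B' - empiricalMeasure n X B / μ B))
      ∂(sampleMeasure μ n) ≤ 4 * (n * μ B) ^ (-(1 / r) : ℝ) := by
  have hm1 := aux_emp_meas n _ hB
  have hm2 := aux_emp_meas n _ hB'
  have h1 := aux_dev μ n hn B hB r hr
  have h2 := aux_dev μ n hn B' hB' r hr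
  have h3 : (n * μ B') ^ (-(1 / r) : ℝ) ≤ (n * μ B) ^ (-(1 / r) : ℝ) := by
    rw [ENNReal.rpow_neg, ENNReal.rpow_neg, ENNReal.inv_le_inv]
    gcongr
  have h4 : ∫⁻ X, ((empiricalMeasure n X B / μ B - empiricalMeasure n X B' / μ B')
      + (empiricalMeasure n X B' / μ B' - empiricalMeasure n X B / μ B))
      ∂(sampleMeasure μ n) ≤
      ∫⁻ X, (((empiricalMeasure n X B / μ B - 1) + (1 - empiricalMeasure n X B / μ B)) +
        ((empiricalMeasure n X B' / μ B' - 1) + (1 - empiricalMeasure n X B' / μ B')))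
        ∂(sampleMeasure μ n) := by
    refine lintegral_mono fun X => ?_
    have e : ∀ s t : ℝ≥0∞, (s - t) + (t - s) ≤ ((s - 1) + (1 - s)) + ((t - 1) + (1 - t)) := by
      intro s t
      calc _ ≤ ((s - 1) + (1 - t)) + ((t - 1) + (1 - s)) :=
            add_le_add tsub_le_tsub_add_tsub tsub_le_tsub_add_tsub
        _ = _ := by ring
    exact e _ _
  refine h4.trans ?_
  rw [lintegral_add_left]
  · refine (add_le_add h1 (h2.trans (mul_le_mul' le_rfl h3))).trans (le_of_eq ?_)
    rw [← add_mul]; norm_num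
  · exact ((hm1.div_const _).sub measurable_const).add (measurable_const.sub (hm1.div_const _))

set_option maxHeartbeats 1000000 in
theorem aux_main {E : Type*} [MetricSpace E] [TopologicalSpace.SeparableSpace E]
    [MeasurableSpace E] [BorelSpace E] (p q r : ℝ) (hp : 1 ≤ p) (hpq : p < q) (hr : 2 ≤ r)
    (hqr : (q / p).HolderConjugate r)
    (μ : Measure E) [IsProbabilityMeasure μ] (n : ℕ) (hn : 0 < n)
    (ℓ : ℕ → E → ℕ) (hℓ : ∀ i, Measurable (ℓ i)) (c : ℕ → ℕ → E) (τ : ℕ → ℕ → ℕ)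
    (hτ : ∀ i x, ℓ (i + 1) x = τ i (ℓ i x)) (N : ℕ → ℕ) (hN : ∀ i x, ℓ i x < N i)
    (J : ℕ) (hJ : ∀ x y, ℓ J x = ℓ J y) :
    expWpPow p μ n ≤ 2 * (∫⁻ x, edist x (c 0 (ℓ 0 x)) ^ q ∂μ) ^ (1 / q) +
      ∑ i ∈ Finset.range J, 4 * (∫⁻ x, edist x (c (i + 1) (ℓ (i + 1) x)) ^ q ∂μ) ^ (1 / q)
        * ((N i : ℝ≥0∞) / n) ^ (1 / (r * p)) := by
  have hp0 : 0 < p := by linarith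
  have hq0 : 0 < q := by linarith
  have hr0 : 0 < r := by linarith
  have hcm : ∀ i, Measurable (c i) := fun i => measurable_from_nat
  have hdm : ∀ i, Measurable (fun x => edist x (c i (ℓ i x))) := by
    intro i
    have h1 := hℓ i
    have h2 := hcm i
    fun_prop
  set P := sampleMeasure μ n with hP
  set G : ℕ → (Fin n → E) → E → ℝ≥0∞ := fun i X x => auxG μ (empiricalMeasure n X) (ℓ i) x with hG
  have hGj : ∀ i, Measurable (fun z : (Fin n → E) × E => G i z.1 z.2) :=
    fun i => aux_G_joint μ n (ℓ i) (hℓ i)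
  set a0 : (Fin n → E) → ℝ≥0∞ := fun X => 2 ^ (p - 1) *
    (∫⁻ x, edist x (c 0 (ℓ 0 x)) ^ p ∂(empiricalMeasure n X)
          + ∫⁻ x, G 0 X x * edist x (c 0 (ℓ 0 x)) ^ p ∂μ) with ha0
  set a : ℕ → (Fin n → E) → ℝ≥0∞ := fun i X => 2 ^ (p - 1) * ∫⁻ x, ((G i X x - G (i + 1) X x)
          + (G (i + 1) X x - G i X x)) * edist x (c (i + 1) (ℓ (i + 1) x)) ^ p ∂μ with ha
  have hjoint : ∀ i, Measurable (fun z : (Fin n → E) × E => ((G i z.1 z.2 - G (i + 1) z.1 z.2)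
          + (G (i + 1) z.1 z.2 - G i z.1 z.2)) * edist z.2 (c (i + 1) (ℓ (i + 1) z.2)) ^ p) := by
    intro i
    have h1 := hGj i
    have h2 := hGj (i + 1)
    have h3 : Measurable (fun z : (Fin n → E) × E => edist z.2 (c (i + 1) (ℓ (i + 1) z.2)) ^ p) :=
      ((hdm (i + 1)).comp measurable_snd).pow_const p
    exact ((h1.sub h2).add (h2.sub h1)).mul h3
  have hjoint0 : Measurable (fun z : (Fin n → E) × E => G 0 z.1 z.2 *
      edist z.2 (c 0 (ℓ 0 z.2)) ^ p) := by
    have h3 : Measurable (fun z : (Fin n → E) × E => edist z.2 (c 0 (ℓ 0 z.2)) ^ p) :=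
      ((hdm 0).comp measurable_snd).pow_const p
    exact (hGj 0).mul h3
  have ham : ∀ i, Measurable (a i) := by
    intro i
    exact ((hjoint i).lintegral_prod_right').const_mul _
  have hemp_m : Measurable (fun X : Fin n → E =>
      ∫⁻ x, edist x (c 0 (ℓ 0 x)) ^ p ∂(empiricalMeasure n X)) := by
    have h3 : Measurable (fun x => edist x (c 0 (ℓ 0 x)) ^ p) := (hdm 0).pow_const p
    simp only [aux_emp_lint n _ _ h3]
    refine Measurable.const_mul ?_ _
    exact Finset.measurable_fun_sum _ fun k _ => h3.comp (measurable_pi_apply k)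
  have ha0m : Measurable a0 :=
    (hemp_m.add hjoint0.lintegral_prod_right').const_mul _
  -- pointwise bound
  have hpt : ∀ᵐ X ∂P, Wp p (empiricalMeasure n X) μ ≤
      a0 X ^ (1 / p) + ∑ i ∈ Finset.range J, a i X ^ (1 / p) := by
    filter_upwards [aux_good μ n ℓ hℓ] with X hX
    have := aux_emp_prob n hn X
    have h1 := aux_chain p hp μ (empiricalMeasure n X) ℓ hℓ c τ hτ hX J
    have h2 : auxG μ (empiricalMeasure n X) (ℓ J) = 1 := by
      ext x
      have : ℓ J ⁻¹' {ℓ J x} = Set.univ := by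
        ext y; simp [hJ y x]
      simp [auxG, this]
    rw [h2, withDensity_one] at h1
    exact h1
  -- E of start
  have hE0 : ∫⁻ X, a0 X ∂P ≤ 2 ^ p * ∫⁻ x, edist x (c 0 (ℓ 0 x)) ^ p ∂μ := by
    rw [ha0, lintegral_const_mul' _ _ (by finiteness), lintegral_add_left hemp_m,
      aux_emp_exp μ n hn _ ((hdm 0).pow_const p), lintegral_lintegral_swap hjoint0.aemeasurable]
    have : ∫⁻ x, ∫⁻ X, G 0 X x * edist x (c 0 (ℓ 0 x)) ^ p ∂P ∂μ ≤
        ∫⁻ x, edist x (c 0 (ℓ 0 x)) ^ p ∂μ := by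
      refine lintegral_mono fun x => ?_
      have hB := hℓ 0 (measurableSet_singleton (ℓ 0 x))
      have hm := aux_emp_meas n _ hB
      simp only [hG, auxG, div_eq_mul_inv]
      rw [lintegral_mul_const _ (by fun_prop), lintegral_mul_const _ hm]
      have h1 := aux_emp_exp μ n hn ((ℓ 0 ⁻¹' {ℓ 0 x}).indicator 1) (measurable_one.indicator hB)
      simp only [lintegral_indicator_one hB] at h1
      rw [h1]
      calc _ ≤ 1 * edist x (c 0 (ℓ 0 x)) ^ p := by gcongr; exact ENNReal.mul_inv_le_one _
        _ = _ := one_mul _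
    refine (mul_le_mul' le_rfl (add_le_add le_rfl this)).trans (le_of_eq ?_)
    rw [← two_mul, ← mul_assoc]
    congr 1
    conv_lhs => rw [← ENNReal.rpow_one 2, ← ENNReal.rpow_mul]
    rw [← ENNReal.rpow_add _ _ (by simp) (by simp)]
    congr 1; ring
  have hE : ∀ i, ∫⁻ X, a i X ∂P ≤ 2 ^ (p + 1) *
      ((∫⁻ x, edist x (c (i + 1) (ℓ (i + 1) x)) ^ q ∂μ) ^ (1 / (q / p)) *
        ((N i : ℝ≥0∞) / n) ^ (1 / r)) := by
    intro i
    rw [ha, lintegral_const_mul' _ _ (by finiteness), lintegral_lintegral_swap (hjoint i).aemeasurable]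
    have hdev : ∀ x, ∫⁻ X, ((G i X x - G (i + 1) X x) + (G (i + 1) X x - G i X x)) ∂P
        ≤ 4 * (n * μ (ℓ i ⁻¹' {ℓ i x})) ^ (-(1 / r) : ℝ) := by
      intro x
      refine aux_hdev μ n hn _ _ (hℓ i (measurableSet_singleton (ℓ i x)))
        (hℓ (i + 1) (measurableSet_singleton (ℓ (i + 1) x))) ?_ r hr
      intro y hy
      simp only [Set.mem_preimage, Set.mem_singleton_iff] at hy ⊢
      rw [hτ, hτ, hy]
    have hbm : Measurable (fun x => ((n : ℝ≥0∞) * μ (ℓ i ⁻¹' {ℓ i x})) ^ (-(1 / r) : ℝ)) :=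
      (measurable_from_nat (f := fun s => ((n : ℝ≥0∞) * μ (ℓ i ⁻¹' {s})) ^ (-(1 / r) : ℝ))).comp
        (hℓ i)
    calc _ ≤ 2 ^ (p - 1) * ∫⁻ x, 4 * (((fun x => edist x (c (i + 1) (ℓ (i + 1) x)) ^ p) *
          (fun x => ((n : ℝ≥0∞) * μ (ℓ i ⁻¹' {ℓ i x})) ^ (-(1 / r) : ℝ))) x) ∂μ := by
          refine mul_le_mul' le_rfl (lintegral_mono fun x => ?_)
          have hm : ∀ j, Measurable (fun X => G j X x) := by
            intro j
            have hx : Measurable (fun X : Fin n → E => ((X, x) : (Fin n → E) × E)) :=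
              measurable_prodMk_right
            have := (hGj j).comp hx
            exact this
          have hm1 := hm i
          have hm2 := hm (i + 1)
          simp only
          have hm3 : Measurable (fun X => ((G i X x - G (i + 1) X x) + (G (i + 1) X x - G i X x))) :=
            (hm1.sub hm2).add (hm2.sub hm1)
          rw [lintegral_mul_const _ hm3]
          refine (mul_le_mul' (hdev x) le_rfl).trans (le_of_eq ?_)
          simp only [Pi.mul_apply]
          ring
      _ ≤ 2 ^ (p - 1) * (4 * ((∫⁻ x, (edist x (c (i + 1) (ℓ (i + 1) x)) ^ p) ^ (q / p) ∂μ) ^ (1 / (q / p)) *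
          (∫⁻ x, (((n : ℝ≥0∞) * μ (ℓ i ⁻¹' {ℓ i x})) ^ (-(1 / r) : ℝ)) ^ r ∂μ) ^ (1 / r))) := by
          rw [lintegral_const_mul' _ _ (by simp)]
          gcongr
          exact ENNReal.lintegral_mul_le_Lp_mul_Lq μ hqr ((hdm (i + 1)).pow_const p).aemeasurable
            hbm.aemeasurable
      _ ≤ 2 ^ (p - 1) * (4 * ((∫⁻ x, edist x (c (i + 1) (ℓ (i + 1) x)) ^ q ∂μ) ^ (1 / (q / p)) *
          ((N i : ℝ≥0∞) / n) ^ (1 / r))) := by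
          have e1 : ∀ y : ℝ≥0∞, (y ^ p) ^ (q / p) = y ^ q := by
            intro y; rw [← ENNReal.rpow_mul]; congr 1; field_simp
          have e2 : ∀ y : ℝ≥0∞, (y ^ (-(1 / r))) ^ r = y⁻¹ := by
            intro y; rw [← ENNReal.rpow_mul, ← ENNReal.rpow_neg_one]; congr 1; field_simp
          simp only [e1, e2]
          gcongr
          exact aux_count μ n hn (ℓ i) (hℓ i) (N i) (hN i)
      _ = _ := by
          rw [← mul_assoc]
          congr 1
          have : (4 : ℝ≥0∞) = 2 ^ (2 : ℝ) := by norm_num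
          rw [this, ← ENNReal.rpow_add _ _ (by simp) (by simp)]
          congr 1; ring
  -- assemble
  have hpp : ∀ y : ℝ≥0∞, (y ^ (1 / p)) ^ p = y := by
    intro y; rw [← ENNReal.rpow_mul, one_div_mul_cancel hp0.ne', ENNReal.rpow_one]
  have hpp' : ∀ y : ℝ≥0∞, (y ^ p) ^ (1 / p) = y := by
    intro y; rw [← ENNReal.rpow_mul, mul_one_div_cancel hp0.ne', ENNReal.rpow_one]
  have h1p : 0 ≤ 1 / p := by positivity
  calc expWpPow p μ n
      ≤ (∫⁻ X, ((fun X => a0 X ^ (1 / p)) + (fun X => ∑ i ∈ Finset.range J, a i X ^ (1 / p))) X ^ p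
          ∂P) ^ (1 / p) := by
        unfold expWpPow
        refine ENNReal.rpow_le_rpow (lintegral_mono_ae ?_) h1p
        filter_upwards [hpt] with X hX
        exact ENNReal.rpow_le_rpow hX hp0.le
    _ ≤ (∫⁻ X, (a0 X ^ (1 / p)) ^ p ∂P) ^ (1 / p) +
        (∫⁻ X, (∑ i ∈ Finset.range J, a i X ^ (1 / p)) ^ p ∂P) ^ (1 / p) :=
        ENNReal.lintegral_Lp_add_le (ha0m.pow_const _).aemeasurable
          (Finset.measurable_fun_sum _ fun i _ => (ham i).pow_const _).aemeasurable hp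
    _ ≤ (∫⁻ X, (a0 X ^ (1 / p)) ^ p ∂P) ^ (1 / p) +
        ∑ i ∈ Finset.range J, (∫⁻ X, (a i X ^ (1 / p)) ^ p ∂P) ^ (1 / p) := by
        gcongr
        exact aux_mink P p hp _ (fun i X => a i X ^ (1 / p)) (fun i => (ham i).pow_const _)
    _ ≤ _ := by
        simp only [hpp]
        refine add_le_add ?_ (Finset.sum_le_sum fun i _ => ?_)
        · refine (ENNReal.rpow_le_rpow hE0 h1p).trans ?_
          rw [ENNReal.mul_rpow_of_nonneg _ _ h1p, hpp']
          gcongr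
          exact aux_Lp_mono μ p q hp0 hpq.le _ (hdm 0)
        · refine (ENNReal.rpow_le_rpow (hE i) h1p).trans ?_
          rw [ENNReal.mul_rpow_of_nonneg _ _ h1p, ENNReal.mul_rpow_of_nonneg _ _ h1p,
            ← ENNReal.rpow_mul, ← ENNReal.rpow_mul, ← ENNReal.rpow_mul, mul_assoc]
          have e1 : 1 / (q / p) * (1 / p) = 1 / q := by field_simp
          have e2 : 1 / r * (1 / p) = 1 / (r * p) := by field_simp
          rw [e1, e2]
          gcongr
          have : (4 : ℝ≥0∞) = 2 ^ (2 : ℝ) := by norm_num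
          rw [this]
          refine ENNReal.rpow_le_rpow_of_exponent_le (by norm_num) ?_
          rw [mul_one_div, div_le_iff₀ hp0]
          linarith

end Aux

section Aux
open ProbabilityTheory

theorem aux_quant {E : Type*} [MetricSpace E] [TopologicalSpace.SeparableSpace E]
    [MeasurableSpace E] [BorelSpace E] (q : ℝ) (hq : 1 ≤ q)
    (μ : Measure E) (m : ℕ) (t : ℝ≥0∞)
    (h : quantErr q m μ < t) :
    ∃ (e : ℕ → E) (f : E → ℕ), Measurable f ∧ (∀ x, f x < m) ∧
      (∀ x y, edist y (e (f y)) ≤ edist y (e (f x))) ∧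
      (∫⁻ x, edist x (e (f x)) ^ q ∂μ) ^ (1 / q) ≤ t := by
  have hq0 : 0 < q := by linarith
  unfold quantErr at h
  simp only [iInf_lt_iff] at h
  obtain ⟨ν, ⟨hν, S, hS, hνS⟩, h⟩ := h
  unfold Wp at h
  simp only [iInf_lt_iff] at h
  obtain ⟨γ, ⟨h1, h2⟩, h⟩ := h
  have hne : S.Nonempty := by
    rw [Finset.nonempty_iff_ne_empty]
    rintro rfl
    simp at hνS
  obtain ⟨s0, hs0⟩ := hne
  have hc : 0 < S.card := Finset.card_pos.2 ⟨s0, hs0⟩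
  let e : ℕ → E := fun k => if h : k < S.card then (S.equivFin.symm ⟨k, h⟩ : E) else s0
  have he : ∀ s ∈ S, ∃ k < S.card, e k = s := by
    intro s hs
    refine ⟨S.equivFin ⟨s, hs⟩, (S.equivFin ⟨s, hs⟩).2, ?_⟩
    simp [e]
  have hle : ∀ x, SimpleFunc.nearestPtInd e (S.card - 1) x ≤ S.card - 1 :=
    fun x => SimpleFunc.nearestPtInd_le e _ x
  have hnear : ∀ y, ∀ k ≤ S.card - 1,
      edist y (e (SimpleFunc.nearestPtInd e (S.card - 1) y)) ≤ edist y (e k) := by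
    intro y k hk
    have := SimpleFunc.edist_nearestPt_le e y hk
    rw [edist_comm, edist_comm y]
    simpa [SimpleFunc.nearestPt] using this
  refine ⟨e, SimpleFunc.nearestPtInd e (S.card - 1), SimpleFunc.measurable _, ?_, ?_, ?_⟩
  · intro x
    have := hle x
    omega
  · intro x y
    exact hnear y _ (hle x)
  · refine le_trans ?_ h.le
    refine ENNReal.rpow_le_rpow ?_ (by positivity)
    have hem : Measurable e := measurable_from_nat
    have hfm : Measurable (SimpleFunc.nearestPtInd e (S.card - 1)) := SimpleFunc.measurable _
    have hgm : Measurable (fun x => edist x (e (SimpleFunc.nearestPtInd e (S.card - 1) x)) ^ q) := by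
      fun_prop
    rw [← h1, lintegral_map hgm measurable_fst]
    refine lintegral_mono_ae ?_
    have hae : ∀ᵐ z ∂γ, z.2 ∈ (S : Set E) := by
      have : ∀ᵐ z ∂ν, z ∈ (S : Set E) := by
        rw [ae_iff]; exact hνS
      rw [← h2] at this
      exact ae_of_ae_map measurable_snd.aemeasurable this
    filter_upwards [hae] with z hz
    obtain ⟨k, hk, hks⟩ := he z.2 hz
    rw [← hks]
    exact ENNReal.rpow_le_rpow (hnear _ k (by omega)) hq0.le

theorem aux_moment {E : Type*} [MetricSpace E] [TopologicalSpace.SeparableSpace E]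
    [MeasurableSpace E] [BorelSpace E] (q : ℝ) (hq : 1 ≤ q)
    (μ : Measure E) [IsProbabilityMeasure μ] (m : ℕ) (x0 : E)
    (h : quantErr q m μ < ⊤) :
    (∫⁻ x, edist x x0 ^ q ∂μ) ^ (1 / q) ≠ ⊤ := by
  have hq0 : 0 < q := by linarith
  obtain ⟨t, ht, ht'⟩ := exists_between h
  obtain ⟨e, f, hf, hfm, -, hfq⟩ := aux_quant q hq μ m t ht
  have hem : Measurable e := measurable_from_nat
  have hR : (∑ k ∈ Finset.range m, edist (e k) x0) ≠ ⊤ :=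
    ENNReal.sum_ne_top.2 fun k _ => edist_ne_top _ _
  refine ne_top_of_le_ne_top (b := t + ∑ k ∈ Finset.range m, edist (e k) x0)
    (ENNReal.add_ne_top.2 ⟨ht'.ne, hR⟩) ?_
  calc _ ≤ (∫⁻ x, ((fun x : E => edist x (e (f x))) +
        (fun _ : E => ∑ k ∈ Finset.range m, edist (e k) x0)) x ^ q ∂μ) ^ (1 / q) := by
        gcongr with x
        refine (edist_triangle x (e (f x)) x0).trans ?_
        refine add_le_add le_rfl ?_
        exact Finset.single_le_sum (f := fun k => edist (e k) x0) (fun _ _ => zero_le) (Finset.mem_range.2 (hfm x))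
    _ ≤ _ := ENNReal.lintegral_Lp_add_le (by fun_prop) (by fun_prop) hq
    _ ≤ _ := by
        refine add_le_add hfq ?_
        rw [lintegral_const, measure_univ, mul_one, ← ENNReal.rpow_mul, mul_one_div_cancel hq0.ne',
          ENNReal.rpow_one]

theorem aux_multi {E : Type*} [MetricSpace E] [TopologicalSpace.SeparableSpace E]
    [MeasurableSpace E] [BorelSpace E] (p q r : ℝ) (hp : 1 ≤ p) (hpq : p < q) (hr : 2 ≤ r)
    (hqr : (q / p).HolderConjugate r)
    (μ : Measure E) [IsProbabilityMeasure μ] (n : ℕ) (hn : 0 < n) (x0 : E)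
    (m : ℕ → ℕ) (A D : ℕ → ℝ≥0∞) (I : ℕ)
    (hA : ∀ i, quantErr q (m i) μ < A i)
    (hD0 : A 0 ≤ D 0) (hD : ∀ i, 2 * D i + A (i + 1) ≤ D (i + 1)) :
    expWpPow p μ n ≤ 2 * D 0 +
      (∑ i ∈ Finset.range I, 4 * D (i + 1) * ((m i : ℝ≥0∞) / n) ^ (1 / (r * p))
      + 4 * (∫⁻ x, edist x x0 ^ q ∂μ) ^ (1 / q) * ((m I : ℝ≥0∞) / n) ^ (1 / (r * p))) := by
  have hq : 1 ≤ q := by linarith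
  have hq0 : 0 < q := by linarith
  choose e f hf hfm hnear hfq using fun i => aux_quant q hq μ (m i) (A i) (hA i)
  let τ : ℕ → ℕ → ℕ := fun i s => if i + 1 ≤ I then f (i + 1) (e i s) else 0
  let ℓ : ℕ → E → ℕ := fun i => Nat.rec (f 0) (fun i g x => τ i (g x)) i
  let c : ℕ → ℕ → E := fun i s => if i ≤ I then e i s else x0
  have hℓs : ∀ i x, ℓ (i + 1) x = τ i (ℓ i x) := fun i x => rfl
  have hℓ : ∀ i, Measurable (ℓ i) := by
    intro i
    induction i with
    | zero => exact hf 0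
    | succ i ih => exact (measurable_from_nat (f := τ i)).comp ih
  have hN : ∀ i x, ℓ i x < m i := by
    intro i x
    cases i with
    | zero => exact hfm 0 x
    | succ i =>
      rw [hℓs]
      simp only [τ]
      split_ifs
      · exact hfm _ _
      · exact (Nat.zero_le _).trans_lt (hfm (i + 1) x)
  have hJ : ∀ x y, ℓ (I + 1) x = ℓ (I + 1) y := by
    intro x y
    rw [hℓs, hℓs]; simp [τ]
  have hem : ∀ i, Measurable (e i) := fun i => measurable_from_nat
  have hbound : ∀ i ≤ I, (∫⁻ x, edist x (c i (ℓ i x)) ^ q ∂μ) ^ (1 / q) ≤ D i := by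
    intro i
    induction i with
    | zero =>
      intro _
      have : ∀ x, c 0 (ℓ 0 x) = e 0 (f 0 x) := by intro x; simp [c, ℓ]
      simp only [this]
      exact (hfq 0).trans hD0
    | succ i ih =>
      intro hi
      have ih := ih (by omega)
      have h1 : ∀ x, c i (ℓ i x) = e i (ℓ i x) := by
        intro x; simp only [c]; rw [if_pos (by omega)]
      have h2 : ∀ x, c (i + 1) (ℓ (i + 1) x) = e (i + 1) (f (i + 1) (e i (ℓ i x))) := by
        intro x; simp only [c, hℓs, τ]; rw [if_pos hi, if_pos hi]
      simp only [h1] at ih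
      simp only [h2]
      have hmi := hℓ i
      have hei := hem i
      have hei' := hem (i + 1)
      have hfi := hf (i + 1)
      refine le_trans ?_ (hD i)
      calc _ ≤ (∫⁻ x, ((fun x => 2 * edist x (e i (ℓ i x))) +
            (fun x => edist x (e (i + 1) (f (i + 1) x)))) x ^ q ∂μ) ^ (1 / q) := by
            gcongr with x
            set y := e i (ℓ i x)
            calc _ ≤ edist x y + edist y (e (i + 1) (f (i + 1) y)) := edist_triangle _ _ _
              _ ≤ edist x y + edist y (e (i + 1) (f (i + 1) x)) := by
                  gcongr; exact hnear _ _ _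
              _ ≤ edist x y + (edist y x + edist x (e (i + 1) (f (i + 1) x))) := by
                  gcongr; exact edist_triangle _ _ _
              _ = _ := by
                  rw [edist_comm y x, ← add_assoc, ← two_mul]; rfl
        _ ≤ _ := ENNReal.lintegral_Lp_add_le (by fun_prop) (by fun_prop) hq
        _ ≤ _ := by
            refine add_le_add ?_ (hfq _)
            simp only [ENNReal.mul_rpow_of_nonneg _ _ hq0.le]
            rw [lintegral_const_mul' _ _ (by finiteness),
              ENNReal.mul_rpow_of_nonneg _ _ (by positivity), ← ENNReal.rpow_mul,
              mul_one_div_cancel hq0.ne', ENNReal.rpow_one]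
            gcongr
  have := aux_main p q r hp hpq hr hqr μ n hn ℓ hℓ c τ hℓs m hN (I + 1) hJ
  refine this.trans ?_
  rw [Finset.sum_range_succ]
  refine add_le_add (mul_le_mul' le_rfl (hbound 0 (by omega))) (add_le_add ?_ ?_)
  · refine Finset.sum_le_sum fun i hi => ?_
    have := hbound (i + 1) (by have := Finset.mem_range.1 hi; omega)
    gcongr
  · have : ∀ x, c (I + 1) (ℓ (I + 1) x) = x0 := by intro x; simp [c]
    simp only [this]
    exact le_rfl

end Aux

section Aux
open ProbabilityTheory

theorem aux_frac (a n : ℕ) (hn : 0 < n) (s w : ℝ) (hs : 0 ≤ s) (h : ((a : ℝ) / n) ^ s ≤ w) :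
    ((a : ℝ≥0∞) / n) ^ s ≤ ENNReal.ofReal w := by
  have h1 : ((a : ℝ≥0∞) / n) = ENNReal.ofReal ((a : ℝ) / n) := by
    rw [ENNReal.ofReal_div_of_pos (by exact_mod_cast hn)]
    simp
  rw [h1, ENNReal.ofReal_rpow_of_nonneg (by positivity) hs]
  exact ENNReal.ofReal_le_ofReal h

theorem aux_geom (θ : ℝ) (h0 : 0 ≤ θ) (h1 : θ < 1) (I : ℕ) :
    ∑ i ∈ Finset.range I, θ ^ i ≤ (1 - θ)⁻¹ := by
  rw [← tsum_geometric_of_lt_one h0 h1]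
  exact (summable_geometric_of_lt_one h0 h1).sum_le_tsum _ (fun i _ => by positivity)

theorem aux_asym {E : Type*} [MetricSpace E] [TopologicalSpace.SeparableSpace E]
    [MeasurableSpace E] [BorelSpace E] (p q r : ℝ) (hp : 1 ≤ p) (hpq : p < q) (hr : 2 ≤ r)
    (hqr : (q / p).HolderConjugate r)
    (μ : Measure E) [IsProbabilityMeasure μ] (x0 : E)
    (β δ Λ b : ℝ) (hβ : 0 < β) (hδ : 0 < δ) (hs : 1 / (r * p) = β + δ) (hs1 : β + δ ≤ 1)
    (hΛ : 0 < Λ) (hb : b = 4 ^ (1 / β)) (N0 : ℕ) (hN0 : 1 ≤ N0)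
    (hquant : ∀ k ≥ N0, ENNReal.ofReal ((k : ℝ) ^ β) * quantErr q k μ < ENNReal.ofReal Λ)
    (n : ℕ) (hn : N0 ≤ n) :
    ENNReal.ofReal ((n : ℝ) ^ β) * expWpPow p μ n ≤
      ENNReal.ofReal (Λ * (4 + 64 * (1 + β / δ))) + 4 * (∫⁻ x, edist x x0 ^ q ∂μ) ^ (1 / q) *
        ENNReal.ofReal ((2 * N0 * b) ^ (β + δ) * (n : ℝ) ^ (-δ)) := by
  have hn0 : 0 < n := by omega
  have hnR : (0 : ℝ) < n := by exact_mod_cast hn0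
  have hN0R : (1 : ℝ) ≤ N0 := by exact_mod_cast hN0
  have hb1 : 1 < b := by
    rw [hb]; exact Real.one_lt_rpow (by norm_num) (by positivity)
  have hb0 : 0 < b := by linarith
  have hbβ : b ^ β = 4 := by
    rw [hb, ← Real.rpow_mul (by norm_num), one_div_mul_cancel hβ.ne', Real.rpow_one]
  set u := δ / β with hu
  have hu0 : 0 < u := by positivity
  have hbδ : 1 + u ≤ b ^ δ := by
    have h1 : b ^ δ = 4 ^ u := by
      rw [hb, ← Real.rpow_mul (by norm_num)]
      congr 1; rw [hu]; ring
    have h2 : (1 : ℝ) ≤ Real.log 4 := by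
      have : (4 : ℝ) = 2 ^ 2 := by norm_num
      rw [this, Real.log_pow]
      have := Real.log_two_gt_d9
      push_cast; linarith
    rw [h1, Real.rpow_def_of_pos (by norm_num)]
    have := Real.add_one_le_exp (Real.log 4 * u)
    nlinarith
  obtain ⟨I, hI1, hI2⟩ := exists_nat_pow_near (x := (n : ℝ) / N0) (y := b)
    (by rw [le_div_iff₀ (by linarith)]; simpa using (by exact_mod_cast hn : (N0 : ℝ) ≤ n)) hb1
  set y : ℕ → ℝ := fun i => n / b ^ (min i I) with hy
  have hyN : ∀ i, (N0 : ℝ) ≤ y i := by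
    intro i
    have h1 : b ^ (min i I) ≤ b ^ I := pow_le_pow_right₀ hb1.le (min_le_right _ _)
    have h2 : b ^ (min i I) ≤ n / N0 := h1.trans hI1
    have h3 : 0 < b ^ (min i I) := by positivity
    rw [le_div_iff₀ (by linarith)] at h2
    simp only [hy]
    rw [le_div_iff₀ h3]; linarith
  set m : ℕ → ℕ := fun i => ⌈y i⌉₊ with hm
  have hm1 : ∀ i, y i ≤ m i := fun i => Nat.le_ceil _
  have hm2 : ∀ i, (m i : ℝ) ≤ 2 * y i := by
    intro i
    have := hyN i
    have := (Nat.ceil_lt_add_one (a := y i) (by linarith)).le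
    simp only [hm]; linarith
  have hmN : ∀ i, N0 ≤ m i := by
    intro i
    exact_mod_cast (hyN i).trans (hm1 i)
  have hnβ : (0 : ℝ) < (n : ℝ) ^ β := by positivity
  have hnβ' : (n : ℝ) ^ β * (n : ℝ) ^ (-β) = 1 := by
    rw [← Real.rpow_add hnR]; simp
  have hbpow : ∀ i : ℕ, (b ^ i) ^ β = 4 ^ i := by
    intro i
    rw [← Real.rpow_pow_comm hb0.le, hbβ]
  set A : ℕ → ℝ≥0∞ := fun i => ENNReal.ofReal (Λ * (n : ℝ) ^ (-β) * 4 ^ i) with hAdef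
  set D : ℕ → ℝ≥0∞ := fun i => ENNReal.ofReal (2 * (Λ * (n : ℝ) ^ (-β) * 4 ^ i)) with hDdef
  have hA : ∀ i, quantErr q (m i) μ < A i := by
    intro i
    by_contra hcon
    rw [not_lt] at hcon
    have h1 := hquant (m i) (hmN i)
    have h2 : ENNReal.ofReal ((m i : ℝ) ^ β) * A i < ENNReal.ofReal Λ :=
      (mul_le_mul' le_rfl hcon).trans_lt h1
    rw [hAdef, ← ENNReal.ofReal_mul (by positivity), ENNReal.ofReal_lt_ofReal_iff hΛ] at h2
    have h3 : (n : ℝ) ^ β / 4 ^ (min i I) ≤ (m i : ℝ) ^ β := by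
      rw [← hbpow, ← Real.div_rpow hnR.le (by positivity)]
      exact Real.rpow_le_rpow (by positivity) (hm1 i) hβ.le
    have h4 : (4 : ℝ) ^ (min i I) ≤ 4 ^ i := pow_le_pow_right₀ (by norm_num) (min_le_left _ _)
    have h5 : (n : ℝ) ^ β ≤ (m i : ℝ) ^ β * 4 ^ i := by
      rw [div_le_iff₀ (by positivity)] at h3
      refine h3.trans ?_
      gcongr
    have h6 : Λ ≤ (m i : ℝ) ^ β * (Λ * (n : ℝ) ^ (-β) * 4 ^ i) := by
      calc Λ = Λ * ((n : ℝ) ^ β * (n : ℝ) ^ (-β)) := by rw [hnβ', mul_one]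
        _ ≤ Λ * (((m i : ℝ) ^ β * 4 ^ i) * (n : ℝ) ^ (-β)) := by gcongr
        _ = _ := by ring
    linarith
  have hD0 : A 0 ≤ D 0 := by
    refine ENNReal.ofReal_le_ofReal ?_
    have : 0 ≤ Λ * (n : ℝ) ^ (-β) * 4 ^ 0 := by positivity
    linarith
  have hD : ∀ i, 2 * D i + A (i + 1) ≤ D (i + 1) := by
    intro i
    have : (2 : ℝ≥0∞) = ENNReal.ofReal 2 := by simp
    simp only [hDdef, hAdef]
    rw [this, ← ENNReal.ofReal_mul (by norm_num), ← ENNReal.ofReal_add (by positivity) (by positivity)]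
    refine ENNReal.ofReal_le_ofReal (le_of_eq ?_)
    ring
  have key := aux_multi p q r hp hpq hr hqr μ n hn0 x0 m A D I hA hD0 hD
  rw [hs] at key
  have hs0 : 0 ≤ β + δ := by positivity
  have hmn : ∀ i ≤ I, (m i : ℝ) / n ≤ 2 / b ^ i := by
    intro i hi
    rw [div_le_iff₀ hnR]
    refine (hm2 i).trans (le_of_eq ?_)
    simp only [hy, min_eq_left hi]
    ring
  have hw : ∀ i ≤ I, ((m i : ℝ≥0∞) / n) ^ (β + δ) ≤
      ENNReal.ofReal (2 * ((4 ^ i)⁻¹ * ((1 + u)⁻¹) ^ i)) := by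
    intro i hi
    refine aux_frac _ _ hn0 _ _ hs0 ?_
    calc ((m i : ℝ) / n) ^ (β + δ) ≤ (2 / b ^ i) ^ (β + δ) :=
          Real.rpow_le_rpow (by positivity) (hmn i hi) hs0
      _ = 2 ^ (β + δ) / (4 ^ i * (b ^ δ) ^ i) := by
          rw [Real.div_rpow (by norm_num) (by positivity), Real.rpow_add (by positivity : 0 < b ^ i), hbpow,
            ← Real.rpow_pow_comm hb0.le]
      _ ≤ 2 / (4 ^ i * (1 + u) ^ i) := by
          gcongr
          calc (2 : ℝ) ^ (β + δ) ≤ 2 ^ (1 : ℝ) :=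
                Real.rpow_le_rpow_of_exponent_le (by norm_num) hs1
            _ = 2 := by norm_num
      _ = _ := by rw [div_eq_mul_inv, mul_inv, inv_pow]
  have hwI : ((m I : ℝ≥0∞) / n) ^ (β + δ) ≤
      ENNReal.ofReal ((2 * N0 * b / n) ^ (β + δ)) := by
    refine aux_frac _ _ hn0 _ _ hs0 ?_
    refine Real.rpow_le_rpow (by positivity) ((hmn I le_rfl).trans ?_) hs0
    rw [div_le_div_iff₀ (by positivity) hnR]
    rw [div_lt_iff₀ (by linarith), pow_succ] at hI2
    nlinarith
  calc ENNReal.ofReal ((n : ℝ) ^ β) * expWpPow p μ n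
      ≤ ENNReal.ofReal ((n : ℝ) ^ β) * (2 * D 0 +
      (∑ i ∈ Finset.range I, 4 * D (i + 1) * ENNReal.ofReal (2 * ((4 ^ i)⁻¹ * ((1 + u)⁻¹) ^ i))
      + 4 * (∫⁻ x, edist x x0 ^ q ∂μ) ^ (1 / q) *
        ENNReal.ofReal ((2 * N0 * b / n) ^ (β + δ)))) := by
        refine mul_le_mul' le_rfl (key.trans ?_)
        gcongr with i hi
        exact hw i (Finset.mem_range.1 hi).le
    _ = ENNReal.ofReal ((n : ℝ) ^ β) * (2 * D 0) +
      (∑ i ∈ Finset.range I, ENNReal.ofReal ((n : ℝ) ^ β) * (4 * D (i + 1) *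
          ENNReal.ofReal (2 * ((4 ^ i)⁻¹ * ((1 + u)⁻¹) ^ i))))
      + 4 * (∫⁻ x, edist x x0 ^ q ∂μ) ^ (1 / q) * (ENNReal.ofReal ((n : ℝ) ^ β) *
        ENNReal.ofReal ((2 * N0 * b / n) ^ (β + δ))) := by
        rw [mul_add, mul_add, Finset.mul_sum]; ring
    _ ≤ _ := by
        refine add_le_add ?_ (mul_le_mul' le_rfl (le_of_eq ?_))
        · have e2 : (2 : ℝ≥0∞) = ENNReal.ofReal 2 := by simp
          have e4 : (4 : ℝ≥0∞) = ENNReal.ofReal 4 := by simp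
          have t0 : ENNReal.ofReal ((n : ℝ) ^ β) * (2 * D 0) = ENNReal.ofReal (4 * Λ) := by
            rw [e2, hDdef, ← ENNReal.ofReal_mul (by norm_num), ← ENNReal.ofReal_mul (by positivity)]
            congr 1
            linear_combination (4 * Λ) * hnβ'
          have ti : ∀ i, ENNReal.ofReal ((n : ℝ) ^ β) * (4 * D (i + 1) *
              ENNReal.ofReal (2 * ((4 ^ i)⁻¹ * ((1 + u)⁻¹) ^ i))) =
              ENNReal.ofReal (64 * Λ * ((1 + u)⁻¹) ^ i) := by
            intro i
            simp only [hDdef]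
            rw [e4, ← ENNReal.ofReal_mul (by norm_num), ← ENNReal.ofReal_mul (by positivity),
              ← ENNReal.ofReal_mul (by positivity)]
            congr 1
            have h4 : (4 : ℝ) ^ i * (4 ^ i)⁻¹ = 1 := mul_inv_cancel₀ (by positivity)
            calc _ = 64 * Λ * ((1 + u)⁻¹) ^ i * ((n : ℝ) ^ β * (n : ℝ) ^ (-β)) *
                  ((4 : ℝ) ^ i * (4 ^ i)⁻¹) := by rw [pow_succ]; ring
              _ = _ := by rw [hnβ', h4]; ring
          simp only [t0, ti]
          rw [← ENNReal.ofReal_sum_of_nonneg (fun i _ => by positivity),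
            ← ENNReal.ofReal_add (by positivity) (Finset.sum_nonneg fun i _ => by positivity)]
          refine ENNReal.ofReal_le_ofReal ?_
          rw [← Finset.mul_sum]
          have hg := aux_geom (1 + u)⁻¹ (by positivity) (inv_lt_one_of_one_lt₀ (by linarith)) I
          have hg2 : (1 - (1 + u)⁻¹)⁻¹ = 1 + β / δ := by
            have : 1 - (1 + u)⁻¹ = u / (1 + u) := by field_simp; ring
            rw [this, inv_div, hu]; field_simp; ring
          rw [hg2] at hg
          have := mul_le_mul_of_nonneg_left hg (by positivity : 0 ≤ 64 * Λ)
          linarith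
        · rw [← ENNReal.ofReal_mul hnβ.le]
          congr 1
          rw [Real.div_rpow (by positivity) hnR.le, Real.rpow_neg hnR.le, Real.rpow_add hnR]
          field_simp

theorem aux_asym0 {E : Type*} [MetricSpace E] [TopologicalSpace.SeparableSpace E]
    [MeasurableSpace E] [BorelSpace E] (p q r : ℝ) (hp : 1 ≤ p) (hpq : p < q) (hr : 2 ≤ r)
    (hqr : (q / p).HolderConjugate r)
    (μ : Measure E) [IsProbabilityMeasure μ] (x0 : E)
    (δ Λ : ℝ) (hδ : 0 < δ) (hs : 1 / (r * p) = δ)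
    (hΛ : 0 < Λ) (N0 : ℕ)
    (hquant : quantErr q N0 μ < ENNReal.ofReal Λ)
    (n : ℕ) (hn : 0 < n) :
    expWpPow p μ n ≤
      ENNReal.ofReal (Λ * 2) + 4 * (∫⁻ x, edist x x0 ^ q ∂μ) ^ (1 / q) *
        ENNReal.ofReal ((N0 : ℝ) ^ δ * (n : ℝ) ^ (-δ)) := by
  have key := aux_multi p q r hp hpq hr hqr μ n hn x0 (fun _ => N0) (fun _ => ENNReal.ofReal Λ)
    (fun i => ENNReal.ofReal (Λ * 4 ^ i)) 0 (fun _ => hquant) (by simp) (by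
      intro i
      have : (2 : ℝ≥0∞) = ENNReal.ofReal 2 := by simp
      rw [this, ← ENNReal.ofReal_mul (by norm_num), ← ENNReal.ofReal_add (by positivity) (by positivity)]
      refine ENNReal.ofReal_le_ofReal ?_
      have : (1 : ℝ) ≤ 4 ^ i := one_le_pow₀ (by norm_num)
      rw [pow_succ]
      nlinarith)
  rw [hs] at key
  refine key.trans ?_
  simp only [Finset.range_zero, Finset.sum_empty, zero_add, pow_zero, mul_one]
  refine add_le_add (le_of_eq ?_) (mul_le_mul' le_rfl ?_)
  · rw [ENNReal.ofReal_mul hΛ.le, mul_comm]; simp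
  · refine aux_frac _ _ hn _ _ hδ.le (le_of_eq ?_)
    rw [Real.div_rpow (by positivity) (by positivity), Real.rpow_neg (by positivity)]
    rfl

theorem aux_limsup (u : ℕ → ℝ≥0∞) (a M : ℝ≥0∞) (hM : M ≠ ⊤) (B δ : ℝ) (hδ : 0 < δ) (N0 : ℕ)
    (h : ∀ n ≥ N0, u n ≤ a + M * ENNReal.ofReal (B * (n : ℝ) ^ (-δ))) :
    Filter.limsup u Filter.atTop ≤ a := by
  have ht : Filter.Tendsto (fun n : ℕ => a + M * ENNReal.ofReal (B * (n : ℝ) ^ (-δ)))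
      Filter.atTop (nhds (a + M * ENNReal.ofReal (B * 0))) := by
    refine Filter.Tendsto.const_add _ (ENNReal.Tendsto.const_mul ?_ (Or.inr hM))
    refine ENNReal.tendsto_ofReal (Filter.Tendsto.const_mul _ ?_)
    exact (tendsto_rpow_neg_atTop hδ).comp tendsto_natCast_atTop_atTop
  have h2 := Filter.limsup_le_limsup (f := Filter.atTop) (Filter.eventually_atTop.2 ⟨N0, h⟩)
  refine h2.trans ?_
  rw [ht.limsup_eq]
  simp

end Aux

section Aux
open ProbabilityTheory

theorem aux_params (p β ε q : ℝ) (hp : 1 ≤ p) (hβ0 : 0 ≤ β) (hβ : β < 1 / (2 * p))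
    (hε0 : 0 < ε) (hε : ε < (p ^ 2 / 2) * (1 / (2 * p) - β))
    (hqdef : q = 1 / (1 / (p + ε) - β)) :
    ∃ r δ : ℝ, p < q ∧ 2 ≤ r ∧ (q / p).HolderConjugate r ∧ 0 < δ ∧ 1 / (r * p) = β + δ ∧
      β + δ ≤ 1 ∧ 4 + 64 * (1 + β / δ) ≤ 100 * p ^ 2 / ((1 / (2 * p) - β) * ε) := by
  have hp0 : 0 < p := by linarith
  set η := 1 / (2 * p) - β with hη
  have hη0 : 0 < η := by linarith
  have hη1 : η ≤ 1 / (2 * p) := by linarith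
  have h2p : 1 / (2 * p) * p = 1 / 2 := by field_simp
  have hεp : ε < p / 4 := by
    have : (p ^ 2 / 2) * η ≤ (p ^ 2 / 2) * (1 / (2 * p)) := by gcongr
    have h3 : (p ^ 2 / 2) * (1 / (2 * p)) = p / 4 := by field_simp; norm_num
    linarith
  have hpe : 0 < p + ε := by linarith
  have h1 : 1 / (2 * p) < 1 / (p + ε) := one_div_lt_one_div_of_lt hpe (by linarith)
  have hqi : 0 < 1 / (p + ε) - β := by linarith
  have hpq : p < q := by
    rw [hqdef, lt_div_iff₀ hqi]
    have : 1 / (p + ε) < 1 / p := one_div_lt_one_div_of_lt hp0 (by linarith)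
    have h3 : p * (1 / p) = 1 := by field_simp
    nlinarith
  have hq0 : 0 < q := by linarith
  have hqinv : 1 / q = 1 / (p + ε) - β := by rw [hqdef, one_div_one_div]
  set δ := 1 / p - 1 / (p + ε) with hδ
  have hδe : δ = ε / (p * (p + ε)) := by rw [hδ]; field_simp; ring
  have hδ0 : 0 < δ := by rw [hδe]; positivity
  have hδη : δ < η / 2 := by
    rw [hδe, div_lt_iff₀ (by positivity)]
    have : 0 < η * p * ε := by positivity
    nlinarith
  have hconj : (q / p).HolderConjugate (q / p).conjExponent :=
    Real.HolderConjugate.conjExponent (by rw [lt_div_iff₀ hp0]; linarith)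
  set r := (q / p).conjExponent with hr
  have hr0 : 0 < r := hconj.symm.pos
  have hrinv : 1 / r = p * (β + δ) := by
    have := hconj.inv_add_inv_eq_one
    rw [inv_div] at this
    have h4 : p / q = p * (1 / (p + ε) - β) := by rw [← hqinv]; ring
    have h5 : p * (1 / p) = 1 := by field_simp
    rw [one_div, hδ]
    linarith
  have hsum : β + δ ≤ 1 / (2 * p) := by linarith
  refine ⟨r, δ, hpq, ?_, hconj, hδ0, ?_, ?_, ?_⟩
  · have : 1 / r ≤ 1 / 2 := by rw [hrinv]; nlinarith
    exact (one_div_le_one_div hr0 (by norm_num)).1 this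
  · rw [← div_div, hrinv]; field_simp
  · have : 1 / (2 * p) ≤ 1 := by rw [div_le_one (by positivity)]; linarith
    linarith
  · have h6 : β / δ ≤ 5 / 8 * (p / ε) := by
      have e : β / δ = β * (p * (p + ε)) / ε := by rw [hδe]; field_simp
      rw [e, mul_div_assoc']
      refine div_le_div_of_nonneg_right ?_ hε0.le
      have : β * p ≤ 1 / 2 := by nlinarith
      nlinarith
    have h7 : 200 * (p / ε) ≤ 100 * p ^ 2 / (η * ε) := by
      rw [mul_div_assoc', div_le_div_iff₀ hε0 (by positivity)]
      have : η * p ≤ 1 / 2 := by nlinarith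
      have : 200 * p * η ≤ 100 * p ^ 2 := by nlinarith
      nlinarith
    have h8 : 4 ≤ p / ε := by rw [le_div_iff₀ hε0]; linarith
    linarith

theorem aux_final {E : Type*} [MetricSpace E] [TopologicalSpace.SeparableSpace E]
    [MeasurableSpace E] [BorelSpace E]
    (p : ℝ) (hp : 1 ≤ p)
    (μ : Measure E) [IsProbabilityMeasure μ]
    (β ε q : ℝ) (hβ0 : 0 ≤ β) (hβ : β < 1 / (2 * p))
    (hε0 : 0 < ε) (hε : ε < (p ^ 2 / 2) * (1 / (2 * p) - β))
    (hqdef : q = 1 / (1 / (p + ε) - β)) :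
    Filter.limsup (fun n : ℕ => ENNReal.ofReal ((n : ℝ) ^ β) * expWpPow p μ n)
        Filter.atTop
      ≤ ENNReal.ofReal (100 * p ^ 2 / ((1 / (2 * p) - β) * ε)) *
          Filter.limsup (fun n : ℕ => ENNReal.ofReal ((n : ℝ) ^ β) * quantErr q n μ)
            Filter.atTop := by
  obtain ⟨r, δ, hpq, hr, hconj, hδ, hs, hs1, hC⟩ :=
    aux_params p β ε q hp hβ0 hβ hε0 hε hqdef
  obtain ⟨x0⟩ : Nonempty E := nonempty_of_isProbabilityMeasure μ
  set C := 100 * p ^ 2 / ((1 / (2 * p) - β) * ε) with hCdef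
  have hβδ : 0 ≤ β / δ := by positivity
  have hC0 : 0 < C := by linarith
  have hCne : ENNReal.ofReal C ≠ 0 := by simpa using hC0
  rw [mul_comm, ← ENNReal.div_le_iff hCne ENNReal.ofReal_ne_top]
  refine le_of_forall_gt_imp_ge_of_dense fun a ha => ?_
  rcases eq_or_ne a ⊤ with rfl | hat
  · exact le_top
  rw [ENNReal.div_le_iff hCne ENNReal.ofReal_ne_top]
  set Λ := a.toReal with hΛdef
  have haΛ : a = ENNReal.ofReal Λ := (ENNReal.ofReal_toReal hat).symm
  have hΛ : 0 < Λ := ENNReal.toReal_pos (zero_le.trans_lt ha).ne' hat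
  have hev := Filter.eventually_lt_of_limsup_lt ha
  obtain ⟨N1, hN1⟩ := Filter.eventually_atTop.1 hev
  set N0 := max N1 1 with hN0
  have hquant : ∀ k ≥ N0, ENNReal.ofReal ((k : ℝ) ^ β) * quantErr q k μ < ENNReal.ofReal Λ := by
    intro k hk
    rw [← haΛ]
    exact hN1 k ((le_max_left _ _).trans hk)
  have hN01 : 1 ≤ N0 := le_max_right _ _
  have hq1 : 1 ≤ q := by linarith
  have hM : 4 * (∫⁻ x, edist x x0 ^ q ∂μ) ^ (1 / q) ≠ ⊤ := by
    refine ENNReal.mul_ne_top (by simp) (aux_moment q hq1 μ N0 x0 ?_)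
    rw [lt_top_iff_ne_top]
    intro htop
    have := hquant N0 le_rfl
    have hpos : (0 : ℝ) < N0 := by exact_mod_cast hN01
    rw [htop, ENNReal.mul_top (by simpa using Real.rpow_pos_of_pos hpos β)] at this
    exact not_top_lt this
  have hle : ∀ c ≤ C, ENNReal.ofReal (Λ * c) ≤ a * ENNReal.ofReal C := by
    intro c hc
    rw [haΛ, ← ENNReal.ofReal_mul hΛ.le]
    exact ENNReal.ofReal_le_ofReal (by gcongr)
  rcases hβ0.eq_or_lt with rfl | hβpos
  · refine le_trans ?_ (hle 2 (by linarith))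
    refine aux_limsup _ _ _ hM ((N0 : ℝ) ^ δ) δ hδ N0 ?_
    intro n hn
    have h1 := hquant N0 le_rfl
    simp only [Real.rpow_zero, ENNReal.ofReal_one, one_mul] at h1 ⊢
    exact aux_asym0 p q r hp hpq hr hconj μ x0 δ Λ hδ (by rw [hs, zero_add]) hΛ N0 h1 n (by omega)
  · refine le_trans ?_ (hle _ hC)
    refine aux_limsup _ _ _ hM ((2 * N0 * 4 ^ (1 / β)) ^ (β + δ)) δ hδ N0 ?_
    intro n hn
    exact aux_asym p q r hp hpq hr hconj μ x0 β δ Λ _ hβpos hδ hs hs1 hΛ rfl N0 hN01 hquant n hn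

end Aux

/-- **Corollary (main4beta).** Let `(E, d_E)` be a separable metric space, `p ≥ 1`
and `μ ∈ 𝒫_p(E)`. Let `0 ≤ β < 1/(2p)`, `0 < ε < (p²/2)(1/(2p) − β)` and
`q = 1/(1/(p+ε) − β)`. Then
`limsup n^β (𝔼[W_p(μ_n,μ)^p])^{1/p} ≤ (100p²/((1/(2p) − β)ε)) · limsup n^β e_{n,q}(μ)`. -/
theorem stmt_8 {E : Type*} [MetricSpace E] [TopologicalSpace.SeparableSpace E]
    [MeasurableSpace E] [BorelSpace E]
    (p : ℝ) (hp : 1 ≤ p)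
    (μ : Measure E) [IsProbabilityMeasure μ] (hμ : HasFiniteMoment p μ)
    (β ε q : ℝ) (hβ0 : 0 ≤ β) (hβ : β < 1 / (2 * p))
    (hε0 : 0 < ε) (hε : ε < (p ^ 2 / 2) * (1 / (2 * p) - β))
    (hqdef : q = 1 / (1 / (p + ε) - β)) :
    Filter.limsup (fun n : ℕ => ENNReal.ofReal ((n : ℝ) ^ β) * expWpPow p μ n)
        Filter.atTop
      ≤ ENNReal.ofReal (100 * p ^ 2 / ((1 / (2 * p) - β) * ε)) *
          Filter.limsup (fun n : ℕ => ENNReal.ofReal ((n : ℝ) ^ β) * quantErr q n μ)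
            Filter.atTop := by
  exact aux_final p hp μ β ε q hβ0 hβ hε0 hε hqdef
end

section
/- Let (E,d_E) be a separable metric space and let μ ∈ 𝒫_1(E). Then (m/n) · 𝔼[W_1(μ_m, μ)] ≤ 𝔼[W_1(μ_n, μ)] for all m, n ∈ ℕ with m ≤ n; and (1/2) · 𝔼[W_1(μ_m, μ)] ≤ 𝔼[W_1(μ_{2m}, μ)] ≤ 𝔼[W_1(μ_m, μ)] for all m ∈ ℕ, where μ_k denotes the empirical measure of μ with sample size k. -/
open MeasureTheory ENNReal Filter

/-- Lipschitz functions are integrable. -/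
lemma aux_integrable {E : Type*} [MetricSpace E] [TopologicalSpace.SeparableSpace E]
    [MeasurableSpace E] [BorelSpace E]
    (μ : Measure E) [IsProbabilityMeasure μ] (hμ : HasFiniteMoment 1 μ)
    (f : E → ℝ) (hf : LipschitzWith 1 f) : Integrable f μ := by
  have := UniformSpace.secondCountable_of_separable E
  obtain ⟨x₀, hx⟩ := hμ
  have h1 : Integrable (fun x => dist x x₀) μ := by
    refine ⟨by fun_prop, ?_⟩
    rw [hasFiniteIntegral_iff_enorm]
    refine lt_of_le_of_lt (lintegral_mono fun x => ?_) (lt_top_iff_ne_top.2 hx)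
    rw [ENNReal.rpow_one, edist_dist, Real.enorm_of_nonneg dist_nonneg]
  have h2 : Integrable (fun x => dist x x₀ + ‖f x₀‖) μ := h1.add (integrable_const _)
  refine h2.mono' hf.continuous.aestronglyMeasurable (Eventually.of_forall fun x => ?_)
  have h3 := hf.dist_le_mul x x₀
  rw [NNReal.coe_one, one_mul, dist_eq_norm] at h3
  have := norm_sub_norm_le (f x) (f x₀)
  linarith

lemma aux_ofReal_integral_le {Ω : Type*} [MeasurableSpace Ω] (γ : Measure Ω) (g : Ω → ℝ)
    (hg : Integrable g γ) : ENNReal.ofReal (∫ z, g z ∂γ) ≤ ∫⁻ z, ENNReal.ofReal (g z) ∂γ := by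
  rw [integral_eq_lintegral_pos_part_sub_lintegral_neg_part hg]
  refine le_trans (ENNReal.ofReal_le_ofReal (sub_le_self _ ENNReal.toReal_nonneg)) ?_
  exact ENNReal.ofReal_toReal_le

lemma aux_emp_integral {E : Type*} [MetricSpace E] [MeasurableSpace E] [BorelSpace E]
    (n : ℕ) (X : Fin n → E) (f : E → ℝ) (hf : Continuous f) [SecondCountableTopology E] :
    Integrable f (empiricalMeasure n X) ∧
    ∫ x, f x ∂(empiricalMeasure n X) = (n : ℝ)⁻¹ * ∑ i, f (X i) := by
  have hd : ∀ i, Integrable f (Measure.dirac (X i)) := fun i => by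
    refine integrable_dirac ?_
    simp
  rcases Nat.eq_zero_or_pos n with rfl | hn
  · simp [empiricalMeasure]
  have hn' : ((n : ℝ≥0∞)⁻¹) ≠ ∞ := by simp; omega
  constructor
  · unfold empiricalMeasure
    exact (integrable_finsetSum_measure.2 fun i _ => hd i).smul_measure hn'
  · unfold empiricalMeasure
    rw [integral_smul_measure, integral_finsetSum_measure fun i _ => hd i]
    simp [ENNReal.toReal_inv]

/-- Weak duality. -/
lemma aux_weak {E : Type*} [MetricSpace E] [TopologicalSpace.SeparableSpace E]
    [MeasurableSpace E] [BorelSpace E]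
    (μ : Measure E) [IsProbabilityMeasure μ] (hμ : HasFiniteMoment 1 μ)
    (n : ℕ) (X : Fin n → E) (f : E → ℝ) (hf : LipschitzWith 1 f) :
    ENNReal.ofReal (∫ x, f x ∂μ - (n : ℝ)⁻¹ * ∑ i, f (X i)) ≤ Wp 1 (empiricalMeasure n X) μ := by
  have := UniformSpace.secondCountable_of_separable E
  unfold Wp
  refine le_iInf₂ fun γ hγ => ?_
  obtain ⟨h1, h2⟩ := hγ
  simp only [ENNReal.rpow_one, div_one]
  have hi1 := (aux_emp_integral n X f hf.continuous).1
  have he1 := (aux_emp_integral n X f hf.continuous).2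
  have hi2 := aux_integrable μ hμ f hf
  rw [← he1]
  have e2 : ∫ x, f x ∂μ = ∫ z, f z.2 ∂γ := by
    rw [← h2, integral_map (by fun_prop) hf.continuous.aestronglyMeasurable]
  have e1 : ∫ x, f x ∂(empiricalMeasure n X) = ∫ z, f z.1 ∂γ := by
    rw [← h1, integral_map (by fun_prop) hf.continuous.aestronglyMeasurable]
  have i2 : Integrable (fun z : E × E => f z.2) γ := by
    rw [← h2] at hi2
    exact hi2.comp_measurable measurable_snd
  have i1 : Integrable (fun z : E × E => f z.1) γ := by
    rw [← h1] at hi1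
    exact hi1.comp_measurable measurable_fst
  rw [e1, e2, ← integral_sub i2 i1]
  refine (aux_ofReal_integral_le γ _ (i2.sub i1)).trans (lintegral_mono fun z => ?_)
  rw [edist_dist]
  refine ENNReal.ofReal_le_ofReal ?_
  have h3 := hf.dist_le_mul z.2 z.1
  rw [NNReal.coe_one, one_mul, Real.dist_eq, dist_comm] at h3
  exact (le_abs_self _).trans h3

/-- The cone of achievable (masses, cost). -/
def auxCone {E : Type*} [MetricSpace E] [MeasurableSpace E]
    (μ : Measure E) (n : ℕ) (X : Fin n → E) : Set ((Fin n → ℝ) × ℝ) :=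
  {z | 0 ≤ z.2 ∧ (∀ i, 0 ≤ z.1 i) ∧ ∃ (t : ℝ≥0∞) (ν : Fin n → Measure E),
    ∑ i, ν i = t • μ ∧ (∀ i, ν i Set.univ = ENNReal.ofReal (z.1 i)) ∧
    ∑ i, ∫⁻ y, edist (X i) y ∂(ν i) ≤ ENNReal.ofReal z.2}

lemma auxCone_convex {E : Type*} [MetricSpace E] [MeasurableSpace E]
    (μ : Measure E) (n : ℕ) (X : Fin n → E) : Convex ℝ (auxCone μ n X) := by
  rintro z ⟨hz, hz', t, ν, h1, h2, h3⟩ w ⟨hw, hw', s, ξ, k1, k2, k3⟩ a b ha hb _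
  refine ⟨?_, fun i => ?_, ENNReal.ofReal a * t + ENNReal.ofReal b * s,
    fun i => ENNReal.ofReal a • ν i + ENNReal.ofReal b • ξ i, ?_, fun i => ?_, ?_⟩
  · simp only [Prod.snd_add, Prod.smul_snd, smul_eq_mul]; positivity
  · have := hz' i
    have := hw' i
    simp only [Prod.fst_add, Prod.smul_fst, Pi.add_apply, Pi.smul_apply, smul_eq_mul]; positivity
  · rw [Finset.sum_add_distrib, ← Finset.smul_sum, ← Finset.smul_sum, h1, k1, add_smul, mul_smul,
      mul_smul]
  · have := hz' i
    have := hw' i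
    simp only [Measure.coe_add, Measure.coe_smul, Pi.add_apply, Pi.smul_apply, h2, k2,
      Prod.fst_add, Prod.smul_fst, smul_eq_mul]
    rw [ENNReal.ofReal_add (by positivity) (by positivity), ENNReal.ofReal_mul ha,
      ENNReal.ofReal_mul hb]
  · simp only [lintegral_add_measure, lintegral_smul_measure, smul_eq_mul, Prod.snd_add,
      Prod.smul_snd]
    rw [Finset.sum_add_distrib, ← Finset.mul_sum, ← Finset.mul_sum,
      ENNReal.ofReal_add (by positivity) (by positivity), ENNReal.ofReal_mul ha,
      ENNReal.ofReal_mul hb]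
    gcongr

/-- A point of the cone with uniform masses gives a coupling. -/
lemma auxCone_le {E : Type*} [MetricSpace E] [TopologicalSpace.SeparableSpace E]
    [MeasurableSpace E] [BorelSpace E]
    (μ : Measure E) [IsProbabilityMeasure μ] (n : ℕ) (hn : 1 ≤ n) (X : Fin n → E) (α : ℝ)
    (h : ((fun _ => (n : ℝ)⁻¹, α) : (Fin n → ℝ) × ℝ) ∈ auxCone μ n X) :
    Wp 1 (empiricalMeasure n X) μ ≤ ENNReal.ofReal α := by
  have := UniformSpace.secondCountable_of_separable E
  obtain ⟨_, _, t, ν, h1, h2, h3⟩ := h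
  simp only at h2 h3
  have hn0 : (n : ℝ≥0∞) ≠ 0 := by simp; omega
  have hinv : ENNReal.ofReal ((n : ℝ)⁻¹) = (n : ℝ≥0∞)⁻¹ := by
    rw [ENNReal.ofReal_inv_of_pos (by positivity), ENNReal.ofReal_natCast]
  have ht : t = 1 := by
    have := congrArg (fun m : Measure E => m Set.univ) h1
    simp only [Measure.coe_finsetSum, Finset.sum_apply, h2, hinv] at this
    simp [ENNReal.mul_inv_cancel hn0] at this
    exact this.symm
  subst ht
  rw [one_smul] at h1
  have hfin : ∀ i, IsFiniteMeasure (ν i) := fun i => ⟨by rw [h2]; exact ENNReal.ofReal_lt_top⟩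
  have hf1 : (∑ i, (Measure.dirac (X i)).prod (ν i)).map Prod.fst = empiricalMeasure n X := by
    rw [Measure.map_finset_sum' (by fun_prop)]
    simp only [Measure.map_fst_prod, h2, hinv]
    unfold empiricalMeasure
    rw [Finset.smul_sum]
  have hf2 : (∑ i, (Measure.dirac (X i)).prod (ν i)).map Prod.snd = μ := by
    rw [Measure.map_finset_sum' (by fun_prop)]
    simp only [Measure.map_snd_prod]
    simpa using h1
  refine le_trans (iInf₂_le (∑ i, (Measure.dirac (X i)).prod (ν i)) ⟨hf1, hf2⟩) ?_
  · simp only [ENNReal.rpow_one, div_one]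
    rw [lintegral_finsetSum_measure]
    refine le_trans (le_of_eq (Finset.sum_congr rfl fun i _ => ?_)) h3
    rw [Measure.dirac_prod, lintegral_map (by fun_prop) (by fun_prop)]

/-- Strong duality. -/
lemma aux_strong {E : Type*} [MetricSpace E] [TopologicalSpace.SeparableSpace E]
    [MeasurableSpace E] [BorelSpace E]
    (μ : Measure E) [IsProbabilityMeasure μ] (hμ : HasFiniteMoment 1 μ)
    (n : ℕ) (hn : 1 ≤ n) (X : Fin n → E) (α : ℝ)
    (h : ENNReal.ofReal α < Wp 1 (empiricalMeasure n X) μ) :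
    ∃ f : E → ℝ, LipschitzWith 1 f ∧ α ≤ ∫ x, f x ∂μ - (n : ℝ)⁻¹ * ∑ i, f (X i) := by
  have := UniformSpace.secondCountable_of_separable E
  have : Nonempty (Fin n) := ⟨⟨0, hn⟩⟩
  have hnpos : (0 : ℝ) < (n : ℝ)⁻¹ := by positivity
  have hq : ((fun _ => (n : ℝ)⁻¹, α) : (Fin n → ℝ) × ℝ) ∉ auxCone μ n X := fun hc =>
    absurd (auxCone_le μ n hn X α hc) (not_le.2 h)
  have hcL : ∀ x : E, LipschitzWith 1 (fun y => dist x y) := fun x => LipschitzWith.dist_right x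
  have hcI : ∀ x : E, Integrable (fun y => dist x y) μ := fun x => aux_integrable μ hμ _ (hcL x)
  have hce : ∀ (x : E) (ν : Measure E), Integrable (fun y => dist x y) ν →
      ∫⁻ y, edist x y ∂ν = ENNReal.ofReal (∫ y, dist x y ∂ν) := fun x ν hi => by
    rw [ofReal_integral_eq_lintegral_ofReal hi (Eventually.of_forall fun y => dist_nonneg)]
    simp only [edist_dist]
  set K : Fin n → ℝ := fun i => ∫ y, dist (X i) y ∂μ with hK
  have hK0 : ∀ i, 0 ≤ K i := fun i => integral_nonneg fun y => dist_nonneg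
  set O : Set ((Fin n → ℝ) × ℝ) := {z | (∀ i, 0 < z.1 i) ∧ ∑ i, z.1 i * K i < z.2} with hO
  have hOo : IsOpen O := by
    refine IsOpen.inter ?_ ?_
    · change IsOpen {z : (Fin n → ℝ) × ℝ | ∀ i, 0 < z.1 i}
      simp only [Set.ofPred_forall]
      exact isOpen_iInter_of_finite fun i => isOpen_lt (by fun_prop) (by fun_prop)
    · change IsOpen {z : (Fin n → ℝ) × ℝ | ∑ i, z.1 i * K i < z.2}
      exact isOpen_lt (by fun_prop) (by fun_prop)
  have hOC : O ⊆ auxCone μ n X := by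
    rintro z ⟨hz1, hz2⟩
    have h0 : ∀ i, 0 ≤ z.1 i * K i := fun i => mul_nonneg (hz1 i).le (hK0 i)
    have h0' : 0 ≤ ∑ i, z.1 i * K i := Finset.sum_nonneg fun i _ => h0 i
    refine ⟨h0'.trans hz2.le, fun i => (hz1 i).le, ∑ i, ENNReal.ofReal (z.1 i),
      fun i => ENNReal.ofReal (z.1 i) • μ, ?_, fun i => by simp, ?_⟩
    · rw [Finset.sum_smul]
    · refine le_trans (le_of_eq ?_) (ENNReal.ofReal_le_ofReal hz2.le)
      rw [ENNReal.ofReal_sum_of_nonneg fun i _ => h0 i]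
      refine Finset.sum_congr rfl fun i _ => ?_
      rw [lintegral_smul_measure, hce _ _ (hcI _), smul_eq_mul, ENNReal.ofReal_mul (hz1 i).le]
  have hOint : O ⊆ interior (auxCone μ n X) := interior_maximal hOC hOo
  have hconv := auxCone_convex μ n X
  obtain ⟨φ, hφ⟩ := geometric_hahn_banach_point_open hconv.interior isOpen_interior
    (fun hc => hq (interior_subset hc))
  set r₀ : ℝ := max α (∑ i, (n : ℝ)⁻¹ * K i) + 1 with hr₀
  have hr₀α : α < r₀ := by have := le_max_left α (∑ i, (n : ℝ)⁻¹ * K i); linarith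
  have hp : ((fun _ => (n : ℝ)⁻¹, r₀) : (Fin n → ℝ) × ℝ) ∈ O :=
    ⟨fun i => hnpos, by have := le_max_right α (∑ i, (n : ℝ)⁻¹ * K i); simp only; linarith⟩
  have hφ' : ∀ z ∈ auxCone μ n X, φ (fun _ => (n : ℝ)⁻¹, α) ≤ φ z := by
    intro z hz
    have hz' : z ∈ closure (interior (auxCone μ n X)) := by
      rw [hconv.closure_interior_eq_closure_of_nonempty_interior ⟨_, hOint hp⟩]
      exact subset_closure hz
    exact closure_minimal (t := {z | φ (fun _ => (n : ℝ)⁻¹, α) ≤ φ z})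
      (fun w hw => (hφ w hw).le) (isClosed_le (by fun_prop) (by fun_prop)) hz'
  set l : ℝ := φ (0, 1) with hl
  set v : Fin n → ℝ := fun i => φ (Pi.single i 1, 0) with hv
  have hrep : ∀ (a : Fin n → ℝ) (r : ℝ), φ (a, r) = ∑ i, a i * v i + r * l := by
    intro a r
    have : ((a, r) : (Fin n → ℝ) × ℝ) =
        ∑ i, a i • ((Pi.single i 1, 0) : (Fin n → ℝ) × ℝ) + r • ((0, 1) : (Fin n → ℝ) × ℝ) := by
      ext j
      · simp [Prod.fst_sum, Finset.sum_apply, Pi.single_apply]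
      · simp [Prod.snd_sum]
    rw [this, map_add, map_sum, map_smul]
    simp only [map_smul, smul_eq_mul, hv, hl]
  have hlpos : 0 < l := by
    have := hφ _ (hOint hp)
    rw [hrep, hrep] at this
    nlinarith
  set u : Fin n → ℝ := fun i => v i / l with hu
  have hvu : ∀ i, v i = u i * l := fun i => by simp only [hu]; field_simp
  set g : Fin n → E → ℝ := fun i y => dist (X i) y + u i with hg
  have hgL : ∀ i, LipschitzWith 1 (g i) := fun i => by
    simpa using (hcL (X i)).add (LipschitzWith.const (u i))
  set f : E → ℝ := fun y => Finset.univ.inf' Finset.univ_nonempty (fun i => g i y) with hf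
  have hfL : LipschitzWith 1 f := by
    refine LipschitzWith.of_le_add fun x y => ?_
    obtain ⟨i, _, hi⟩ := Finset.exists_mem_eq_inf' Finset.univ_nonempty (fun i => g i y)
    have h1 : f x ≤ g i x := Finset.inf'_le _ (Finset.mem_univ i)
    have h2 := (hgL i).dist_le_mul x y
    rw [NNReal.coe_one, one_mul, Real.dist_eq] at h2
    have h3 := le_abs_self (g i x - g i y)
    have h4 : f y = g i y := hi
    linarith
  set A : Fin n → Set E := fun i => {y | f y = g i y ∧ ∀ j, j < i → f y ≠ g j y} with hA
  have hfm : Measurable f := hfL.continuous.measurable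
  have hgm : ∀ i, Measurable (g i) := fun i => (hgL i).continuous.measurable
  have hAm : ∀ i, MeasurableSet (A i) := fun i => by
    refine MeasurableSet.inter (measurableSet_eq_fun hfm (hgm i)) ?_
    change MeasurableSet {y | ∀ j, j < i → f y ≠ g j y}
    simp only [Set.ofPred_forall]
    exact MeasurableSet.iInter fun j => MeasurableSet.iInter fun _ =>
      (measurableSet_eq_fun hfm (hgm j)).compl
  have hAd : Pairwise (Function.onFun Disjoint A) := by
    intro i j hij
    refine Set.disjoint_left.2 fun y hi hj => ?_
    rcases lt_or_gt_of_ne hij with h | h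
    · exact hj.2 i h hi.1
    · exact hi.2 j h hj.1
  have hAu : ⋃ i, A i = Set.univ := by
    refine Set.eq_univ_of_forall fun y => ?_
    obtain ⟨i, _, hi⟩ := Finset.exists_mem_eq_inf' Finset.univ_nonempty (fun i => g i y)
    have hne : (Finset.univ.filter fun i => f y = g i y).Nonempty := ⟨i, by simpa using hi⟩
    refine Set.mem_iUnion.2 ⟨(Finset.univ.filter fun i => f y = g i y).min' hne, ?_, ?_⟩
    · have := Finset.min'_mem _ hne
      simpa using this
    · intro j hj hc
      exact absurd (Finset.min'_le _ j (by simpa using hc)) (not_le.2 hj)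
  have hsum : ∑ i, μ.restrict (A i) = μ := by
    rw [← Measure.sum_fintype, ← Measure.restrict_iUnion hAd hAm, hAu, Measure.restrict_univ]
  set r : ℝ := ∑ i, ∫ y in A i, dist (X i) y ∂μ with hr
  have hr0 : ∀ i, 0 ≤ ∫ y in A i, dist (X i) y ∂μ := fun i => integral_nonneg fun y => dist_nonneg
  have hz : ((fun i => μ.real (A i), r) : (Fin n → ℝ) × ℝ) ∈ auxCone μ n X := by
    have hr00 : 0 ≤ r := Finset.sum_nonneg fun i _ => hr0 i
    refine ⟨hr00, fun i => measureReal_nonneg, 1,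
      fun i => μ.restrict (A i), by rw [hsum, one_smul], fun i => ?_, le_of_eq ?_⟩
    · simp
    · rw [hr, ENNReal.ofReal_sum_of_nonneg fun i _ => hr0 i]
      exact Finset.sum_congr rfl fun i _ => hce _ _ (hcI _).integrableOn
  have hmain := hφ' _ hz
  rw [hrep, hrep] at hmain
  simp only [hvu] at hmain
  have hmain' : (∑ i, (n : ℝ)⁻¹ * u i) + α ≤ (∑ i, μ.real (A i) * u i) + r := by
    simp only [← mul_assoc, ← Finset.sum_mul, ← add_mul] at hmain
    exact le_of_mul_le_mul_right hmain hlpos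
  have hfI := aux_integrable μ hμ f hfL
  have hint : ∫ y, f y ∂μ = (∑ i, μ.real (A i) * u i) + r := by
    conv_lhs => rw [← hsum]
    rw [integral_finsetSum_measure fun i _ => hfI.integrableOn, hr, ← Finset.sum_add_distrib]
    refine Finset.sum_congr rfl fun i _ => ?_
    rw [setIntegral_congr_fun (hAm i) (fun y hy => hy.1 : Set.EqOn f (g i) (A i))]
    simp only [hg]
    rw [integral_add (hcI _).integrableOn (integrable_const _), setIntegral_const, smul_eq_mul,
      add_comm]
  refine ⟨f, hfL, ?_⟩
  have hfX : ∑ i, f (X i) ≤ ∑ i, u i := Finset.sum_le_sum fun i _ => by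
    refine (Finset.inf'_le _ (Finset.mem_univ i)).trans ?_
    simp [hg]
  have := mul_le_mul_of_nonneg_left hfX hnpos.le
  rw [← Finset.mul_sum] at hmain'
  linarith

/-- Kantorovich duality for empirical measures. -/
lemma aux_duality {E : Type*} [MetricSpace E] [TopologicalSpace.SeparableSpace E]
    [MeasurableSpace E] [BorelSpace E]
    (μ : Measure E) [IsProbabilityMeasure μ] (hμ : HasFiniteMoment 1 μ)
    (n : ℕ) (hn : 1 ≤ n) (X : Fin n → E) :
    Wp 1 (empiricalMeasure n X) μ = ⨆ f : {f : E → ℝ // LipschitzWith 1 f},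
      ENNReal.ofReal (∫ x, f.1 x ∂μ - (n : ℝ)⁻¹ * ∑ i, f.1 (X i)) := by
  refine le_antisymm (le_of_forall_lt fun c hc => ?_)
    (iSup_le fun f => aux_weak μ hμ n X f.1 f.2)
  obtain ⟨d, hcd, hd⟩ := exists_between hc
  have hd' : d ≠ ∞ := (lt_of_lt_of_le hd le_top).ne
  obtain ⟨f, hf, hle⟩ := aux_strong μ hμ n hn X d.toReal (by rwa [ENNReal.ofReal_toReal hd'])
  refine lt_of_lt_of_le hcd (le_trans ?_ (le_iSup _ (⟨f, hf⟩ : {f : E → ℝ // LipschitzWith 1 f})))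
  rw [← ENNReal.ofReal_toReal hd']
  exact ENNReal.ofReal_le_ofReal hle

lemma aux_measurable {E : Type*} [MetricSpace E] [TopologicalSpace.SeparableSpace E]
    [MeasurableSpace E] [BorelSpace E]
    (μ : Measure E) [IsProbabilityMeasure μ] (hμ : HasFiniteMoment 1 μ)
    (n : ℕ) (hn : 1 ≤ n) :
    Measurable fun X : Fin n → E => Wp 1 (empiricalMeasure n X) μ := by
  have := UniformSpace.secondCountable_of_separable E
  simp only [aux_duality μ hμ n hn]
  refine LowerSemicontinuous.measurable (lowerSemicontinuous_iSup fun f => ?_)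
  have := f.2.continuous
  refine Continuous.lowerSemicontinuous (ENNReal.continuous_ofReal.comp ?_)
  fun_prop

lemma aux_append_measurePreserving {E : Type*} [MeasurableSpace E]
    (μ : Measure E) [IsProbabilityMeasure μ] (m k : ℕ) :
    MeasurePreserving (fun z : (Fin m → E) × (Fin k → E) => Fin.append z.1 z.2)
      ((sampleMeasure μ m).prod (sampleMeasure μ k)) (sampleMeasure μ (m + k)) := by
  unfold sampleMeasure
  have h1 := measurePreserving_sumPiEquivProdPi_symm (ι := Fin m) (ι' := Fin k)
    (X := fun _ => E) (fun _ => μ)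
  have h2 := measurePreserving_piCongrLeft (fun _ : Fin (m + k) => μ) (finSumFinEquiv (m := m) (n := k))
  convert h2.comp h1 using 1
  funext z i
  obtain ⟨j, rfl⟩ := (finSumFinEquiv (m := m) (n := k)).surjective i
  simp only [Function.comp, MeasurableEquiv.piCongrLeft_apply_apply]
  rcases j with j | j
  · simp; rfl
  · simp; rfl

lemma aux_expWp_add {E : Type*} [MetricSpace E] [TopologicalSpace.SeparableSpace E]
    [MeasurableSpace E] [BorelSpace E]
    (μ : Measure E) [IsProbabilityMeasure μ] (hμ : HasFiniteMoment 1 μ)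
    (m k : ℕ) (hm : 1 ≤ m) :
    expWp 1 μ (m + k) = ∫⁻ X, ∫⁻ Y, Wp 1 (empiricalMeasure (m + k) (Fin.append X Y)) μ
      ∂(sampleMeasure μ k) ∂(sampleMeasure μ m) := by
  have hM := aux_measurable μ hμ (m + k) (by omega)
  have hP := aux_append_measurePreserving μ m k
  have : SFinite (sampleMeasure μ k) := by unfold sampleMeasure; infer_instance
  unfold expWp
  rw [← hP.lintegral_comp hM, lintegral_prod]
  exact (hM.comp hP.measurable).aemeasurable

lemma aux_lower {E : Type*} [MetricSpace E] [TopologicalSpace.SeparableSpace E]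
    [MeasurableSpace E] [BorelSpace E]
    (μ : Measure E) [IsProbabilityMeasure μ] (hμ : HasFiniteMoment 1 μ)
    (m k : ℕ) (hm : 1 ≤ m) :
    ((m : ℝ≥0∞) / ((m + k : ℕ) : ℝ≥0∞)) * expWp 1 μ m ≤ expWp 1 μ (m + k) := by
  have : IsProbabilityMeasure (sampleMeasure μ k) := by unfold sampleMeasure; infer_instance
  have hm' : (0 : ℝ) < m := by exact_mod_cast hm
  rw [aux_expWp_add μ hμ m k hm]
  conv_lhs => unfold expWp
  rw [← lintegral_const_mul _ (aux_measurable μ hμ m hm)]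
  refine lintegral_mono fun X => ?_
  simp only
  rw [aux_duality μ hμ m hm X, ENNReal.mul_iSup]
  refine iSup_le fun ⟨f, hf⟩ => ?_
  simp only
  have hfI := aux_integrable μ hμ f hf
  set G : (Fin k → E) → ℝ := fun Y => ∫ x, f x ∂μ -
    ((m + k : ℕ) : ℝ)⁻¹ * ∑ i, f (Fin.append X Y i) with hG
  have hG' : G = fun Y => (∫ x, f x ∂μ - ((m + k : ℕ) : ℝ)⁻¹ * ∑ i, f (X i)) -
      ((m + k : ℕ) : ℝ)⁻¹ * ∑ j, f (Y j) := by
    funext Y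
    simp only [hG, Fin.sum_univ_add, Fin.append_left, Fin.append_right]
    ring
  have hI : ∀ j : Fin k, Integrable (fun Y : Fin k → E => f (Y j)) (sampleMeasure μ k) := fun j =>
    integrable_comp_eval (μ := fun _ : Fin k => μ) hfI
  have hE : ∀ j : Fin k, ∫ Y : Fin k → E, f (Y j) ∂(sampleMeasure μ k) = ∫ x, f x ∂μ := fun j =>
    integral_comp_eval (μ := fun _ : Fin k => μ) hfI.aestronglyMeasurable
  have hS : Integrable (fun Y : Fin k → E => ((m + k : ℕ) : ℝ)⁻¹ * ∑ j, f (Y j))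
      (sampleMeasure μ k) := (integrable_finsetSum _ fun j _ => hI j).const_mul _
  have hGI : Integrable G (sampleMeasure μ k) := by
    rw [hG']
    exact (integrable_const _).sub hS
  have hGE : ∫ Y, G Y ∂(sampleMeasure μ k) =
      (m : ℝ) / ((m + k : ℕ) : ℝ) * (∫ x, f x ∂μ - (m : ℝ)⁻¹ * ∑ i, f (X i)) := by
    rw [hG', integral_sub (integrable_const _) hS, integral_const_mul,
      integral_finsetSum _ fun j _ => hI j]
    simp only [hE]
    have : (m : ℝ) + k ≠ 0 := by positivity
    simp
    field_simp
    ring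
  have hc : (m : ℝ≥0∞) / ((m + k : ℕ) : ℝ≥0∞) = ENNReal.ofReal ((m : ℝ) / ((m + k : ℕ) : ℝ)) := by
    rw [ENNReal.ofReal_div_of_pos (by positivity), ENNReal.ofReal_natCast, ENNReal.ofReal_natCast]
  rw [hc, ← ENNReal.ofReal_mul (by positivity), ← hGE]
  refine (aux_ofReal_integral_le _ G hGI).trans (lintegral_mono fun Y => ?_)
  exact aux_weak μ hμ (m + k) (Fin.append X Y) f hf

lemma aux_upper {E : Type*} [MetricSpace E] [TopologicalSpace.SeparableSpace E]
    [MeasurableSpace E] [BorelSpace E]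
    (μ : Measure E) [IsProbabilityMeasure μ] (hμ : HasFiniteMoment 1 μ)
    (m : ℕ) (hm : 1 ≤ m) :
    expWp 1 μ (m + m) ≤ expWp 1 μ m := by
  have : IsProbabilityMeasure (sampleMeasure μ m) := by unfold sampleMeasure; infer_instance
  have hm' : (0 : ℝ) < m := by exact_mod_cast hm
  have hM := aux_measurable μ hμ m hm
  rw [aux_expWp_add μ hμ m m hm]
  have key : ∀ X Y : Fin m → E, Wp 1 (empiricalMeasure (m + m) (Fin.append X Y)) μ ≤
      2⁻¹ * Wp 1 (empiricalMeasure m X) μ + 2⁻¹ * Wp 1 (empiricalMeasure m Y) μ := by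
    intro X Y
    rw [aux_duality μ hμ (m + m) (by omega)]
    refine iSup_le fun ⟨f, hf⟩ => ?_
    simp only
    have e : ∫ x, f x ∂μ - ((m + m : ℕ) : ℝ)⁻¹ * ∑ i, f (Fin.append X Y i) =
        2⁻¹ * (∫ x, f x ∂μ - (m : ℝ)⁻¹ * ∑ i, f (X i)) +
        2⁻¹ * (∫ x, f x ∂μ - (m : ℝ)⁻¹ * ∑ i, f (Y i)) := by
      simp only [Fin.sum_univ_add, Fin.append_left, Fin.append_right]
      push_cast
      field_simp
      ring
    have h2 : (2⁻¹ : ℝ≥0∞) = ENNReal.ofReal 2⁻¹ := by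
      rw [ENNReal.ofReal_inv_of_pos (by norm_num)]; simp
    rw [e, h2]
    refine ENNReal.ofReal_add_le.trans ?_
    rw [ENNReal.ofReal_mul (by norm_num), ENNReal.ofReal_mul (by norm_num)]
    gcongr
    · exact aux_weak μ hμ m X f hf
    · exact aux_weak μ hμ m Y f hf
  refine (lintegral_mono fun X => lintegral_mono fun Y => key X Y).trans (le_of_eq ?_)
  have : ∀ X : Fin m → E, ∫⁻ Y, (2⁻¹ * Wp 1 (empiricalMeasure m X) μ +
      2⁻¹ * Wp 1 (empiricalMeasure m Y) μ) ∂(sampleMeasure μ m) =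
      2⁻¹ * Wp 1 (empiricalMeasure m X) μ + 2⁻¹ * expWp 1 μ m := fun X => by
    rw [lintegral_add_left measurable_const, lintegral_const, measure_univ, mul_one,
      lintegral_const_mul _ hM]
    rfl
  simp only [this]
  rw [lintegral_add_right _ measurable_const, lintegral_const, measure_univ, mul_one,
    lintegral_const_mul _ hM]
  change 2⁻¹ * expWp 1 μ m + 2⁻¹ * expWp 1 μ m = _
  rw [← add_mul, ENNReal.inv_two_add_inv_two, one_mul]

/-- **Lemma (basicstability).** Let `(E, d_E)` be a separable metric space and
`μ ∈ 𝒫₁(E)`. Then `(m/n) 𝔼[W₁(μ_m, μ)] ≤ 𝔼[W₁(μ_n, μ)]` for all `m ≤ n` in `ℕ`,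
and `(1/2) 𝔼[W₁(μ_m, μ)] ≤ 𝔼[W₁(μ_{2m}, μ)] ≤ 𝔼[W₁(μ_m, μ)]` for all `m ∈ ℕ`. -/
theorem stmt_9 {E : Type*} [MetricSpace E] [TopologicalSpace.SeparableSpace E]
    [MeasurableSpace E] [BorelSpace E]
    (μ : Measure E) [IsProbabilityMeasure μ] (hμ : HasFiniteMoment 1 μ) :
    (∀ m n : ℕ, 1 ≤ m → m ≤ n →
      ((m : ℝ≥0∞) / (n : ℝ≥0∞)) * expWp 1 μ m ≤ expWp 1 μ n) ∧
    (∀ m : ℕ, 1 ≤ m →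
      2⁻¹ * expWp 1 μ m ≤ expWp 1 μ (2 * m) ∧ expWp 1 μ (2 * m) ≤ expWp 1 μ m) := by
  have h1 : ∀ m n : ℕ, 1 ≤ m → m ≤ n →
      ((m : ℝ≥0∞) / (n : ℝ≥0∞)) * expWp 1 μ m ≤ expWp 1 μ n := by
    intro m n hm hmn
    obtain ⟨k, rfl⟩ := Nat.exists_eq_add_of_le hmn
    exact aux_lower μ hμ m k hm
  refine ⟨h1, fun m hm => ⟨?_, ?_⟩⟩
  · have h := h1 m (2 * m) hm (by omega)
    have hm0 : (m : ℝ≥0∞) ≠ 0 := by simp; omega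
    have e : (m : ℝ≥0∞) / ((2 * m : ℕ) : ℝ≥0∞) = 2⁻¹ := by
      push_cast
      rw [div_eq_mul_inv, ENNReal.mul_inv (by simp) (by simp), mul_left_comm,
        ENNReal.mul_inv_cancel hm0 (by simp), mul_one]
    rwa [e] at h
  · rw [two_mul]
    exact aux_upper μ hμ m hm
end
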